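/- arXiv:2204.08830 — 9 statements merged into one kernel-verified Lean document; each statement's English description precedes it below -/
import Mathlib

section
/- Let F be a field and E/F a field extension of finite degree n. Let A be a finite-dimensional central simple algebra over E and B a finite-dimensional central simple algebra over F. If there exists an E-algebra isomorphism B ⊗_F E ≅ M_n(A) (the algebra of n×n matrices over A), then there exists a (unital) F-algebra homomorphism from A to B. -/
/-!
Put `V = Aⁿ` (column vectors). It is a left module over `Mₙ(A)`, hence over `B` through
`B → E ⊗ B ≃ Mₙ(A)`, and right multiplication by `A` commutes with this `B`-action. Counting
dimensions over `F`, with `d = dim_E A`,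
`dim_F V = n * dim_F A = n² d = dim_E Mₙ(A) = dim_E (E ⊗ B) = dim_F B`.
All modules over the simple artinian ring `B` are direct sums of copies of one simple module, so a
finite module is determined by its `F`-dimension and `V ≃ B` as left `B`-modules
(`nonempty_linearEquiv_self_of_finrank_eq`). The right action of `A` on `V` thus becomes an action
on `B` by left-`B`-linear endomorphisms, that is, by right multiplications by elements of `B`
(`algHomOfLinearEquivSelf`).
-/

open scoped TensorProduct

/-- A module over a finite-dimensional simple algebra `B` whose dimension equals that of `B` is
isomorphic to the regular module: both are powers of the same simple module. -/
theorem nonempty_linearEquiv_self_of_finrank_eq (F B V : Type*) [Field F] [Ring B] [Algebra F B]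
    [FiniteDimensional F B] [IsSimpleRing B] [AddCommGroup V] [Module F V] [Module B V]
    [IsScalarTower F B V] [FiniteDimensional F V]
    (h : Module.finrank F V = Module.finrank F B) : Nonempty (V ≃ₗ[B] B) := by
  have : IsArtinianRing B := IsArtinianRing.of_finite F B
  have : Module.Finite B V := Module.Finite.of_restrictScalars_finite F B V
  obtain ⟨k, hk, S, hS, ⟨e⟩⟩ := (IsSimpleRing.isIsotypic B B).linearEquiv_fun
  have hV : IsIsotypicOfType B V S := fun m _ ↦ by
    obtain ⟨I, ⟨f⟩⟩ := IsSemisimpleRing.exists_linearEquiv_ideal_of_isSimpleModule B m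
    have := IsSimpleModule.congr f.symm
    exact ⟨f.trans (IsSimpleRing.isIsotypic B B S I).some⟩
  obtain ⟨l, ⟨f⟩⟩ := hV.linearEquiv_fun
  have : Nontrivial S := IsSimpleModule.nontrivial B S
  have : FiniteDimensional F S :=
    Module.Finite.of_injective (S.subtype.restrictScalars F) S.injective_subtype
  have h1 := (e.restrictScalars F).finrank_eq
  have h2 := (f.restrictScalars F).finrank_eq
  rw [Module.finrank_pi_fintype, Finset.sum_const, Finset.card_univ, Fintype.card_fin,
    smul_eq_mul] at h1 h2
  have hkl : l = k :=
    Nat.eq_of_mul_eq_mul_right (Module.finrank_pos (R := F) (M := S)) (by rw [← h1, ← h2, h])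
  subst hkl
  exact ⟨f.trans e.symm⟩

/-- A right action of `A` on `V` commuting with the left `B`-action turns, along an isomorphism
`e : V ≃ B` of left `B`-modules, into the homomorphism `A → B`, `a ↦ e (e⁻¹(1) · a)`. -/
def algHomOfLinearEquivSelf {F A B V : Type*} [CommSemiring F] [Semiring A] [Algebra F A]
    [Semiring B] [Algebra F B] [AddCommMonoid V] [Module F V] [Module B V] [IsScalarTower F B V]
    [Module Aᵐᵒᵖ V] [IsScalarTower F Aᵐᵒᵖ V] [SMulCommClass Aᵐᵒᵖ B V]
    (e : V ≃ₗ[B] B) : A →ₐ[F] B :=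
  AlgHom.ofLinearMap
    { toFun a := e (MulOpposite.op a • e.symm 1)
      map_add' a b := by rw [MulOpposite.op_add, add_smul, map_add]
      map_smul' r a := by
        rw [MulOpposite.op_smul, smul_assoc, RingHom.id_apply]
        exact (e.restrictScalars F).map_smul r _ }
    (by simp)
    (fun a b ↦ by
      -- `e⁻¹(1) · a = f(a) • e⁻¹(1)`, where `f(a) = e (e⁻¹(1) · a)`
      have key : MulOpposite.op a • e.symm 1 = e (MulOpposite.op a • e.symm 1) • e.symm 1 := by
        rw [← map_smul e.symm, smul_eq_mul, mul_one, e.symm_apply_apply]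
      change e (MulOpposite.op (a * b) • e.symm 1) =
        e (MulOpposite.op a • e.symm 1) * e (MulOpposite.op b • e.symm 1)
      rw [MulOpposite.op_mul, mul_smul]
      conv_lhs => rw [key]
      rw [smul_comm, map_smul, smul_eq_mul])

/-- Let `F` be a field and `E/F` a field extension of finite degree `n`.
Let `A` be a finite-dimensional central simple algebra over `E` and `B` a
finite-dimensional central simple algebra over `F`.  If there is an `E`-algebra
isomorphism `B ⊗_F E ≅ Mₙ(A)` (with the `E`-structure on the tensor factor `E`),
then there is a unital `F`-algebra homomorphism `A → B`. -/
theorem stmt_0 (F E : Type*) [Field F] [Field E] [Algebra F E]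
    [FiniteDimensional F E] (n : ℕ) (hn : Module.finrank F E = n)
    (A : Type*) [Ring A] [Algebra E A] [Algebra F A] [IsScalarTower F E A]
    [FiniteDimensional E A] [IsSimpleRing A] (hA : Subalgebra.center E A = ⊥)
    (B : Type*) [Ring B] [Algebra F B] [FiniteDimensional F B] [IsSimpleRing B]
    (hB : Subalgebra.center F B = ⊥)
    (iso : (E ⊗[F] B) ≃ₐ[E] Matrix (Fin n) (Fin n) A) :
    Nonempty (A →ₐ[F] B) := by
  let j : B →ₐ[F] Matrix (Fin n) (Fin n) A :=
    (iso.restrictScalars F).toAlgHom.comp Algebra.TensorProduct.includeRight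
  let : Module B (Fin n → A) := Module.compHom _ j.toRingHom
  have smul_def (b : B) (v : Fin n → A) : b • v = j b • v := rfl
  have : IsScalarTower F B (Fin n → A) := ⟨fun r b v ↦ by
    rw [smul_def, smul_def, map_smul, smul_assoc]⟩
  have : SMulCommClass Aᵐᵒᵖ B (Fin n → A) := ⟨fun a b v ↦ by
    rw [smul_def, smul_def, smul_comm]⟩
  have : FiniteDimensional F A := FiniteDimensional.trans F E A
  have hdim : Module.finrank F (Fin n → A) = Module.finrank F B := by
    have h1 := iso.toLinearEquiv.finrank_eq
    rw [Module.finrank_baseChange, Module.finrank_matrix, Fintype.card_fin] at h1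
    rw [h1, Module.finrank_pi_fintype, Finset.sum_const, Finset.card_univ, Fintype.card_fin,
      smul_eq_mul, ← Module.finrank_mul_finrank F E A, hn, mul_assoc]
  obtain ⟨e⟩ := nonempty_linearEquiv_self_of_finrank_eq F B (Fin n → A) hdim
  exact ⟨algHomOfLinearEquivSelf e⟩
end

section
/- Let F be a field of characteristic zero, E/F a quadratic field extension, A a finite-dimensional central simple algebra over E with dim_E A = n², and B a finite-dimensional central simple algebra over F with dim_F B = 4n². Let φ : A → B be an F-algebra homomorphism (A viewed as an F-algebra via F ⊆ E). Then the centralizer in B of the image φ(algebraMap E A (E)) of E equals exactly the image φ(A); that is, an element b ∈ B commutes with φ(e·1_A) for all e ∈ E if and only if b ∈ φ(A). -/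
/-!
Write `E = F(θ)` with `θ² = d ∈ F` and let `t = φ(θ)`. The centralizer `C` of `t` in `B` is the
image of the projection `b ↦ (b + t b t⁻¹) / 2`, so `dim C` is the trace of this projection, which
is `dim B / 2 = 2n²` as soon as `b ↦ t b t` has trace zero. As `φ` is injective, `φ(A)` has
dimension `2n²` as well, and `φ(A) ⊆ C` because `E` is central in `A`; hence `C = φ(A)`.

That `b ↦ t b t` is traceless rests on two facts. Left multiplication by `t` is traceless, being
scalar multiplication by `θ` on an `E`-vector space (`trace_lsmul_eq_zero`). And in a central simple
algebra the trace of `b ↦ t b s` is proportional to the trace of left multiplication by `t`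
(`trace_mulLeft_comp_mulRight_eq_zero`), because every linear endomorphism of `B` is a sum of
two-sided multiplications (`exists_eq_sum_mul_mul`).
-/

open Module

/-- Artin–Whaples: a nontrivial relation of minimal length would, the coefficients in front of a
fixed `b j` forming a two-sided ideal, have a coefficient `1`; the others are then central, which
contradicts the linear independence of `b`. -/
lemma coeff_eq_zero_of_sum_mul_mul_eq_zero {F B ι : Type*} [Field F] [Ring B] [Algebra F B]
    [IsSimpleRing B] (hB : Subalgebra.center F B = ⊥) {b : ι → B} (hb : LinearIndependent F b)
    (s : Finset ι) :
    ∀ a : ι → B, (∀ x : B, ∑ i ∈ s, a i * x * b i = 0) → ∀ i ∈ s, a i = 0 := by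
  classical
  induction s using Finset.induction_on with
  | empty => simp
  | insert j s hj ih =>
    intro a ha
    simp only [Finset.sum_insert hj] at ha
    let I : TwoSidedIdeal B := TwoSidedIdeal.mk'
      {c | ∃ a' : ι → B, ∀ x : B, c * x * b j + ∑ i ∈ s, a' i * x * b i = 0}
      ⟨0, by simp⟩
      (by
        rintro c c' ⟨u, hu⟩ ⟨v, hv⟩
        refine ⟨u + v, fun x => ?_⟩
        have := congrArg₂ (· + ·) (hu x) (hv x)
        simp only [Pi.add_apply, add_mul, Finset.sum_add_distrib]
        simp only [add_zero] at this
        rw [← this]; abel)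
      (by
        rintro c ⟨u, hu⟩
        refine ⟨-u, fun x => ?_⟩
        have := congrArg Neg.neg (hu x)
        simp only [Pi.neg_apply, neg_mul, Finset.sum_neg_distrib]
        rw [neg_zero] at this
        rw [← this]; abel)
      (by
        rintro r c ⟨u, hu⟩
        refine ⟨fun i => r * u i, fun x => ?_⟩
        have := congrArg (r * ·) (hu x)
        simpa [mul_add, Finset.mul_sum, mul_assoc] using this)
      (by
        rintro c r ⟨u, hu⟩
        refine ⟨fun i => u i * r, fun x => ?_⟩
        simpa [mul_assoc] using hu (r * x))
    have hmem : ∀ c, c ∈ I ↔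
        ∃ a' : ι → B, ∀ x : B, c * x * b j + ∑ i ∈ s, a' i * x * b i = 0 := by
      intro c
      simp [I, TwoSidedIdeal.mem_mk']
    rcases eq_bot_or_eq_top I with hI | hI
    · have haj : a j = 0 := by
        have : a j ∈ I := (hmem _).2 ⟨a, ha⟩
        rwa [hI, TwoSidedIdeal.mem_bot] at this
      intro i hi
      rcases Finset.mem_insert.1 hi with rfl | hi
      · exact haj
      · exact ih a (by simpa [haj] using ha) i hi
    · exfalso
      obtain ⟨u, hu⟩ := (hmem 1).1 (by rw [hI]; trivial)
      simp only [one_mul] at hu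
      have hcent : ∀ i ∈ s, ∃ c : F, algebraMap F B c = u i := by
        intro i hi
        have hc : u i ∈ Subalgebra.center F B := by
          rw [Subalgebra.mem_center_iff]
          intro y
          have := ih (fun i => y * u i - u i * y) (fun x => by
            have h1 := congrArg (y * ·) (hu x)
            have h2 := hu (y * x)
            simp only [mul_add, Finset.mul_sum, mul_zero, ← mul_assoc] at h1 h2
            simp only [sub_mul, Finset.sum_sub_distrib]
            rw [← sub_eq_zero.2 (h1.trans h2.symm)]
            abel) i hi
          exact sub_eq_zero.1 this
        rw [hB] at hc
        exact Algebra.mem_bot.1 hc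
      choose! c hc using hcent
      have h1 := hu 1
      have h2 : ∑ i ∈ insert j s, (if i = j then 1 else c i) • b i = 0 := by
        rw [Finset.sum_insert hj, if_pos rfl, one_smul, ← h1]
        congr 1
        · simp
        · refine Finset.sum_congr rfl fun i hi => ?_
          rw [if_neg (by rintro rfl; exact hj hi), mul_one, ← hc i hi, Algebra.smul_def]
      have := linearIndependent_iff'.1 hb _ _ h2 j (Finset.mem_insert_self _ _)
      simp at this

/-- A central simple algebra is Azumaya: by a dimension count, every endomorphism of the vector
space `B` is a sum of maps `x ↦ a * x * b`. -/
lemma exists_eq_sum_mul_mul {F B : Type*} [Field F] [Ring B] [Algebra F B]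
    [FiniteDimensional F B] [IsSimpleRing B] (hB : Subalgebra.center F B = ⊥)
    (u : B →ₗ[F] B) :
    ∃ a b : Fin (finrank F B) → B, ∀ x, u x = ∑ i, a i * x * b i := by
  let b := finBasis F B
  let T : (Fin (finrank F B) → B) →ₗ[F] (B →ₗ[F] B) :=
    ∑ i, ((LinearMap.mulRight F (b i)).compRight F ∘ₗ LinearMap.mul F B) ∘ₗ LinearMap.proj i
  have hT : ∀ a x, T a x = ∑ i, a i * x * b i := by
    intro a x
    simp [T, LinearMap.sum_apply]
  have hinj : Function.Injective T := by
    rw [← LinearMap.ker_eq_bot, LinearMap.ker_eq_bot']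
    intro a ha
    funext i
    refine coeff_eq_zero_of_sum_mul_mul_eq_zero hB b.linearIndependent Finset.univ a
      (fun x => ?_) i (Finset.mem_univ i)
    rw [← hT, ha, LinearMap.zero_apply]
  have hsurj : Function.Surjective T := by
    rw [← LinearMap.injective_iff_surjective_of_finrank_eq_finrank]
    · exact hinj
    · rw [finrank_pi_fintype, finrank_linearMap]
      simp
  obtain ⟨a, ha⟩ := hsurj u
  exact ⟨a, b, fun x => by rw [← hT, ha]⟩

/-- In a central simple algebra, the trace of `x ↦ t * x * s` is, up to the factor `dim B`, the
product of the traces of left multiplication by `t` and of right multiplication by `s`; in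
particular it vanishes if left multiplication by `t` has trace zero.

With `h a = tr (mulLeft a)`, write the endomorphism `x ↦ h x • 1` as `x ↦ ∑ aᵢ x bᵢ`, and put
`z = ∑ bᵢ aᵢ`. Any functional `g` with `g (x y) = g (y x)` satisfies `g (z x) = h x * g 1`. For
`g = h` the nondegeneracy of the form `h (x y)` gives `z = dim B`, so that `dim B * g x = h x * g 1`
for all such `g`, in particular for `g a = tr (x ↦ a x s)`. -/
lemma trace_mulLeft_comp_mulRight_eq_zero {F B : Type*} [Field F] [CharZero F] [Ring B]
    [Algebra F B] [FiniteDimensional F B] [IsSimpleRing B] (hB : Subalgebra.center F B = ⊥)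
    (t s : B) (ht : LinearMap.trace F B (LinearMap.mulLeft F t) = 0) :
    LinearMap.trace F B (LinearMap.mulLeft F t ∘ₗ LinearMap.mulRight F s) = 0 := by
  let G : B → B →ₗ[F] F := fun s =>
    LinearMap.trace F B ∘ₗ (LinearMap.mulRight F s).lcomp F B ∘ₗ LinearMap.mul F B
  have hG : ∀ s a, G s a = LinearMap.trace F B (LinearMap.mulLeft F a ∘ₗ LinearMap.mulRight F s) :=
    fun s a => rfl
  have hGcomm : ∀ s x y, G s (x * y) = G s (y * x) := by
    intro s x y
    have hc : ∀ x y : B, LinearMap.mulLeft F (x * y) ∘ₗ LinearMap.mulRight F s =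
        LinearMap.mulLeft F x * (LinearMap.mulLeft F y ∘ₗ LinearMap.mulRight F s) := by
      intro x y; ext v; simp
    have hc' : LinearMap.mulLeft F (y * x) ∘ₗ LinearMap.mulRight F s =
        (LinearMap.mulLeft F y ∘ₗ LinearMap.mulRight F s) * LinearMap.mulLeft F x := by
      ext v; simp [mul_assoc]
    rw [hG, hG, hc, hc', LinearMap.trace_mul_comm]
  let h : B →ₗ[F] F := G 1
  have hh : ∀ a, h a = LinearMap.trace F B (LinearMap.mulLeft F a) := by
    intro a
    rw [show h a = _ from hG 1 a, LinearMap.mulRight_one, LinearMap.comp_id]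
  have hN : h 1 ≠ 0 := by
    rw [hh, LinearMap.mulLeft_one, LinearMap.trace_id]
    exact_mod_cast (finrank_pos (R := F) (M := B)).ne'
  obtain ⟨a, b, hab⟩ := exists_eq_sum_mul_mul hB (h.smulRight (1 : B))
  set z := ∑ i, b i * a i with hz
  have key : ∀ s x, G s (z * x) = h x * G s 1 := by
    intro s x
    have := congrArg (G s) (hab x)
    rw [LinearMap.smulRight_apply, map_smul, smul_eq_mul] at this
    rw [this, hz, Finset.sum_mul, map_sum, map_sum]
    refine Finset.sum_congr rfl fun i _ => ?_
    rw [mul_assoc, hGcomm]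
  -- The radical of the form `h (x * y)` is a two-sided ideal that does not contain `1`.
  have hnondeg : ∀ w, (∀ x, h (w * x) = 0) → w = 0 := by
    let I : TwoSidedIdeal B := TwoSidedIdeal.mk' {w | ∀ x, h (w * x) = 0}
      (by simp)
      (by intro v w hv hw x; rw [add_mul, map_add, hv, hw, add_zero])
      (by intro v hv x; rw [neg_mul, map_neg, hv, neg_zero])
      (by
        intro r w hw x
        rw [mul_assoc, show h (r * (w * x)) = h (w * x * r) from hGcomm 1 _ _, mul_assoc]
        exact hw _)
      (by intro w r hw x; rw [mul_assoc]; exact hw _)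
    have hmem : ∀ w, w ∈ I ↔ ∀ x, h (w * x) = 0 := by
      intro w; simp [I, TwoSidedIdeal.mem_mk']
    intro w hw
    rcases eq_bot_or_eq_top I with hI | hI
    · have : w ∈ I := (hmem w).2 hw
      rwa [hI, TwoSidedIdeal.mem_bot] at this
    · have : (1 : B) ∈ I := by rw [hI]; trivial
      exact absurd (by simpa using (hmem 1).1 this 1) hN
  have hz' : z = h 1 • (1 : B) := by
    refine sub_eq_zero.1 (hnondeg _ fun x => ?_)
    rw [sub_mul, map_sub, show h (z * x) = h x * h 1 from key 1 x, smul_mul_assoc, one_mul,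
      map_smul, smul_eq_mul, mul_comm, sub_self]
  have := key s t
  rw [hz', smul_mul_assoc, one_mul, map_smul, smul_eq_mul, hh t, ht, zero_mul] at this
  rw [← hG]
  exact (mul_eq_zero.1 this).resolve_left hN

/-- The nontrivial automorphism `σ` of `E` supplies `θ = e - σ e`. -/
lemma exists_sqrt {F E : Type*} [Field F] [CharZero F] [Field E] [Algebra F E]
    (hquad : finrank F E = 2) :
    ∃ (σ : E ≃ₐ[F] E) (θ : E) (d : F), d ≠ 0 ∧ σ θ = -θ ∧ θ * θ = algebraMap F E d := by
  have : Algebra.IsQuadraticExtension F E := { finrank_eq_two' := hquad }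
  have hcard : Nat.card (E ≃ₐ[F] E) = 2 := (IsGalois.card_aut_eq_finrank F E).trans hquad
  obtain ⟨σ, hσ⟩ : ∃ σ : E ≃ₐ[F] E, σ ≠ 1 := by
    have : Nontrivial (E ≃ₐ[F] E) := Finite.one_lt_card_iff_nontrivial.1 (by omega)
    exact exists_ne 1
  have hσ2 : ∀ e, σ (σ e) = e := by
    intro e
    have h : σ ^ 2 = 1 := hcard ▸ pow_card_eq_one'
    rw [pow_two] at h
    exact DFunLike.congr_fun h e
  have hall : ∀ τ : E ≃ₐ[F] E, τ = 1 ∨ τ = σ := by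
    intro τ
    by_contra! hτ
    have := Fintype.ofFinite (E ≃ₐ[F] E)
    classical
    have h3 : ({1, σ, τ} : Finset (E ≃ₐ[F] E)).card = 3 :=
      Finset.card_eq_three.2 ⟨1, σ, τ, hσ.symm, hτ.1.symm, hτ.2.symm, rfl⟩
    have := Finset.card_le_univ ({1, σ, τ} : Finset (E ≃ₐ[F] E))
    rw [h3, ← Nat.card_eq_fintype_card, hcard] at this
    omega
  obtain ⟨e, he⟩ : ∃ e, σ e ≠ e := by
    by_contra! h
    exact hσ (AlgEquiv.ext h)
  have hθ : σ (e - σ e) = -(e - σ e) := by rw [map_sub, hσ2]; ring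
  obtain ⟨d, hd⟩ : (e - σ e) * (e - σ e) ∈ Set.range (algebraMap F E) := by
    rw [IsGalois.mem_range_algebraMap_iff_fixed]
    intro τ
    rcases hall τ with rfl | rfl
    · rfl
    · rw [map_mul, hθ]; ring
  refine ⟨σ, e - σ e, d, ?_, hθ, hd.symm⟩
  rintro rfl
  rw [map_zero, eq_comm, mul_self_eq_zero, sub_eq_zero] at hd
  exact he hd.symm

/-- Multiplication by `θ` on an `E`-vector space is conjugate to its negative, through `σ` applied
to coordinates. -/
lemma trace_lsmul_eq_zero {F E V : Type*} [Field F] [CharZero F] [Field E] [Algebra F E]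
    [AddCommGroup V] [Module F V] [Module E V] [IsScalarTower F E V] [FiniteDimensional F V]
    (σ : E ≃ₐ[F] E) (θ : E) (hθ : σ θ = -θ) (f : V →ₗ[F] V) (hf : ∀ v, f v = θ • v) :
    LinearMap.trace F V f = 0 := by
  have : FiniteDimensional E V := FiniteDimensional.right F E V
  let c : V ≃ₗ[F] (Fin (finrank E V) → E) := (finBasis E V).equivFun.restrictScalars F
  have hc : ∀ (e : E) v, c (e • v) = e • c v := fun e v => map_smul (finBasis E V).equivFun e v
  let S : V ≃ₗ[F] V := c ≪≫ₗ LinearEquiv.piCongrRight (fun _ => σ.toLinearEquiv) ≪≫ₗ c.symm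
  have hS : S.conj f = -f := by
    ext v
    obtain ⟨w, rfl⟩ := S.surjective v
    rw [LinearEquiv.conj_apply_apply, LinearEquiv.symm_apply_apply, LinearMap.neg_apply, hf, hf]
    apply c.injective
    rw [map_neg, hc]
    funext i
    simp [S, hc, hθ]
  have h := LinearMap.trace_conj' f S
  rw [hS, map_neg] at h
  exact self_eq_neg.1 h.symm

/-- Let `F` be a field of characteristic zero, `E/F` a quadratic
field extension, `A` a finite-dimensional central simple algebra over `E` with
`dim_E A = n²`, and `B` a finite-dimensional central simple algebra over `F`
with `dim_F B = 4n²`.  Let `φ : A → B` be an `F`-algebra homomorphism.  Then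
the centralizer in `B` of the image `φ(algebraMap E A (E))` of `E` is exactly
the image `φ(A)`: an element `b ∈ B` commutes with `φ(e·1_A)` for all `e ∈ E`
if and only if `b ∈ φ(A)`. -/
theorem stmt_3 (F : Type*) [Field F] [CharZero F]
    (E : Type*) [Field E] [Algebra F E] (hquad : Module.finrank F E = 2)
    (n : ℕ)
    (A : Type*) [Ring A] [Algebra E A] [Algebra F A] [IsScalarTower F E A]
    [FiniteDimensional E A] [IsSimpleRing A] (hA : Subalgebra.center E A = ⊥)
    (hdimA : Module.finrank E A = n ^ 2)
    (B : Type*) [Ring B] [Algebra F B] [FiniteDimensional F B] [IsSimpleRing B]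
    (hB : Subalgebra.center F B = ⊥)
    (hdimB : Module.finrank F B = 4 * n ^ 2)
    (φ : A →ₐ[F] B) :
    ∀ b : B, (∀ e : E, b * φ (algebraMap E A e) = φ (algebraMap E A e) * b) ↔
      b ∈ φ.range := by
  obtain ⟨σ, θ, d, hd, hσθ, hθd⟩ := exists_sqrt (F := F) (E := E) hquad
  set t : B := φ (algebraMap E A θ) with ht
  have htt : t * t = algebraMap F B d := by
    rw [ht, ← map_mul, ← map_mul, hθd, ← IsScalarTower.algebraMap_apply, AlgHom.commutes]
  have htr : LinearMap.trace F B (LinearMap.mulLeft F t) = 0 := by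
    let _ : Module E B := Module.compHom B (φ.toRingHom.comp (algebraMap E A))
    have hsmul : ∀ (e : E) (v : B), e • v = φ (algebraMap E A e) * v := fun _ _ => rfl
    have : IsScalarTower F E B := IsScalarTower.of_algebraMap_smul fun r v => by
      rw [hsmul, ← IsScalarTower.algebraMap_apply, AlgHom.commutes, Algebra.smul_def]
    exact trace_lsmul_eq_zero σ θ hσθ _ fun v => (hsmul θ v).symm
  have htr2 := trace_mulLeft_comp_mulRight_eq_zero hB t t htr
  let C : Submodule F B := Subalgebra.toSubmodule (Subalgebra.centralizer F {t})
  have hC : ∀ b, b ∈ C ↔ t * b = b * t := by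
    intro b
    simp [C, Subalgebra.mem_centralizer_iff]
  -- Since `t * t = d`, this averages `b` and its conjugate `t * b * t⁻¹`.
  let P : B →ₗ[F] B := (2 : F)⁻¹ • (LinearMap.id +
    d⁻¹ • (LinearMap.mulLeft F t ∘ₗ LinearMap.mulRight F t))
  have hPapp : ∀ b, P b = (2 : F)⁻¹ • (b + d⁻¹ • (t * (b * t))) := fun b => rfl
  have hP : LinearMap.IsProj C P := by
    constructor
    · intro b
      rw [hC, hPapp, mul_smul_comm, smul_mul_assoc]
      congr 1
      rw [mul_add, add_mul, mul_smul_comm, smul_mul_assoc, ← mul_assoc t t, htt,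
        ← Algebra.smul_def, smul_smul, inv_mul_cancel₀ hd, one_smul, mul_assoc, mul_assoc, htt,
        ← Algebra.commutes, ← Algebra.smul_def, mul_smul_comm, smul_smul, inv_mul_cancel₀ hd,
        one_smul, add_comm]
    · intro b hb
      rw [hPapp, ← (hC b).1 hb, ← mul_assoc, htt, ← Algebra.smul_def, smul_smul,
        inv_mul_cancel₀ hd, one_smul, ← two_smul F b, smul_smul, inv_mul_cancel₀ two_ne_zero,
        one_smul]
  have hCdim : finrank F C = 2 * n ^ 2 := by
    have h := hP.trace
    rw [map_smul, map_add, map_smul, htr2, LinearMap.trace_id, hdimB] at h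
    have h' : ((2 * n ^ 2 : ℕ) : F) = (finrank F C : F) := by
      rw [← h]; push_cast; simp; ring
    exact_mod_cast h'.symm
  have hinj : Function.Injective φ := φ.toRingHom.injective
  have hRdim : finrank F (Subalgebra.toSubmodule φ.range) = 2 * n ^ 2 := by
    have h1 : finrank F A = 2 * n ^ 2 := by rw [← finrank_mul_finrank F E A, hquad, hdimA]
    rw [← h1]
    exact (AlgEquiv.ofInjective φ hinj).toLinearEquiv.finrank_eq.symm
  have hle : Subalgebra.toSubmodule φ.range ≤ C := by
    rintro _ ⟨a, rfl⟩
    rw [hC]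
    exact (map_mul φ _ _).symm.trans ((congrArg φ (Algebra.commutes θ a)).trans (map_mul φ _ _))
  have heq := Submodule.eq_of_le_of_finrank_eq hle (hRdim.trans hCdim.symm)
  intro b
  constructor
  · intro hb
    rw [← Subalgebra.mem_toSubmodule, heq, hC]
    exact (hb θ).symm
  · rintro ⟨a, rfl⟩ e
    exact (map_mul φ _ _).symm.trans
      ((congrArg φ (Algebra.commutes e a).symm).trans (map_mul φ _ _))
end

section
/- Let F be an infinite field of characteristic zero and E/F a quadratic field extension with nontrivial F-algebra automorphism σ of E. Let A be a finite-dimensional central simple algebra over E and B a finite-dimensional central simple algebra over F such that there is an E-algebra isomorphism B ⊗_F E ≅ M_2(A), and let φ : A → B be an F-algebra homomorphism. Then there exists b ∈ B^× such that b·φ(A)·b⁻¹ = φ(A) and, for every e ∈ E, b·φ(e·1_A)·b⁻¹ = φ(σ(e)·1_A). In particular, the natural map from the normalizer N_{B^×}(φ(A^×)) to Gal(E/F), sending an element to the automorphism of E induced by conjugation, is surjective. -/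
/-!
Two finite-dimensional modules of equal dimension over a finite-dimensional simple algebra are
isomorphic. Applied to `E ⊗[F] B` (simple, being isomorphic to `M₂(A)`) acting on `B` by
`(e ⊗ b) • y = b * y * φ e` and by `(e ⊗ b) • y = b * y * φ (ρ e)`, this gives a left `B`-linear
automorphism of `B`, i.e. right multiplication by a unit, and this unit intertwines `φ e` and
`φ (ρ e)`: the Skolem–Noether theorem for `E → B` (`exists_unit_intertwining`).

It remains to see that such a unit normalizes `φ(A)`. It normalizes `φ(E)`, hence the centralizer
`C` of `φ(E)`, and `C = φ(A)`: clearly `φ(A) ⊆ C`, while for a unit `u` realizing the nontrivial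
`σ` one has `C ∩ uC = 0`, so `2 dim C ≤ dim B = 2 dim φ(A)`
(`mem_of_commutes_range`).
-/

open scoped TensorProduct

/-- Over a finite-dimensional simple algebra, modules are classified by their dimension: both are
powers of the unique simple module. -/
lemma nonempty_linearEquiv_of_finrank_eq {F R M N : Type*} [Field F] [Ring R] [Algebra F R]
    [FiniteDimensional F R] [IsSimpleRing R]
    [AddCommGroup M] [Module F M] [Module R M] [IsScalarTower F R M] [FiniteDimensional F M]
    [AddCommGroup N] [Module F N] [Module R N] [IsScalarTower F R N] [FiniteDimensional F N]
    (h : Module.finrank F M = Module.finrank F N) : Nonempty (M ≃ₗ[R] N) := by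
  have : IsArtinianRing R := IsArtinianRing.of_finite F R
  obtain ⟨hss, hiso, _⟩ := isSimpleRing_isArtinianRing_iff.mp ⟨‹IsSimpleRing R›, this⟩
  have : Module.Finite R M := Module.Finite.of_restrictScalars_finite F R M
  have : Module.Finite R N := Module.Finite.of_restrictScalars_finite F R N
  obtain ⟨S, hS⟩ := IsAtomic.exists_atom (Submodule R R)
  rw [← isSimpleModule_iff_isAtom] at hS
  have hM : IsIsotypicOfType R M S := fun m _ ↦ by
    obtain ⟨I, ⟨e⟩⟩ := IsSemisimpleRing.exists_linearEquiv_ideal_of_isSimpleModule R m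
    have := IsSimpleModule.congr e.symm
    exact ⟨e.trans (hiso S I).some⟩
  have hN : IsIsotypicOfType R N S := fun m _ ↦ by
    obtain ⟨I, ⟨e⟩⟩ := IsSemisimpleRing.exists_linearEquiv_ideal_of_isSimpleModule R m
    have := IsSimpleModule.congr e.symm
    exact ⟨e.trans (hiso S I).some⟩
  obtain ⟨n, ⟨e⟩⟩ := hM.linearEquiv_fun
  obtain ⟨k, ⟨eN⟩⟩ := hN.linearEquiv_fun
  have h1 := (e.restrictScalars F).finrank_eq
  have h2 := (eN.restrictScalars F).finrank_eq
  have : Module.Finite F S := Module.Finite.of_injective (S.subtype.restrictScalars F)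
    S.subtype_injective
  have : Nontrivial S := IsSimpleModule.nontrivial R S
  have hpos : 0 < Module.finrank F S := Module.finrank_pos
  rw [Module.finrank_pi_fintype, Finset.sum_const, Finset.card_univ, Fintype.card_fin,
    smul_eq_mul] at h1 h2
  have hnk : n = k := Nat.eq_of_mul_eq_mul_right hpos (by rw [← h1, ← h2, h])
  subst hnk
  exact ⟨e.trans eN.symm⟩

/-- A copy of `V`, regarded as an `R`-module through the representation `f`. -/
def RepModule {F R V : Type*} [Field F] [Ring R] [Algebra F R] [AddCommGroup V] [Module F V]
    (_f : R →ₐ[F] Module.End F V) : Type _ := V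

namespace RepModule

variable {F R V : Type*} [Field F] [Ring R] [Algebra F R] [AddCommGroup V] [Module F V]
  (f : R →ₐ[F] Module.End F V)

instance : AddCommGroup (RepModule f) := inferInstanceAs (AddCommGroup V)

instance : Module F (RepModule f) := inferInstanceAs (Module F V)

instance [FiniteDimensional F V] : FiniteDimensional F (RepModule f) :=
  inferInstanceAs (FiniteDimensional F V)

instance : Module R (RepModule f) where
  smul r v := (f r (v : V) : V)
  one_smul v := congrArg (fun T : Module.End F V ↦ T v) (map_one f)
  mul_smul r s v := congrArg (fun T : Module.End F V ↦ T v) (map_mul f r s)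
  smul_zero r := (f r).map_zero
  smul_add r v w := (f r).map_add v w
  add_smul r s v := congrArg (fun T : Module.End F V ↦ T v) (map_add f r s)
  zero_smul v := congrArg (fun T : Module.End F V ↦ T v) (map_zero f)

instance : IsScalarTower F R (RepModule f) where
  smul_assoc c r v := by
    exact congrArg (fun T : Module.End F V ↦ T v) (map_smul f c r)

end RepModule

/-- Any two representations of a finite-dimensional simple algebra on the same finite-dimensional
space are equivalent. -/
lemma exists_intertwining {F R V : Type*} [Field F] [Ring R] [Algebra F R]
    [FiniteDimensional F R] [IsSimpleRing R] [AddCommGroup V] [Module F V] [FiniteDimensional F V]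
    (f g : R →ₐ[F] Module.End F V) :
    ∃ T : V ≃+ V, ∀ r v, T (f r v) = g r (T v) := by
  have h : Module.finrank F (RepModule f) = Module.finrank F (RepModule g) := rfl
  obtain ⟨e⟩ := nonempty_linearEquiv_of_finrank_eq (R := R) h
  exact ⟨e.toAddEquiv, fun r v ↦ e.map_smul r v⟩

/-- The representation of `E ⊗[F] B` on `B` in which `B` acts by left multiplication and `E` by
right multiplication through `ψ`. -/
noncomputable def bimoduleRep {F E B : Type*} [Field F] [Field E] [Algebra F E] [Ring B]
    [Algebra F B] (ψ : E →ₐ[F] B) : E ⊗[F] B →ₐ[F] Module.End F B :=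
  Algebra.TensorProduct.lift
    (AlgHom.ofLinearMap ((LinearMap.mul F B).flip ∘ₗ ψ.toLinearMap)
      (by ext; simp)
      (fun x y ↦ by
        ext b
        simp only [LinearMap.comp_apply, LinearMap.flip_apply, LinearMap.mul_apply',
          AlgHom.toLinearMap_apply, Module.End.mul_apply]
        rw [mul_comm x y, map_mul, mul_assoc]))
    (Algebra.lmul F B)
    (fun x y ↦ by
      ext b
      simp [mul_assoc])

lemma bimoduleRep_tmul {F E B : Type*} [Field F] [Field E] [Algebra F E] [Ring B]
    [Algebra F B] (ψ : E →ₐ[F] B) (e : E) (b y : B) :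
    bimoduleRep ψ (e ⊗ₜ b) y = b * y * ψ e := by
  exact (congrArg (fun T : Module.End F B ↦ T y)
    (Algebra.TensorProduct.lift_tmul _ _ _ e b))

/-- Skolem–Noether: if `E ⊗[F] B` is simple, any two embeddings of `E` into `B` are conjugate. -/
lemma exists_unit_intertwining {F E B : Type*} [Field F] [Field E] [Algebra F E] [Ring B]
    [Algebra F B] [FiniteDimensional F E] [FiniteDimensional F B] [IsSimpleRing (E ⊗[F] B)]
    (ψ χ : E →ₐ[F] B) : ∃ u : Bˣ, ∀ e, (u : B) * ψ e = χ e * u := by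
  obtain ⟨T, hT⟩ := exists_intertwining (bimoduleRep χ) (bimoduleRep ψ)
  have hT' : ∀ e b y, T (b * y * χ e) = b * T y * ψ e := fun e b y ↦ by
    have := hT (e ⊗ₜ b) y
    rwa [bimoduleRep_tmul, bimoduleRep_tmul] at this
  have hl : ∀ b, T b = b * T 1 := fun b ↦ by simpa using hT' 1 b 1
  have hinv : T.symm 1 * T 1 = 1 := by rw [← hl, T.apply_symm_apply]
  have hinv' : T 1 * T.symm 1 = 1 := T.injective <| by
    rw [hl (T 1 * T.symm 1), mul_assoc, hinv, mul_one]
  refine ⟨⟨T 1, T.symm 1, hinv', hinv⟩, fun e ↦ ?_⟩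
  have := hT' e 1 1
  rw [one_mul, one_mul, one_mul, hl] at this
  exact this.symm

/-- An `F`-subspace `A'` of the centralizer of `ψ(E)` having half the dimension of `B` is the whole
centralizer, provided some unit of `B` induces a nontrivial automorphism of `ψ(E)`. -/
lemma mem_of_commutes_range {F E B : Type*} [Field F] [Field E] [Algebra F E] [Ring B]
    [Algebra F B] [FiniteDimensional F B] (ψ : E →ₐ[F] B) (σ : E ≃ₐ[F] E)
    (hσ : σ ≠ AlgEquiv.refl) (u : Bˣ) (hu : ∀ e, (u : B) * ψ e = ψ (σ e) * u)
    (A' : Submodule F B) (hA' : ∀ a ∈ A', ∀ e, ψ e * a = a * ψ e)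
    (hdim : Module.finrank F B = 2 * Module.finrank F A')
    (y : B) (hy : ∀ e, ψ e * y = y * ψ e) : y ∈ A' := by
  let C : Submodule F B := Subalgebra.toSubmodule (Subalgebra.centralizer F (Set.range ψ))
  have hC : ∀ z, z ∈ C ↔ ∀ e, ψ e * z = z * ψ e := fun z ↦ by
    simp [C, Subalgebra.mem_centralizer_iff]
  have hle : A' ≤ C := fun a ha ↦ (hC a).2 (hA' a ha)
  let L : B ≃ₗ[F] B := LinearEquiv.ofLinearMap (LinearMap.mulLeft F (u : B))
    (LinearMap.mulLeft F ((u⁻¹ : Bˣ) : B)) (by ext; simp) (by ext; simp)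
  have hL : ∀ z, L z = u * z := fun z ↦ rfl
  obtain ⟨e, he⟩ : ∃ e, σ e ≠ e := by
    by_contra! h
    exact hσ (AlgEquiv.ext h)
  have hdisj : Disjoint C (C.map (L : B →ₗ[F] B)) := by
    rw [Submodule.disjoint_def]
    rintro _ h1 ⟨c, hc, rfl⟩
    have hc' := (hC c).1 hc
    have hcom := (hC _).1 h1 (σ e)
    simp only [LinearEquiv.coe_coe, hL] at hcom ⊢
    -- `ψ (σ e)` commutes with `u * c`, but also moves past `u` as `ψ e`
    have h2 : (u : B) * (ψ (σ e - e) * c) = 0 := by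
      rw [map_sub, sub_mul, mul_sub, hc' (σ e), ← mul_assoc, ← mul_assoc, ← hcom, hu, mul_assoc,
        sub_self]
    have h3 : ψ (σ e - e) * c = 0 := by simpa using h2
    have h4 : c = 0 := by
      have := congrArg (ψ (σ e - e)⁻¹ * ·) h3
      simpa [← mul_assoc, ← map_mul, inv_mul_cancel₀ (sub_ne_zero.2 he), -map_sub] using this
    rw [h4, mul_zero]
  have h5 := Submodule.finrank_add_finrank_le_of_disjoint hdisj
  rw [LinearEquiv.finrank_map_eq L C, hdim] at h5
  have : A' = C := Submodule.eq_of_le_of_finrank_le hle (by omega)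
  rw [this]
  exact (hC y).2 hy

/-- Let `F` be an infinite field of characteristic zero and `E/F` a
quadratic field extension with nontrivial `F`-algebra automorphism `σ` of `E`.
Let `A` be a finite-dimensional central simple algebra over `E` and `B` a
finite-dimensional central simple algebra over `F` with `B ⊗_F E ≅ M₂(A)` as
`E`-algebras, and let `φ : A → B` be an `F`-algebra homomorphism.  Then there is
`b ∈ B^×` with `b·φ(A)·b⁻¹ = φ(A)` and `b·φ(e·1_A)·b⁻¹ = φ(σ(e)·1_A)` for all
`e ∈ E`.  In particular the natural map from the normalizer of `φ(A^×)` in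
`B^×` to `Gal(E/F)` is surjective: every `F`-algebra automorphism `ρ` of `E` is
induced by conjugation by some such `b`. -/
theorem stmt_4 (F : Type*) [Field F] [Infinite F] [CharZero F]
    (E : Type*) [Field E] [Algebra F E] (hquad : Module.finrank F E = 2)
    (σ : E ≃ₐ[F] E) (hσ : σ ≠ AlgEquiv.refl)
    (A : Type*) [Ring A] [Algebra E A] [Algebra F A] [IsScalarTower F E A]
    [FiniteDimensional E A] [IsSimpleRing A] (hA : Subalgebra.center E A = ⊥)
    (B : Type*) [Ring B] [Algebra F B] [FiniteDimensional F B] [IsSimpleRing B]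
    (hB : Subalgebra.center F B = ⊥)
    (iso : (E ⊗[F] B) ≃ₐ[E] Matrix (Fin 2) (Fin 2) A)
    (φ : A →ₐ[F] B) :
    (∃ b : Bˣ,
      ((fun x => (b : B) * x * ((b⁻¹ : Bˣ) : B)) '' Set.range φ = Set.range φ) ∧
      ∀ e : E, (b : B) * φ (algebraMap E A e) * ((b⁻¹ : Bˣ) : B) =
        φ (algebraMap E A (σ e))) ∧
    (∀ ρ : E ≃ₐ[F] E, ∃ b : Bˣ,
      ((fun x => (b : B) * x * ((b⁻¹ : Bˣ) : B)) '' Set.range φ = Set.range φ) ∧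
      ∀ e : E, (b : B) * φ (algebraMap E A e) * ((b⁻¹ : Bˣ) : B) =
        φ (algebraMap E A (ρ e))) := by
  have hFE : FiniteDimensional F E := FiniteDimensional.of_finrank_pos (by omega)
  have : FiniteDimensional F A := FiniteDimensional.trans F E A
  have : IsSimpleRing (E ⊗[F] B) := IsSimpleRing.of_ringEquiv iso.symm.toRingEquiv inferInstance
  let ψ : E →ₐ[F] B := φ.comp (IsScalarTower.toAlgHom F E A)
  have hψ : ∀ e, ψ e = φ (algebraMap E A e) := fun e ↦ rfl
  have hSN : ∀ ρ : E ≃ₐ[F] E, ∃ u : Bˣ, ∀ e, (u : B) * ψ e = ψ (ρ e) * u := fun ρ ↦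
    exists_unit_intertwining ψ (ψ.comp ρ.toAlgHom)
  have hcomm : ∀ a e, ψ e * φ a = φ a * ψ e := fun a e ↦ by
    rw [hψ, ← map_mul, ← map_mul, Algebra.commutes]
  -- both sides equal `4 * finrank E A`
  have hdim : Module.finrank F B = 2 * Module.finrank F (LinearMap.range φ.toLinearMap) := by
    have h1 := iso.toLinearEquiv.finrank_eq
    rw [Module.finrank_baseChange, Module.finrank_matrix, Fintype.card_fin] at h1
    have h2 := Module.finrank_mul_finrank F E A
    have : Nontrivial B := inferInstance
    have h3 := LinearMap.finrank_range_of_inj (f := φ.toLinearMap) φ.toRingHom.injective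
    rw [h3, h1, ← h2, hquad]
    ring
  obtain ⟨u, hu⟩ := hSN σ
  have hC : ∀ y, (∀ e, ψ e * y = y * ψ e) → y ∈ Set.range φ := fun y hy ↦
    mem_of_commutes_range ψ σ hσ u hu (LinearMap.range φ.toLinearMap)
      (by rintro _ ⟨a, rfl⟩ e; exact hcomm a e) hdim y hy
  have key : ∀ ρ : E ≃ₐ[F] E, ∃ b : Bˣ,
      ((fun x => (b : B) * x * ((b⁻¹ : Bˣ) : B)) '' Set.range φ = Set.range φ) ∧
      ∀ e : E, (b : B) * φ (algebraMap E A e) * ((b⁻¹ : Bˣ) : B) =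
        φ (algebraMap E A (ρ e)) := by
    -- conjugation by a unit normalizing `ψ(E)` preserves its centralizer `φ(A)`
    have hmaps : ∀ (ρ : E ≃ₐ[F] E) (b : Bˣ), (∀ e, (b : B) * ψ e = ψ (ρ e) * b) →
        ∀ a, (b : B) * φ a * ((b⁻¹ : Bˣ) : B) ∈ Set.range φ := by
      intro ρ b hb a
      refine hC _ fun e ↦ ?_
      obtain ⟨e, rfl⟩ := ρ.surjective e
      have h2 : ψ e * ((b⁻¹ : Bˣ) : B) = ((b⁻¹ : Bˣ) : B) * ψ (ρ e) := by
        rw [Units.eq_inv_mul_iff_mul_eq, ← mul_assoc, hb, Units.mul_inv_cancel_right]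
      rw [← mul_assoc, ← mul_assoc, ← hb, mul_assoc (b : B), hcomm, mul_assoc _ _ (ψ (ρ e)), ← h2]
      simp only [mul_assoc]
    intro ρ
    obtain ⟨b, hb⟩ := hSN ρ
    refine ⟨b, Set.Subset.antisymm ?_ ?_, fun e ↦ ?_⟩
    · rintro _ ⟨_, ⟨a, rfl⟩, rfl⟩
      exact hmaps ρ b hb a
    · rintro _ ⟨a, rfl⟩
      refine ⟨_, hmaps ρ.symm b⁻¹ (fun e ↦ ?_) a, ?_⟩
      · rw [Units.inv_mul_eq_iff_eq_mul, ← mul_assoc, hb, ρ.apply_symm_apply,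
          Units.mul_inv_cancel_right]
      · simp [mul_assoc]
    · rw [← hψ, hb, Units.mul_inv_cancel_right, hψ]
  exact ⟨key σ, key⟩
end

section
/- Let G' be a group, G a subgroup of G' of index 2, and τ ∈ G' \ G. Let V be a nonzero finite-dimensional complex vector space and π : G →* GL(V) an irreducible representation (V has no π-invariant subspace other than 0 and V). Suppose B is a nondegenerate bilinear form on V satisfying B(π(τ g τ⁻¹) x, π(g) y) = B(x, y) for all g ∈ G and x, y ∈ V. Then there exists a constant C ∈ {1, −1} such that B(π(τ²) y, x) = C · B(x, y) for all x, y ∈ V. Moreover, C is independent of the choices: for any other τ' ∈ G' \ G and any nondegenerate bilinear form B' on V satisfying B'(π(τ' g τ'⁻¹) x, π(g) y) = B'(x, y) for all g, x, y, the corresponding constant for (τ', B') equals C. -/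
/-!
Call a form `τ`-invariant if `B(π(τgτ⁻¹)x, π(g)y) = B(x, y)`. By Schur's lemma every `τ`-invariant
form is a scalar multiple of a nondegenerate one (`exists_eq_smul_of_invariant`).

The form `(x, y) ↦ B(π(τ²)y, x)` is again `τ`-invariant, so it equals `C • B` for some `C`. Using
this twice, together with `B(π(τ²)x, π(τ²)y) = B(x, y)`, gives `C² = 1`.

For independence, write `τ' = τh` with `h ∈ G`. If `B'` is `τ'`-invariant, then
`(x, y) ↦ B'(x, π(h⁻¹)y)` is `τ`-invariant, so `B'(x, y) = c · B(x, π(h)y)`. Since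
`τ'² = (τhτ⁻¹)τ²h`, invariance of `B` gives
`B'(π(τ'²)y, x) = c · B(π(τ²)π(h)y, x) = C · c · B(x, π(h)y) = C · B'(x, y)`.
-/

/-- Schur's lemma for invariant forms: a `τ`-invariant form is a scalar multiple of any
`τ`-invariant form with zero left radical. -/
theorem exists_eq_smul_of_invariant {G' : Type*} [Group G'] {G : Subgroup G'} (hG : G.Normal)
    (τ : G') {V : Type*} [AddCommGroup V] [Module ℂ V] [FiniteDimensional ℂ V] [Nontrivial V]
    (π : ↥G →* (V →ₗ[ℂ] V)ˣ)
    (hirr : ∀ W : Submodule ℂ V, (∀ (g : ↥G) (v : V), v ∈ W → (π g).val v ∈ W) →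
      W = ⊥ ∨ W = ⊤)
    (B D : V →ₗ[ℂ] V →ₗ[ℂ] ℂ)
    (hB₁ : ∀ x, (∀ y, B x y = 0) → x = 0)
    (hB : ∀ g h : ↥G, (h : G') = τ * (g : G') * τ⁻¹ →
      ∀ x y, B ((π h).val x) ((π g).val y) = B x y)
    (hD : ∀ g h : ↥G, (h : G') = τ * (g : G') * τ⁻¹ →
      ∀ x y, D ((π h).val x) ((π g).val y) = D x y) :
    ∃ c : ℂ, ∀ x y, D x y = c * B x y := by
  have hinj : Function.Injective B := by
    rw [← LinearMap.ker_eq_bot, LinearMap.ker_eq_bot']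
    intro x hx
    exact hB₁ x fun y => by rw [hx]; rfl
  have hfr : Module.finrank ℂ V = Module.finrank ℂ (V →ₗ[ℂ] ℂ) :=
    (Subspace.dual_finrank_eq (K := ℂ) (V := V)).symm
  let e := LinearEquiv.ofInjectiveOfFinrankEq B hinj hfr
  have he : ∀ x, e x = B x := fun x => rfl
  -- an eigenvector of `B⁻¹ ∘ D` lies in the kernel of `D - c • B`, which is a subrepresentation
  obtain ⟨c, hc⟩ := Module.End.exists_eigenvalue (e.symm.toLinearMap ∘ₗ D : Module.End ℂ V)
  obtain ⟨v, hv⟩ := hc.exists_hasEigenvector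
  have hDv : D v = c • B v := by
    have h1 := hv.apply_eq_smul
    have h2 := congrArg e h1
    rw [LinearMap.comp_apply, LinearEquiv.coe_coe, e.apply_symm_apply, map_smul, he] at h2
    exact h2
  have key := hirr (LinearMap.ker (D - c • B)) ?_
  · refine ⟨c, ?_⟩
    rcases key with h | h
    · exact absurd ((Submodule.eq_bot_iff _).1 h v (by simp [hDv])) hv.2
    · intro x y
      have hx : x ∈ LinearMap.ker (D - c • B) := h ▸ Submodule.mem_top
      have := LinearMap.congr_fun (LinearMap.mem_ker.1 hx) y
      simpa [sub_eq_zero] using this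
  · intro h x hx
    rw [LinearMap.mem_ker] at hx ⊢
    ext y
    let g : ↥G := ⟨τ⁻¹ * h * τ, by simpa using hG.conj_mem h h.2 τ⁻¹⟩
    have hg : (h : G') = τ * (g : G') * τ⁻¹ := by simp [g, mul_assoc]
    have hy : y = (π g).val ((π g⁻¹).val y) := by
      rw [← Module.End.mul_apply, ← Units.val_mul, ← map_mul]; simp
    have := LinearMap.congr_fun hx ((π g⁻¹).val y)
    rw [hy]
    simp only [LinearMap.sub_apply, LinearMap.smul_apply, hB g h hg, hD g h hg] at this ⊢
    exact this

/-- Let `G'` be a group, `G ≤ G'` of index `2`, `τ ∈ G' \ G`.  Let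
`V` be a nonzero finite-dimensional complex vector space and `π : G →* GL(V)`
irreducible.  If `B` is a nondegenerate bilinear form on `V` with
`B(π(τgτ⁻¹)x, π(g)y) = B(x, y)` for all `g ∈ G`, then there is `C ∈ {1, -1}`
with `B(π(τ²)y, x) = C·B(x, y)`, and `C` is independent of the choice of
`τ' ∈ G' \ G` and of the invariant nondegenerate bilinear form `B'`. -/
theorem stmt_5 (G' : Type*) [Group G'] (G : Subgroup G') (hidx : G.index = 2)
    (τ : G') (hτ : τ ∉ G)
    (V : Type*) [AddCommGroup V] [Module ℂ V] [FiniteDimensional ℂ V] [Nontrivial V]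
    (π : ↥G →* (V →ₗ[ℂ] V)ˣ)
    (hirr : ∀ W : Submodule ℂ V, (∀ (g : ↥G) (v : V), v ∈ W → (π g).val v ∈ W) →
      W = ⊥ ∨ W = ⊤)
    (B : V →ₗ[ℂ] V →ₗ[ℂ] ℂ)
    (hB₁ : ∀ x, (∀ y, B x y = 0) → x = 0)
    (hB₂ : ∀ y, (∀ x, B x y = 0) → y = 0)
    (hBinv : ∀ g h : ↥G, (h : G') = τ * (g : G') * τ⁻¹ →
      ∀ x y, B ((π h).val x) ((π g).val y) = B x y) :
    ∃ C : ℂ, (C = 1 ∨ C = -1) ∧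
      (∀ t : ↥G, (t : G') = τ ^ 2 → ∀ x y, B ((π t).val y) x = C * B x y) ∧
      (∀ τ' : G', τ' ∉ G → ∀ B' : V →ₗ[ℂ] V →ₗ[ℂ] ℂ,
        (∀ x, (∀ y, B' x y = 0) → x = 0) → (∀ y, (∀ x, B' x y = 0) → y = 0) →
        (∀ g h : ↥G, (h : G') = τ' * (g : G') * τ'⁻¹ →
          ∀ x y, B' ((π h).val x) ((π g).val y) = B' x y) →
        ∀ t : ↥G, (t : G') = τ' ^ 2 → ∀ x y, B' ((π t).val y) x = C * B' x y) := by
  have hG : G.Normal := Subgroup.normal_of_index_eq_two hidx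
  have πmul : ∀ (a b : ↥G) (v : V), (π (a * b)).val v = (π a).val ((π b).val v) := fun a b v => by
    rw [map_mul, Units.val_mul, Module.End.mul_apply]
  let t : ↥G := ⟨τ ^ 2, Subgroup.sq_mem_of_index_two hidx τ⟩
  obtain ⟨C, hC⟩ := exists_eq_smul_of_invariant hG τ π hirr B
    (B.flip.compl₂ (π t).val) hB₁ hBinv (by
      intro g h hh x y
      simp only [LinearMap.compl₂_apply, LinearMap.flip_apply]
      -- `τ²g = (τhτ⁻¹)τ²` where `h = τgτ⁻¹`
      have e1 : t * g = (⟨τ * h * τ⁻¹, hG.conj_mem h h.2 τ⟩ : ↥G) * t := by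
        ext; simp [t, hh, pow_two, mul_assoc]
      rw [← πmul, e1, πmul]
      exact hBinv h _ rfl _ _)
  simp only [LinearMap.compl₂_apply, LinearMap.flip_apply] at hC
  refine ⟨C, ?_, ?_, ?_⟩
  · obtain ⟨v, hv⟩ := exists_ne (0 : V)
    obtain ⟨w, hw⟩ : ∃ w, B v w ≠ 0 := by
      by_contra! hcon
      exact hv (hB₁ v hcon)
    have h1 : B ((π t).val v) ((π t).val w) = B v w :=
      hBinv t t (by simp [t, pow_two, mul_assoc]) v w
    rw [hC, hC, ← mul_assoc] at h1
    have h2 : C * C = 1 := by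
      apply mul_right_cancel₀ hw
      rw [h1, one_mul]
    exact mul_self_eq_one_iff.1 h2
  · intro s hs x y
    obtain rfl : s = t := Subtype.ext hs
    exact hC x y
  · intro τ' hτ' B' _ _ hB' s hs x y
    let h : ↥G := ⟨τ⁻¹ * τ', by
      rw [Subgroup.mul_mem_iff_of_index_two hidx]; simp [hτ, hτ']⟩
    have hτh : τ' = τ * h := by simp [h]
    obtain ⟨c, hc⟩ := exists_eq_smul_of_invariant hG τ π hirr B (B'.compl₂ (π h⁻¹).val) hB₁
      hBinv (by
      intro g k hk x y
      simp only [LinearMap.compl₂_apply]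
      have e1 : h⁻¹ * g = (h⁻¹ * g * h) * h⁻¹ := by group
      rw [← πmul, e1, πmul]
      exact hB' _ k (by rw [hk, hτh]; push_cast; group) _ _)
    simp only [LinearMap.compl₂_apply] at hc
    have hc' : ∀ x y, B' x y = c * B x ((π h).val y) := fun x y => by
      rw [← hc, ← πmul]; simp
    let k : ↥G := ⟨τ * h * τ⁻¹, hG.conj_mem h h.2 τ⟩
    have e2 : s = k * (t * h) := by
      ext; rw [hs, hτh]; simp [k, t, pow_two, mul_assoc]
    rw [hc', hc', e2, πmul, hBinv h k rfl, πmul, hC]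
    ring
end

section
/- Let n, m ≥ 1 and let ρ be a continuous group homomorphism from the unitary group U(n) of n×n complex unitary matrices to the unitary group U(m). Then there exists an invertible matrix S ∈ GL_m(ℂ) such that for all k ∈ U(n), S · ρ(conj k) · S⁻¹ = conj(ρ(k)), where conj denotes entrywise complex conjugation of matrices. (In other words, the representation k ↦ ρ(conj k) is equivalent to the contragredient of ρ, which for unitary ρ is k ↦ conj(ρ(k)).) -/
/-!
A finite-dimensional unitary representation of an arbitrary abstract group is determined up to
unitary equivalence by its character
(`exists_unitary_intertwiner`), and this fact is used twice.

* For the cyclic group generated by `k ∈ U(n)`: the representations `j ↦ k⁻ʲ` and `j ↦ conj k ^ j`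
  of `ℤ` have the same character, because `tr (conj u) = tr uᴴ = tr u⁻¹` for unitary `u`. Hence
  `k⁻¹` and `conj k` are conjugate inside `U(n)` (`isConj_conjU`).
* Consequently `tr ρ(conj k) = tr ρ(k⁻¹) = tr conj(ρ k)`, so `k ↦ ρ(conj k)` and
  `k ↦ conj(ρ k)` are equivalent.

To prove `exists_unitary_intertwiner` for `σ, τ` with equal characters, take a partial isometry `T`
intertwining `σ` and `τ` whose range is maximal. The complementary projections `P = 1 - Tᴴ T` and
`Q = 1 - T Tᴴ` commute with `σ` and `τ`, and `tr (σ g * P) = tr (τ g * Q)`. If `P ≠ 0`, there is a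
nonzero intertwiner `X = Q X P` (`exists_nonzero_intertwiner`); its polar part
(`exists_partial_isometry`) can be added to `T`, contradicting maximality. So `Tᴴ T = 1`.

The nonzero intertwiner comes from a GNS-type argument: `σ g * P ↦ τ g * Q` preserves the inner
product `tr (Aᴴ B)`, since that is given by the characters, so it extends linearly to the span of
the `σ g * P`, and by zero on the orthogonal complement to a linear map `Φ` on all matrices with
`Φ (σ g * X) = τ g * Φ X` and `Φ P = Q ≠ 0`. Matrices under left multiplication are a sum of copies
of the column representation, so some column component of `Φ` is a nonzero intertwiner.
-/

open scoped Matrix ComplexOrder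

theorem exists_linear_orthogonal_projection {H : Type*} [NormedAddCommGroup H]
    [InnerProductSpace ℂ H] [FiniteDimensional ℂ H] (E : Submodule ℂ H) :
    ∃ p : H →ₗ[ℂ] H, (∀ X, p X ∈ E) ∧ ∀ X, ∀ w ∈ E, inner ℂ (X - p X) w = 0 :=
  ⟨E.starProjection.toLinearMap, fun X => E.starProjection_apply_mem X,
    fun X w hw => Submodule.starProjection_inner_eq_zero X w hw⟩

section
variable {ι : Type*} [Fintype ι] [DecidableEq ι] {G : Type*} [Group G]

/-- The orthogonal projection onto a space of matrices for the inner product `tr (Aᴴ B)`. It is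
stated without norms, as the norm of this inner product is not the ambient one on matrices. -/
theorem exists_trace_projection (E : Submodule ℂ (Matrix ι ι ℂ)) :
    ∃ p : Matrix ι ι ℂ →ₗ[ℂ] Matrix ι ι ℂ, (∀ X, p X ∈ E) ∧
      ∀ X, ∀ w ∈ E, ((X - p X)ᴴ * w).trace = 0 := by
  obtain ⟨p, hp, h⟩ := @exists_linear_orthogonal_projection (Matrix ι ι ℂ)
    (Matrix.toMatrixNormedAddCommGroup (1 : Matrix ι ι ℂ) Matrix.PosDef.one)
    (Matrix.toMatrixInnerProductSpace (1 : Matrix ι ι ℂ) Matrix.PosSemidef.one)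
    (inferInstanceAs (FiniteDimensional ℂ (Matrix ι ι ℂ))) E
  refine ⟨p, hp, fun X w hw => ?_⟩
  have h1 : (w * 1 * (X - p X)ᴴ).trace = 0 := h X w hw
  rwa [mul_one, Matrix.trace_mul_comm] at h1

/-- The orthogonal projection onto `E` for `tr (Aᴴ B)` commutes with left multiplication by every
`u` such that both `u` and `uᴴ` preserve `E`. -/
theorem exists_equivariant_projection (E : Submodule ℂ (Matrix ι ι ℂ)) :
    ∃ p : Matrix ι ι ℂ →ₗ[ℂ] Matrix ι ι ℂ, (∀ X, p X ∈ E) ∧ (∀ X ∈ E, p X = X) ∧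
      ∀ u : Matrix ι ι ℂ, (∀ X ∈ E, u * X ∈ E) → (∀ X ∈ E, uᴴ * X ∈ E) →
        ∀ X, p (u * X) = u * p X := by
  obtain ⟨p, hp, h⟩ := exists_trace_projection E
  have key : ∀ X Y, Y ∈ E → (∀ w ∈ E, ((X - Y)ᴴ * w).trace = 0) → p X = Y := by
    intro X Y hY hXY
    have hE : p X - Y ∈ E := E.sub_mem (hp X) hY
    have h1 := h X _ hE
    have h2 := hXY _ hE
    rw [← sub_eq_zero, ← Matrix.trace_conjTranspose_mul_self_eq_zero_iff]
    have : p X - Y = (X - Y) - (X - p X) := by abel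
    nth_rewrite 1 [this]
    rw [Matrix.conjTranspose_sub (X - Y), sub_mul, Matrix.trace_sub, h1, h2, sub_zero]
  refine ⟨p, hp, fun X hX => key X X hX (by simp), fun u hu hu' X => ?_⟩
  refine key _ _ (hu _ (hp X)) fun w hw => ?_
  rw [← mul_sub, Matrix.conjTranspose_mul, Matrix.mul_assoc]
  exact h X _ (hu' w hw)

/-- If the subrepresentations cut out by the invariant orthogonal projections `P` of `σ` and `Q` of
`τ` have the same character and `P ≠ 0`, there is a nonzero intertwiner between them. -/
theorem exists_nonzero_intertwiner (σ τ : G →* Matrix.unitaryGroup ι ℂ) (P Q : Matrix ι ι ℂ)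
    (hPs : Pᴴ = P) (hP : P * P = P) (hQs : Qᴴ = Q) (hQ : Q * Q = Q)
    (hPσ : ∀ g, P * (σ g : Matrix ι ι ℂ) = σ g * P)
    (hQτ : ∀ g, Q * (τ g : Matrix ι ι ℂ) = τ g * Q)
    (htr : ∀ g, ((σ g : Matrix ι ι ℂ) * P).trace = ((τ g : Matrix ι ι ℂ) * Q).trace)
    (hP0 : P ≠ 0) :
    ∃ X : Matrix ι ι ℂ, X ≠ 0 ∧ (∀ g, X * (σ g : Matrix ι ι ℂ) = τ g * X) ∧
      Q * X = X ∧ X * P = X := by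
  have hQ0 : Q ≠ 0 := by
    rintro rfl
    apply hP0
    rw [← Matrix.trace_conjTranspose_mul_self_eq_zero_iff, hPs, hP]
    simpa using htr 1
  let a := Finsupp.linearCombination ℂ (fun g => (σ g : Matrix ι ι ℂ) * P)
  let b := Finsupp.linearCombination ℂ (fun g => (τ g : Matrix ι ι ℂ) * Q)
  -- the inner products `tr ((υ g R)ᴴ (υ h R))` depend only on the character of `υ` on the range of `R`
  have gram : ∀ (υ : G →* Matrix.unitaryGroup ι ℂ) (R : Matrix ι ι ℂ), Rᴴ = R → R * R = R →
      (∀ g, R * (υ g : Matrix ι ι ℂ) = υ g * R) → ∀ g h : G,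
      (((υ g : Matrix ι ι ℂ) * R)ᴴ * ((υ h : Matrix ι ι ℂ) * R)).trace =
        ((υ (g⁻¹ * h) : Matrix ι ι ℂ) * R).trace := by
    intro υ R hRs hR hRυ g h
    have : (υ (g⁻¹ * h) : Matrix ι ι ℂ) = (υ g : Matrix ι ι ℂ)ᴴ * υ h := by
      rw [map_mul, map_inv]; rfl
    rw [this, Matrix.conjTranspose_mul, hRs, Matrix.mul_assoc, Matrix.trace_mul_comm,
      Matrix.mul_assoc, Matrix.mul_assoc, hR, Matrix.mul_assoc]
  have hker : LinearMap.ker a ≤ LinearMap.ker b := by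
    intro f hf
    rw [LinearMap.mem_ker] at hf ⊢
    rw [← Matrix.trace_conjTranspose_mul_self_eq_zero_iff] at hf ⊢
    rw [← hf]
    simp only [a, b, Finsupp.linearCombination_apply, Finsupp.sum, Matrix.conjTranspose_sum,
      Finset.sum_mul, Finset.mul_sum, Matrix.trace_sum, Matrix.conjTranspose_smul,
      Matrix.smul_mul, Matrix.mul_smul, Matrix.trace_smul, gram σ P hPs hP hPσ,
      gram τ Q hQs hQ hQτ, htr]
  obtain ⟨φ, hφ⟩ : ∃ φ : Matrix ι ι ℂ →ₗ[ℂ] Matrix ι ι ℂ, ∀ f, φ (a f) = b f := by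
    obtain ⟨φ, hφ⟩ := LinearMap.exists_extend
      ((LinearMap.ker a).liftQ b hker ∘ₗ a.quotKerEquivRange.symm.toLinearMap)
    refine ⟨φ, fun f => ?_⟩
    have h1 := LinearMap.congr_fun hφ ⟨a f, LinearMap.mem_range_self a f⟩
    simpa [LinearMap.quotKerEquivRange_symm_apply_image] using h1
  obtain ⟨p, hpE, hpid, hpeq⟩ := exists_equivariant_projection (LinearMap.range a)
  -- `f.mapDomain (g * ·)` is left translation by `g` on the group algebra
  have tr : ∀ (υ : G →* Matrix.unitaryGroup ι ℂ) (R : Matrix ι ι ℂ) (g : G) (f : G →₀ ℂ),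
      Finsupp.linearCombination ℂ (fun h => (υ h : Matrix ι ι ℂ) * R) (f.mapDomain (g * ·)) =
        υ g * Finsupp.linearCombination ℂ (fun h => (υ h : Matrix ι ι ℂ) * R) f := by
    intro υ R g f
    rw [Finsupp.linearCombination_mapDomain]
    simp [Finsupp.linearCombination_apply, Finsupp.sum, Finset.mul_sum, Matrix.mul_assoc]
  have hinv : ∀ g, ∀ X ∈ LinearMap.range a, (σ g : Matrix ι ι ℂ) * X ∈ LinearMap.range a := by
    rintro g _ ⟨f, rfl⟩
    exact ⟨_, tr σ P g f⟩
  have hΦ : ∀ g X, φ (p ((σ g : Matrix ι ι ℂ) * X)) = τ g * φ (p X) := by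
    intro g X
    rw [hpeq _ (hinv g)]
    · obtain ⟨f, hf⟩ := hpE X
      rw [← hf, ← tr σ P g f, hφ, hφ, tr τ Q g f]
    · have : (σ g : Matrix ι ι ℂ)ᴴ = σ g⁻¹ := by rw [map_inv]; rfl
      rw [this]
      exact hinv _
  have hPa : P = a (Finsupp.single 1 1) := by simp [a]
  have hQb : Q = b (Finsupp.single 1 1) := by simp [b]
  have hΦP : φ (p P) = Q := by
    rw [hpid P ⟨_, hPa.symm⟩, hPa, hφ, ← hQb]
  by_contra! hno
  apply hQ0
  -- `X j k` is the matrix of `v ↦ Q Φ(P v eⱼᵀ) eₖ`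
  let X : ι → ι → Matrix ι ι ℂ := fun j k => LinearMap.toMatrix'
    { toFun := fun v => Q *ᵥ (fun i => φ (p (Matrix.vecMulVec (P *ᵥ v) (Pi.single j 1))) i k)
      map_add' := fun v w => by
        rw [← Matrix.mulVec_add, Matrix.mulVec_add, Matrix.add_vecMulVec, map_add, map_add]; rfl
      map_smul' := fun c v => by
        rw [Matrix.mulVec_smul, Matrix.smul_vecMulVec, map_smul, map_smul, RingHom.id_apply,
          ← Matrix.mulVec_smul]; rfl }
  have hX : ∀ j k v, X j k *ᵥ v =
      Q *ᵥ (fun i => φ (p (Matrix.vecMulVec (P *ᵥ v) (Pi.single j 1))) i k) := fun j k v => by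
    simp only [X, LinearMap.toMatrix'_mulVec]; rfl
  have hX0 : ∀ j k, X j k = 0 := by
    intro j k
    by_contra h0
    refine hno (X j k) h0 (fun g => ?_) ?_ ?_
    · refine Matrix.ext_of_mulVec_single fun i => ?_
      rw [← Matrix.mulVec_mulVec, ← Matrix.mulVec_mulVec, hX, hX, Matrix.mulVec_mulVec, hPσ,
        ← Matrix.mulVec_mulVec, ← Matrix.mul_vecMulVec, hΦ, Matrix.mulVec_mulVec, ← hQτ,
        ← Matrix.mulVec_mulVec]
      rfl
    · refine Matrix.ext_of_mulVec_single fun i => ?_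
      rw [← Matrix.mulVec_mulVec, hX, Matrix.mulVec_mulVec, hQ]
    · refine Matrix.ext_of_mulVec_single fun i => ?_
      rw [← Matrix.mulVec_mulVec, hX, hX, Matrix.mulVec_mulVec, hP]
  have hPsum : P = ∑ j, Matrix.vecMulVec (P *ᵥ Pi.single j 1) (Pi.single j 1) := by
    ext i l
    simp [Matrix.sum_apply, Matrix.vecMulVec_apply, Pi.single_apply]
  rw [← hQ]
  nth_rewrite 2 [← hΦP]
  rw [hPsum, map_sum, map_sum, Matrix.mul_sum]
  refine Finset.sum_eq_zero fun j _ => ?_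
  ext i k
  have h1 := congrFun (hX j k (Pi.single j 1)) i
  rw [hX0, Matrix.zero_mulVec] at h1
  exact h1.symm

/-- The partial isometry of the polar decomposition of `X`, written `X * C` with `C` the
pseudo-inverse square root of `Xᴴ X`; as a function of `Xᴴ X`, the matrix `C` commutes with
everything that `Xᴴ X` commutes with. -/
theorem exists_partial_isometry (X : Matrix ι ι ℂ) :
    ∃ C : Matrix ι ι ℂ, (∀ u, Commute (Xᴴ * X) u → Commute C u) ∧
      X * C * (X * C)ᴴ * (X * C) = X * C ∧ (X * C = 0 → X = 0) := by
  -- `f 0 = 0` by the convention for inverses, so `f` gives the pseudo-inverse on the kernel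
  let f : ℝ → ℝ := fun x => (√x)⁻¹
  have hsa : IsSelfAdjoint (Xᴴ * X) := Matrix.isHermitian_conjTranspose_mul_self X
  have hc : ∀ g : ℝ → ℝ, ContinuousOn g (spectrum ℝ (Xᴴ * X)) := fun g =>
    Matrix.finite_real_spectrum.continuousOn g
  have hnn : ∀ x ∈ spectrum ℝ (Xᴴ * X), 0 ≤ x := by
    intro x hx
    have hpos := Matrix.posSemidef_conjTranspose_mul_self X
    rw [hpos.isHermitian.spectrum_real_eq_range_eigenvalues] at hx
    obtain ⟨i, rfl⟩ := hx
    exact hpos.eigenvalues_nonneg i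
  have hCs : (cfc f (Xᴴ * X))ᴴ = cfc f (Xᴴ * X) := cfc_predicate f (Xᴴ * X)
  have hid : cfc (fun x : ℝ => x) (Xᴴ * X) = Xᴴ * X := cfc_id' ℝ (Xᴴ * X)
  refine ⟨cfc f (Xᴴ * X), fun u hu => hu.cfc_real f, ?_, fun h0 => ?_⟩
  · have h1 : cfc f (Xᴴ * X) * (cfc f (Xᴴ * X) * (Xᴴ * X) * cfc f (Xᴴ * X)) =
        cfc f (Xᴴ * X) := by
      nth_rewrite 3 [← hid]
      rw [← cfc_mul _ _ _ (hc _) (hc _), ← cfc_mul _ _ _ (hc _) (hc _),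
        ← cfc_mul _ _ _ (hc _) (hc _)]
      refine cfc_congr fun x hx => ?_
      have hx0 := hnn x hx
      rcases hx0.eq_or_lt with rfl | hpos
      · simp [f]
      · have h2 := Real.sqrt_pos.2 hpos
        have h3 := Real.sq_sqrt hx0
        simp only [f]
        field_simp
        exact h3.symm
    conv_rhs => rw [← h1]
    rw [Matrix.conjTranspose_mul, hCs]
    simp only [Matrix.mul_assoc]
  · have h1 : cfc f (Xᴴ * X) * cfc Real.sqrt (Xᴴ * X) * cfc (fun x : ℝ => x) (Xᴴ * X) =
        cfc (fun x : ℝ => x) (Xᴴ * X) := by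
      rw [← cfc_mul _ _ _ (hc _) (hc _), ← cfc_mul _ _ _ (hc _) (hc _)]
      refine cfc_congr fun x hx => ?_
      have hx0 := hnn x hx
      rcases hx0.eq_or_lt with rfl | hpos
      · simp
      · have h2 := Real.sqrt_pos.2 hpos
        simp only [f]
        field_simp
    rw [hid] at h1
    have h2 : X * (Xᴴ * X) = 0 := by
      rw [← h1, Matrix.mul_assoc (cfc f _), ← Matrix.mul_assoc X, h0, zero_mul]
    rw [← Matrix.conjTranspose_mul_self_eq_zero,
      ← Matrix.conjTranspose_mul_self_eq_zero]
    rw [Matrix.conjTranspose_mul, Matrix.conjTranspose_conjTranspose, Matrix.mul_assoc, h2, mul_zero]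

/-- Two unitary representations of the same dimension with equal characters are unitarily
equivalent; the group is arbitrary and carries no topology. -/
theorem exists_unitary_intertwiner (σ τ : G →* Matrix.unitaryGroup ι ℂ)
    (htr : ∀ g, (σ g : Matrix ι ι ℂ).trace = (τ g : Matrix ι ι ℂ).trace) :
    ∃ T : Matrix.unitaryGroup ι ℂ, ∀ g, T * σ g = τ g * T := by
  let S : Set (Matrix ι ι ℂ) := {T | T * Tᴴ * T = T ∧ ∀ g, T * (σ g : Matrix ι ι ℂ) = τ g * T}
  have hS : S.Nonempty := ⟨0, by simp [S]⟩
  obtain ⟨_, ⟨T, ⟨hT, hTi⟩, rfl⟩, hmax⟩ := WellFounded.has_min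
    (wellFounded_gt (α := Submodule ℂ (ι → ℂ)))
    ((fun T : Matrix ι ι ℂ => LinearMap.range T.mulVecLin) '' S) (hS.image _)
  have star_coe : ∀ (υ : G →* Matrix.unitaryGroup ι ℂ) (g : G),
      (υ g : Matrix ι ι ℂ)ᴴ = υ g⁻¹ := by
    intro υ g; rw [map_inv]; rfl
  have adj : ∀ Y : Matrix ι ι ℂ, (∀ g, Y * (σ g : Matrix ι ι ℂ) = τ g * Y) →
      ∀ g, Yᴴ * (τ g : Matrix ι ι ℂ) = σ g * Yᴴ := by
    intro Y hY g
    have h1 := congrArg Matrix.conjTranspose (hY g⁻¹)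
    rw [Matrix.conjTranspose_mul, Matrix.conjTranspose_mul, star_coe, star_coe, inv_inv] at h1
    exact h1.symm
  have hTi' := adj T hTi
  have hT' : Tᴴ * T * Tᴴ = Tᴴ := by
    have h1 := congrArg Matrix.conjTranspose hT
    rwa [Matrix.conjTranspose_mul, Matrix.conjTranspose_mul, Matrix.conjTranspose_conjTranspose,
      ← Matrix.mul_assoc] at h1
  have hPc : ∀ g, Tᴴ * T * (σ g : Matrix ι ι ℂ) = σ g * (Tᴴ * T) := fun g => by
    rw [Matrix.mul_assoc, hTi, ← Matrix.mul_assoc, hTi', Matrix.mul_assoc]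
  have hQc : ∀ g, T * Tᴴ * (τ g : Matrix ι ι ℂ) = τ g * (T * Tᴴ) := fun g => by
    rw [Matrix.mul_assoc, hTi', ← Matrix.mul_assoc, hTi, Matrix.mul_assoc]
  have hone : 1 - Tᴴ * T = 0 := by
    by_contra hne
    obtain ⟨X, hX0, hXi, hQX, hXP⟩ := exists_nonzero_intertwiner σ τ (1 - Tᴴ * T) (1 - T * Tᴴ)
      (by simp) (by
        have : Tᴴ * T * (Tᴴ * T) = Tᴴ * T := by rw [← Matrix.mul_assoc, hT']
        simp [mul_sub, sub_mul, this])
      (by simp) (by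
        have : T * Tᴴ * (T * Tᴴ) = T * Tᴴ := by rw [← Matrix.mul_assoc, hT]
        simp [mul_sub, sub_mul, this])
      (fun g => by rw [sub_mul, mul_sub, hPc]; simp)
      (fun g => by rw [sub_mul, mul_sub, hQc]; simp)
      (fun g => by
        rw [mul_sub, mul_sub, Matrix.trace_sub, Matrix.trace_sub, mul_one, mul_one, htr g,
          ← Matrix.mul_assoc, ← hTi', Matrix.mul_assoc, Matrix.trace_mul_comm, Matrix.mul_assoc])
      hne
    have hTX : Tᴴ * X = 0 := by
      rw [← hQX, ← Matrix.mul_assoc, mul_sub, ← Matrix.mul_assoc, hT']; simp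
    have hXT : X * Tᴴ = 0 := by
      rw [← hXP, Matrix.mul_assoc, sub_mul, hT']; simp
    obtain ⟨C, hC, hpi, hC0⟩ := exists_partial_isometry X
    have hCP : Commute C (Tᴴ * T) := hC _ (by
      have h1 : X * (Tᴴ * T) = 0 := by rw [← Matrix.mul_assoc, hXT, zero_mul]
      have h2 : Tᴴ * T * Xᴴ = 0 := by simpa using congrArg Matrix.conjTranspose h1
      rw [commute_iff_eq, Matrix.mul_assoc, h1, ← Matrix.mul_assoc, h2]; simp)
    have hCσ : ∀ g, Commute C (σ g : Matrix ι ι ℂ) := fun g => hC _ (by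
      rw [commute_iff_eq, Matrix.mul_assoc, hXi, ← Matrix.mul_assoc, adj X hXi, Matrix.mul_assoc])
    set Y := X * C with hY
    have hTY : Tᴴ * Y = 0 := by rw [hY, ← Matrix.mul_assoc, hTX, zero_mul]
    have hYT : Y * Tᴴ = 0 := by
      rw [← hT', ← Matrix.mul_assoc, hY, Matrix.mul_assoc X, hCP.eq, ← Matrix.mul_assoc,
        ← Matrix.mul_assoc, hXT]; simp
    have hYT' : T * Yᴴ = 0 := by simpa using congrArg Matrix.conjTranspose hYT
    have hTY' : Yᴴ * T = 0 := by simpa using congrArg Matrix.conjTranspose hTY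
    have hmem : T + Y ∈ S := by
      refine ⟨?_, fun g => ?_⟩
      · rw [Matrix.conjTranspose_add]
        simp only [add_mul, mul_add, hT, hpi, hYT, hYT', add_zero, zero_add]
        simp only [Matrix.mul_assoc, hTY, hTY', mul_zero, add_zero, zero_add]
      · rw [add_mul, mul_add, hTi, hY, Matrix.mul_assoc, (hCσ g).eq, ← Matrix.mul_assoc, hXi,
          Matrix.mul_assoc]
    have hle : LinearMap.range T.mulVecLin ≤ LinearMap.range (T + Y).mulVecLin := by
      have h1 : T = (T + Y) * (Tᴴ * T) := by
        rw [add_mul, ← Matrix.mul_assoc, hT, ← Matrix.mul_assoc, hYT]; simp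
      conv_lhs => rw [h1, Matrix.mulVecLin_mul]
      exact LinearMap.range_comp_le_range _ _
    have heq : LinearMap.range T.mulVecLin = LinearMap.range (T + Y).mulVecLin := by
      by_contra hne
      exact hmax _ ⟨_, hmem, rfl⟩ (lt_of_le_of_ne hle hne)
    apply hX0
    apply hC0
    -- the range of `Y` lies in that of `T`, while `T Tᴴ` fixes the latter and kills the former
    refine Matrix.ext_of_mulVec_single fun i => ?_
    have h1 : (T + Y) *ᵥ (Yᴴ *ᵥ (Y *ᵥ Pi.single i 1)) = Y *ᵥ Pi.single i 1 := by
      simp only [Matrix.mulVec_mulVec, add_mul, ← Matrix.mul_assoc, hYT', hpi]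
      simp
    have h2 : Y *ᵥ Pi.single i 1 ∈ LinearMap.range T.mulVecLin := by
      rw [heq]; exact ⟨_, h1⟩
    obtain ⟨w, hw⟩ := h2
    rw [Matrix.mulVecLin_apply] at hw
    rw [Matrix.zero_mulVec, ← hw, ← hT, ← Matrix.mulVec_mulVec, hw, Matrix.mulVec_mulVec,
      Matrix.mul_assoc, hTY, mul_zero, Matrix.zero_mulVec]
  refine ⟨⟨T, Matrix.mem_unitaryGroup_iff'.2 (sub_eq_zero.1 hone).symm⟩, fun g => ?_⟩
  exact Subtype.ext (hTi g)
 
/-- Entrywise complex conjugation as an endomorphism of the unitary group. -/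
def conjU : Matrix.unitaryGroup ι ℂ →* Matrix.unitaryGroup ι ℂ where
  toFun k := ⟨(k : Matrix ι ι ℂ).map (starRingEnd ℂ), by
    rw [Matrix.mem_unitaryGroup_iff]
    have h : (k : Matrix ι ι ℂ) * star (k : Matrix ι ι ℂ) = 1 := k.2.2
    have hs : star ((k : Matrix ι ι ℂ).map (starRingEnd ℂ)) =
        (star (k : Matrix ι ι ℂ)).map (starRingEnd ℂ) := by
      ext
      simp [Matrix.star_apply]
    rw [hs, ← Matrix.map_mul, h, Matrix.map_one _ (map_zero _) (map_one _)]⟩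
  map_one' := Subtype.ext (Matrix.map_one _ (map_zero _) (map_one _))
  map_mul' a b := by
    apply Subtype.ext
    exact Matrix.map_mul

theorem trace_conjU (k : Matrix.unitaryGroup ι ℂ) :
    (conjU k : Matrix ι ι ℂ).trace = ((k⁻¹ : Matrix.unitaryGroup ι ℂ) : Matrix ι ι ℂ).trace := by
  change ((k : Matrix ι ι ℂ).map (starRingEnd ℂ)).trace = (k : Matrix ι ι ℂ)ᴴ.trace
  simp [Matrix.trace]

/-- `k⁻¹` and `conj k` generate representations of `ℤ` with the same character, hence are conjugate
in the unitary group. -/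
theorem isConj_conjU (k : Matrix.unitaryGroup ι ℂ) : IsConj k⁻¹ (conjU k) := by
  obtain ⟨T, hT⟩ := exists_unitary_intertwiner (zpowersHom _ k⁻¹) (zpowersHom _ (conjU k))
    (fun j => by
      simp only [zpowersHom_apply]
      rw [← map_zpow, trace_conjU, inv_zpow])
  rw [isConj_iff]
  refine ⟨T, ?_⟩
  have h := hT (Multiplicative.ofAdd 1)
  simp only [zpowersHom_apply, toAdd_ofAdd, zpow_one] at h
  rw [h, mul_inv_cancel_right]
end

/-- Let `n, m ≥ 1` and let `ρ : U(n) →* U(m)` be a continuous group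
homomorphism between unitary groups.  Then there is `S ∈ GLₘ(ℂ)` such that for
all `k ∈ U(n)`, `S · ρ(conj k) · S⁻¹ = conj (ρ k)`, where `conj` denotes
entrywise complex conjugation of matrices. -/
theorem stmt_7 (n m : ℕ) (hn : 1 ≤ n) (hm : 1 ≤ m)
    (ρ : Matrix.unitaryGroup (Fin n) ℂ →* Matrix.unitaryGroup (Fin m) ℂ)
    (hρ : Continuous ρ) :
    ∃ S : Matrix.GeneralLinearGroup (Fin m) ℂ,
      ∀ k k' : Matrix.unitaryGroup (Fin n) ℂ,
        (k' : Matrix (Fin n) (Fin n) ℂ) =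
          (k : Matrix (Fin n) (Fin n) ℂ).map (starRingEnd ℂ) →
        (S : Matrix (Fin m) (Fin m) ℂ) * (ρ k' : Matrix (Fin m) (Fin m) ℂ) *
            ((S⁻¹ : Matrix.GeneralLinearGroup (Fin m) ℂ) : Matrix (Fin m) (Fin m) ℂ) =
          (ρ k : Matrix (Fin m) (Fin m) ℂ).map (starRingEnd ℂ) := by
  obtain ⟨T, hT⟩ := exists_unitary_intertwiner (ρ.comp conjU) (conjU.comp ρ) (fun k => by
    obtain ⟨w, hw⟩ := isConj_iff.1 (isConj_conjU k)
    rw [MonoidHom.comp_apply, MonoidHom.comp_apply, trace_conjU, ← map_inv, ← hw, map_mul, map_mul,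
      map_inv ρ w]
    change ((ρ w : Matrix (Fin m) (Fin m) ℂ) * (ρ k⁻¹ : Matrix (Fin m) (Fin m) ℂ) *
      ((ρ w)⁻¹ : Matrix.unitaryGroup (Fin m) ℂ)).trace = _
    rw [Matrix.trace_mul_comm, ← Matrix.mul_assoc]
    change ((((ρ w)⁻¹ * ρ w : Matrix.unitaryGroup (Fin m) ℂ) : Matrix (Fin m) (Fin m) ℂ) *
      (ρ k⁻¹ : Matrix (Fin m) (Fin m) ℂ)).trace = _
    rw [inv_mul_cancel]
    simp)
  refine ⟨Unitary.toUnits T, fun k k' hk => ?_⟩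
  obtain rfl : k' = conjU k := Subtype.ext hk
  have h : T * ρ (conjU k) * T⁻¹ = conjU (ρ k) := by
    rw [mul_inv_eq_iff_eq_mul]
    exact hT k
  have h' := congrArg (fun u : Matrix.unitaryGroup (Fin m) ℂ => (u : Matrix (Fin m) (Fin m) ℂ)) h
  rw [← map_inv]
  exact h'
end

section
/- Every unitary matrix is conjugate to its transpose within the unitary group: for every A ∈ U(n) there exists U ∈ U(n) with U · A · U⁻¹ = Aᵀ. Consequently, for every continuous group homomorphism ρ : U(n) → GL_m(ℂ), the character of ρ satisfies trace ρ(Aᵀ) = trace ρ(A) for all A ∈ U(n). -/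
/-!
A unitary matrix is unitarily diagonalizable: `A = V D V⁻¹` with `V` unitary and `D` diagonal.
Transposing gives `Aᵀ = (V⁻¹)ᵀ D Vᵀ`, so `U = (V⁻¹)ᵀ V⁻¹`, which is unitary, satisfies
`U A U⁻¹ = Aᵀ`. The statement on characters follows because the trace is a class function.

The diagonalization is deduced from the spectral theorem for Hermitian matrices through the Cayley
transform. Choose `z` on the unit circle outside the finite spectrum of `A`; then
`H = i (z + A) (z - A)⁻¹` is Hermitian (`exists_cayley`). In an orthonormal eigenbasis of `H`, the
relation `H (z - A) = i (z + A)` reads off the diagonal as `(d j + i) A' j k = 0`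
with `d j` real, so `A'` is diagonal (`exists_unitary_diagonalization`).
-/

open scoped Matrix

lemma exists_norm_one_notMem_spectrum {n : ℕ} (A : Matrix (Fin n) (Fin n) ℂ) :
    ∃ z : ℂ, star z * z = 1 ∧ z ∉ spectrum ℂ A := by
  have hinf : (Metric.sphere (0 : ℂ) 1).Infinite := by
    have hp : IsPreconnected (Metric.sphere (0 : ℂ) 1) :=
      isPreconnected_sphere (by simp) 0 1
    refine hp.infinite_of_nontrivial ⟨1, by simp, -1, by simp, ?_⟩
    norm_num [Complex.ext_iff]
  obtain ⟨z, hz, hzA⟩ := (hinf.sdiff A.finite_spectrum).nonempty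
  refine ⟨z, ?_, hzA⟩
  have h1 : ‖z‖ = 1 := by simpa using hz
  have h2 := Complex.conj_mul' z
  rw [h1] at h2
  simpa using h2

/-- The Cayley transform `H = i (z + A) (z - A)⁻¹` of a unitary matrix, for a suitable `z` on the
unit circle, is Hermitian. -/
lemma exists_cayley {n : ℕ} (A : Matrix.unitaryGroup (Fin n) ℂ) :
    ∃ (z : ℂ) (H : Matrix (Fin n) (Fin n) ℂ), H.IsHermitian ∧
      H * (z • 1 - (A : Matrix (Fin n) (Fin n) ℂ)) =
        Complex.I • (z • 1 + (A : Matrix (Fin n) (Fin n) ℂ)) := by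
  obtain ⟨z, hz, hzA⟩ := exists_norm_one_notMem_spectrum (A : Matrix (Fin n) (Fin n) ℂ)
  have hA : (A : Matrix (Fin n) (Fin n) ℂ)ᴴ * (A : Matrix (Fin n) (Fin n) ℂ) = 1 :=
    Matrix.mem_unitaryGroup_iff'.mp A.2
  generalize (A : Matrix (Fin n) (Fin n) ℂ) = M at *
  have hB : IsUnit (z • 1 - M) := by
    have := spectrum.notMem_iff.mp hzA
    rwa [Algebra.algebraMap_eq_smul_one] at this
  have hdet := (Matrix.isUnit_iff_isUnit_det _).mp hB
  set H := Complex.I • (z • 1 + M) * (z • 1 - M)⁻¹ with hH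
  have hHB : H * (z • 1 - M) = Complex.I • (z • 1 + M) := by
    rw [hH, Matrix.nonsing_inv_mul_cancel_right _ _ hdet]
  refine ⟨z, H, ?_, hHB⟩
  -- Hermitian symmetry is checked on `(z - M)ᴴ H (z - M)`, since `z - M` is invertible.
  have hHB' : (z • 1 - M)ᴴ * Hᴴ = (Complex.I • (z • 1 + M))ᴴ := by
    rw [← Matrix.conjTranspose_mul, hHB]
  have hBs : IsUnit (z • 1 - M)ᴴ := hB.star
  apply hBs.mul_left_cancel
  apply hB.mul_right_cancel
  rw [hHB', mul_assoc, hHB]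
  simp only [Matrix.conjTranspose_smul, Matrix.conjTranspose_add, Matrix.conjTranspose_sub,
    Matrix.conjTranspose_one, add_mul, sub_mul, mul_add, mul_sub, smul_mul_assoc, mul_smul_comm,
    one_mul, mul_one, hA, smul_add, smul_sub, smul_smul]
  simp only [Complex.star_def, map_mul, Complex.conj_I] at hz ⊢
  match_scalars
  · linear_combination (-2 * Complex.I) * hz
  all_goals ring

lemma exists_unitary_diagonalization {n : ℕ} (A : Matrix.unitaryGroup (Fin n) ℂ) :
    ∃ (V : Matrix.unitaryGroup (Fin n) ℂ) (d : Fin n → ℂ),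
      (A : Matrix (Fin n) (Fin n) ℂ) =
        (V : Matrix (Fin n) (Fin n) ℂ) * Matrix.diagonal d *
          star (V : Matrix (Fin n) (Fin n) ℂ) := by
  obtain ⟨z, H, hH, h⟩ := exists_cayley A
  generalize (A : Matrix (Fin n) (Fin n) ℂ) = M at *
  have hs := hH.spectral_theorem
  rw [Unitary.conjStarAlgAut_apply] at hs
  generalize hH.eigenvectorUnitary = V at hs
  have hV : star (V : Matrix (Fin n) (Fin n) ℂ) * (V : Matrix (Fin n) (Fin n) ℂ) = 1 :=
    Matrix.mem_unitaryGroup_iff'.mp V.2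
  have hV' : (V : Matrix (Fin n) (Fin n) ℂ) * star (V : Matrix (Fin n) (Fin n) ℂ) = 1 :=
    Matrix.mem_unitaryGroup_iff.mp V.2
  set N := star (V : Matrix (Fin n) (Fin n) ℂ) * M * (V : Matrix (Fin n) (Fin n) ℂ) with hN
  have hM : M = (V : Matrix (Fin n) (Fin n) ℂ) * N * star (V : Matrix (Fin n) (Fin n) ℂ) := by
    rw [hN]
    calc M = 1 * M * 1 := by simp
      _ = _ := by rw [← hV']; noncomm_ring
  have hD : Matrix.diagonal (RCLike.ofReal ∘ hH.eigenvalues) * (z • 1 - N) =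
      Complex.I • (z • 1 + N) := by
    have h1 := congrArg (fun X => star (V : Matrix (Fin n) (Fin n) ℂ) * X *
      (V : Matrix (Fin n) (Fin n) ℂ)) h
    have hz1 : (z • 1 : Matrix (Fin n) (Fin n) ℂ) = (V : Matrix (Fin n) (Fin n) ℂ) * (z • 1) *
        star (V : Matrix (Fin n) (Fin n) ℂ) := by
      simp [hV']
    have key : ∀ X : Matrix (Fin n) (Fin n) ℂ, star (V : Matrix (Fin n) (Fin n) ℂ) *
        ((V : Matrix (Fin n) (Fin n) ℂ) * X * star (V : Matrix (Fin n) (Fin n) ℂ)) *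
        (V : Matrix (Fin n) (Fin n) ℂ) = X := by
      intro X
      calc _ = (star (V : Matrix (Fin n) (Fin n) ℂ) * (V : Matrix (Fin n) (Fin n) ℂ)) * X *
            (star (V : Matrix (Fin n) (Fin n) ℂ) * (V : Matrix (Fin n) (Fin n) ℂ)) := by
              noncomm_ring
        _ = X := by simp [hV]
    have hl : ∀ D X : Matrix (Fin n) (Fin n) ℂ,
        ((V : Matrix (Fin n) (Fin n) ℂ) * D * star (V : Matrix (Fin n) (Fin n) ℂ)) *
        ((V : Matrix (Fin n) (Fin n) ℂ) * X * star (V : Matrix (Fin n) (Fin n) ℂ)) =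
        (V : Matrix (Fin n) (Fin n) ℂ) * (D * X) * star (V : Matrix (Fin n) (Fin n) ℂ) := by
      intro D X
      calc _ = (V : Matrix (Fin n) (Fin n) ℂ) * D *
            (star (V : Matrix (Fin n) (Fin n) ℂ) * (V : Matrix (Fin n) (Fin n) ℂ)) * X *
            star (V : Matrix (Fin n) (Fin n) ℂ) := by noncomm_ring
        _ = _ := by rw [hV]; noncomm_ring
    rw [hz1, hM, hs, ← sub_mul, ← mul_sub, ← add_mul, ← mul_add, hl] at h1
    simpa only [mul_smul_comm, smul_mul_assoc, key] using h1
  refine ⟨V, N.diag, ?_⟩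
  have hdiag : Matrix.diagonal N.diag = N := by
    ext j k
    by_cases hjk : j = k
    · subst hjk; simp
    · have h2 := congrFun (congrFun hD j) k
      simp only [Matrix.diagonal_mul, Matrix.sub_apply, Matrix.smul_apply, Matrix.add_apply,
        Matrix.one_apply_ne hjk, smul_eq_mul, mul_zero, zero_sub, zero_add,
        Function.comp_apply] at h2
      rw [Matrix.diagonal_apply_ne _ hjk]
      have h3 : ((hH.eigenvalues j : ℂ) + Complex.I) * N j k = 0 := by
        have h4 : (hH.eigenvalues j : ℂ) * -N j k = Complex.I * N j k := h2
        linear_combination -h4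
      rcases mul_eq_zero.mp h3 with h5 | h5
      · have := congrArg Complex.im h5
        simp at this
      · exact h5.symm
  rw [hdiag]
  exact hM

lemma exists_unitary_conj_eq_transpose {n : ℕ} (A : Matrix.unitaryGroup (Fin n) ℂ) :
    ∃ U : Matrix.unitaryGroup (Fin n) ℂ, U * A * U⁻¹ = Matrix.UnitaryGroup.transpose A := by
  obtain ⟨V, d, hA⟩ := exists_unitary_diagonalization A
  refine ⟨Matrix.UnitaryGroup.transpose V⁻¹ * V⁻¹, ?_⟩
  rw [mul_inv_eq_iff_eq_mul]
  apply Subtype.ext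
  have hV : star (V : Matrix (Fin n) (Fin n) ℂ) * (V : Matrix (Fin n) (Fin n) ℂ) = 1 :=
    Matrix.mem_unitaryGroup_iff'.mp V.2
  have hVt : (V : Matrix (Fin n) (Fin n) ℂ)ᵀ * (star (V : Matrix (Fin n) (Fin n) ℂ))ᵀ = 1 := by
    rw [← Matrix.transpose_mul, hV, Matrix.transpose_one]
  simp only [Matrix.UnitaryGroup.mul_val, Matrix.UnitaryGroup.inv_val,
    Matrix.UnitaryGroup.transpose_coe, hA, Matrix.transpose_mul, Matrix.diagonal_transpose]
  generalize (V : Matrix (Fin n) (Fin n) ℂ) = W at *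
  calc (star W)ᵀ * star W * (W * Matrix.diagonal d * star W)
      = (star W)ᵀ * (star W * W) * Matrix.diagonal d * star W := by noncomm_ring
    _ = (star W)ᵀ * Matrix.diagonal d * (Wᵀ * (star W)ᵀ) * star W := by rw [hV, hVt]; simp
    _ = _ := by noncomm_ring

/-- Every unitary matrix is conjugate to its transpose within the
unitary group: for every `A ∈ U(n)` there is `U ∈ U(n)` with `U·A·U⁻¹ = Aᵀ`.
Consequently, for every continuous group homomorphism `ρ : U(n) → GLₘ(ℂ)` the
character of `ρ` satisfies `trace ρ(Aᵀ) = trace ρ(A)` for all `A ∈ U(n)`. -/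
theorem stmt_8 (n m : ℕ) :
    (∀ A : Matrix.unitaryGroup (Fin n) ℂ, ∃ U : Matrix.unitaryGroup (Fin n) ℂ,
      (U : Matrix (Fin n) (Fin n) ℂ) * (A : Matrix (Fin n) (Fin n) ℂ) *
          ((U⁻¹ : Matrix.unitaryGroup (Fin n) ℂ) : Matrix (Fin n) (Fin n) ℂ) =
        (A : Matrix (Fin n) (Fin n) ℂ)ᵀ) ∧
    (∀ ρ : Matrix.unitaryGroup (Fin n) ℂ →* Matrix.GeneralLinearGroup (Fin m) ℂ,
      Continuous ρ →
      ∀ A A' : Matrix.unitaryGroup (Fin n) ℂ,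
        (A' : Matrix (Fin n) (Fin n) ℂ) = (A : Matrix (Fin n) (Fin n) ℂ)ᵀ →
        Matrix.trace (ρ A' : Matrix (Fin m) (Fin m) ℂ) =
          Matrix.trace (ρ A : Matrix (Fin m) (Fin m) ℂ)) := by
  refine ⟨fun A => ?_, fun ρ _ A A' hA' => ?_⟩
  · obtain ⟨U, hU⟩ := exists_unitary_conj_eq_transpose A
    exact ⟨U, congrArg Subtype.val hU⟩
  · obtain ⟨U, hU⟩ := exists_unitary_conj_eq_transpose A
    have hA : A' = U * A * U⁻¹ := by
      rw [hU]
      exact Subtype.ext hA'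
    rw [hA, map_mul, map_mul, map_inv, Units.val_mul, Units.val_mul, Matrix.trace_mul_comm,
      ← mul_assoc, Units.inv_mul, one_mul]
end

section
/- Let G' be a group and G a subgroup of G' of index 2. Let π be a simple module over the monoid algebra ℂ[G] such that every ℂ[G]-module endomorphism of π is multiplication by a scalar. Then the induced module Ind = ℂ[G'] ⊗_{ℂ[G]} π over ℂ[G'] has length at most 2; moreover, if Ind is not simple, then Ind is the internal direct sum of two simple ℂ[G']-submodules that are not isomorphic to each other (in particular Ind is semisimple and multiplicity-free). -/
/-!
Fix an element `s` of `G'` outside `G`. Comparing the universal property of `W` with an explicit matrix model of the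
induced representation on `V × V` gives a decomposition `W = ι V ⊕ s ι V` together with the
`G`-equivariant projection `P : W → V` onto the first summand (`exists_projection`).

Let `U` be an invariant submodule of `W`, neither zero nor everything. Simplicity of `V` applied to
`ι⁻¹ U` and to `P U` shows that `P` restricts to a `G`-isomorphism `U ≃ V` (`trichotomy`). Hence two
comparable submodules of this kind are equal (`eq_of_le`), which bounds the length by 2 and makes
each of them simple.

The involution `D` which is `1` on `ι V` and `-1` on `s ι V` commutes with `G` and anticommutes
with the elements outside `G`. So `D U` is again invariant; it differs from `U`, because `D U = U`
would put `ι P u` in `U` for `u ∈ U`, and therefore `W = U ⊕ D U`. An equivariant isomorphism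
`e : U ≃ D U` would, by the Schur hypothesis on `V`, be a multiple of `D`; it commutes with `s`
while `D` anticommutes with it, so `e = 0`, which is absurd.
-/

universe u v

/-- A submodule is invariant under a representation (given as a homomorphism
into the units of the endomorphism algebra). -/
def IsInvariantSubmodule {Γ : Type v} [Group Γ] {W : Type u} [AddCommGroup W]
    [Module ℂ W] (ρ : Γ →* (W →ₗ[ℂ] W)ˣ) (U : Submodule ℂ W) : Prop :=
  ∀ (γ : Γ) (x : W), x ∈ U → (ρ γ).val x ∈ U

/-- An invariant submodule is simple (irreducible) if it is nonzero and has no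
invariant submodules other than `⊥` and itself. -/
def IsSimpleInvariantSubmodule {Γ : Type v} [Group Γ] {W : Type u} [AddCommGroup W]
    [Module ℂ W] (ρ : Γ →* (W →ₗ[ℂ] W)ˣ) (U : Submodule ℂ W) : Prop :=
  U ≠ ⊥ ∧ ∀ U' : Submodule ℂ W, U' ≤ U → IsInvariantSubmodule ρ U' → U' = ⊥ ∨ U' = U

/-- Two invariant submodules are equivalent if there is a `ℂ`-linear equivalence
between them commuting with the group action. -/
def InvariantSubmoduleEquiv {Γ : Type v} [Group Γ] {W : Type u} [AddCommGroup W]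
    [Module ℂ W] (ρ : Γ →* (W →ₗ[ℂ] W)ˣ) (U₁ U₂ : Submodule ℂ W) : Prop :=
  ∃ e : ↥U₁ ≃ₗ[ℂ] ↥U₂, ∀ (γ : Γ) (x y : ↥U₁),
    (y : W) = (ρ γ).val (x : W) → ((e y : ↥U₂) : W) = (ρ γ).val ((e x : ↥U₂) : W)

namespace IndexTwo

/-! ### A model of the induced representation on `V × V` -/

section Model

variable {G' : Type v} [Group G'] {G : Subgroup G'} {V : Type u} [AddCommGroup V] [Module ℂ V]

open Classical in
/-- The representation `π` of `G`, extended by zero to all of `G'`. -/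
noncomputable def extendZero (π : ↥G →* (V →ₗ[ℂ] V)ˣ) (x : G') : V →ₗ[ℂ] V :=
  if h : x ∈ G then (π ⟨x, h⟩).val else 0

lemma extendZero_of_mem (π : ↥G →* (V →ₗ[ℂ] V)ˣ) {x : G'} (h : x ∈ G) :
    extendZero π x = (π ⟨x, h⟩).val := dif_pos h

lemma extendZero_of_notMem (π : ↥G →* (V →ₗ[ℂ] V)ˣ) {x : G'} (h : x ∉ G) :
    extendZero π x = 0 := dif_neg h

lemma inv_mul_mem_iff (hidx : G.index = 2) {s : G'} (hs : s ∉ G) (x : G') :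
    s⁻¹ * x ∈ G ↔ x ∉ G := by
  rw [Subgroup.mul_mem_iff_of_index_two hidx, inv_mem_iff]
  tauto

lemma mul_mem_iff (hidx : G.index = 2) {s : G'} (hs : s ∉ G) (x : G') :
    x * s ∈ G ↔ x ∉ G := by
  rw [Subgroup.mul_mem_iff_of_index_two hidx]
  tauto

/-- Matrix multiplication rule for the model on `V × V`: exactly one of `y` and `s⁻¹ y` lies in
`G`, so exactly one term on the right can be nonzero. -/
lemma extendZero_mul (hidx : G.index = 2) {s : G'} (hs : s ∉ G) (π : ↥G →* (V →ₗ[ℂ] V)ˣ)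
    (x y : G') (v : V) :
    extendZero π (x * y) v =
      extendZero π x (extendZero π y v) + extendZero π (x * s) (extendZero π (s⁻¹ * y) v) := by
  have key : ∀ a b : G', b ∈ G → extendZero π (a * b) v = extendZero π a (extendZero π b v) := by
    intro a b hb
    by_cases ha : a ∈ G
    · rw [extendZero_of_mem π (mul_mem ha hb), extendZero_of_mem π ha, extendZero_of_mem π hb]
      have : (⟨a * b, mul_mem ha hb⟩ : G) = ⟨a, ha⟩ * ⟨b, hb⟩ := rfl
      rw [this, map_mul]
      rfl
    · have hab : a * b ∉ G := fun h => ha ((Subgroup.mul_mem_cancel_right G hb).1 h)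
      rw [extendZero_of_notMem π hab, extendZero_of_notMem π ha]
      simp
  by_cases hy : y ∈ G
  · have h2 : s⁻¹ * y ∉ G := by rw [inv_mul_mem_iff hidx hs]; tauto
    rw [key x y hy, extendZero_of_notMem π h2]
    simp
  · have h2 : s⁻¹ * y ∈ G := by rwa [inv_mul_mem_iff hidx hs]
    have := key (x * s) (s⁻¹ * y) h2
    rw [show x * s * (s⁻¹ * y) = x * y by group] at this
    rw [this, extendZero_of_notMem π hy]
    simp

/-- The operator by which `γ` acts in the model of the induced representation: the pair `(v, w)`
stands for `v + s w`. -/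
noncomputable def modelOp (π : ↥G →* (V →ₗ[ℂ] V)ˣ) (s γ : G') : V × V →ₗ[ℂ] V × V :=
  ((extendZero π γ).coprod (extendZero π (γ * s))).prod
    ((extendZero π (s⁻¹ * γ)).coprod (extendZero π (s⁻¹ * γ * s)))

lemma modelOp_apply (π : ↥G →* (V →ₗ[ℂ] V)ˣ) (s γ : G') (x : V × V) :
    modelOp π s γ x = (extendZero π γ x.1 + extendZero π (γ * s) x.2,
      extendZero π (s⁻¹ * γ) x.1 + extendZero π (s⁻¹ * γ * s) x.2) := rfl

lemma extendZero_one (π : ↥G →* (V →ₗ[ℂ] V)ˣ) (v : V) : extendZero π 1 v = v := by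
  rw [extendZero_of_mem π (one_mem G)]
  have : (⟨1, one_mem G⟩ : G) = 1 := rfl
  rw [this, map_one]
  rfl

/-- The model of the induced representation on `V × V`. -/
noncomputable def model (hidx : G.index = 2) {s : G'} (hs : s ∉ G) (π : ↥G →* (V →ₗ[ℂ] V)ˣ) :
    G' →* (V × V →ₗ[ℂ] V × V)ˣ :=
  MonoidHom.toHomUnits
    { toFun := modelOp π s
      map_one' := by
        refine LinearMap.ext fun x => ?_
        have hs' : s⁻¹ ∉ G := by rwa [inv_mem_iff]
        rw [modelOp_apply]
        simp [extendZero_one, extendZero_of_notMem π hs, extendZero_of_notMem π hs']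
      map_mul' := by
        intro γ δ
        refine LinearMap.ext fun x => ?_
        rw [Module.End.mul_apply]
        simp only [modelOp_apply, map_add]
        have h1 := extendZero_mul hidx hs π γ δ x.1
        have h2 := extendZero_mul hidx hs π γ (δ * s) x.2
        have h3 := extendZero_mul hidx hs π (s⁻¹ * γ) δ x.1
        have h4 := extendZero_mul hidx hs π (s⁻¹ * γ) (δ * s) x.2
        simp only [mul_assoc] at h1 h2 h3 h4 ⊢
        rw [h1, h2, h3, h4]
        ext <;> dsimp only <;> abel }

lemma model_apply (hidx : G.index = 2) {s : G'} (hs : s ∉ G) (π : ↥G →* (V →ₗ[ℂ] V)ˣ) (γ : G')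
    (x : V × V) : (model hidx hs π γ).val x =
      (extendZero π γ x.1 + extendZero π (γ * s) x.2,
        extendZero π (s⁻¹ * γ) x.1 + extendZero π (s⁻¹ * γ * s) x.2) := rfl

end Model

/-! ### The decomposition of `W` and its invariant submodules -/

section Core

variable {G' : Type v} [Group G'] {G : Subgroup G'} {V : Type u} [AddCommGroup V] [Module ℂ V]
  {W : Type u} [AddCommGroup W] [Module ℂ W]

/-- The structure extracted from the universal property: `W = ι V ⊕ s ι V`, with `P : W → V` the
`G`-equivariant projection to the first summand. -/
structure IsProjection (π : ↥G →* (V →ₗ[ℂ] V)ˣ) (ρ : G' →* (W →ₗ[ℂ] W)ˣ) (ι : V →ₗ[ℂ] W)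
    (s : G') (P : W →ₗ[ℂ] V) : Prop where
  equivariant : ∀ (g : ↥G) (w : W), P ((ρ (g : G')).val w) = (π g).val (P w)
  ι_equivariant : ∀ (g : ↥G) (v : V), ι ((π g).val v) = (ρ (g : G')).val (ι v)
  apply_ι : ∀ v, P (ι v) = v
  apply_s : ∀ v, P ((ρ s).val (ι v)) = 0
  span : ∀ w, ∃ v v', w = ι v + (ρ s).val (ι v')

lemma rho_mul (ρ : G' →* (W →ₗ[ℂ] W)ˣ) (x y : G') (w : W) :
    (ρ (x * y)).val w = (ρ x).val ((ρ y).val w) := by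
  rw [map_mul]; rfl

lemma rho_inv_self (ρ : G' →* (W →ₗ[ℂ] W)ˣ) (x : G') (w : W) :
    (ρ x⁻¹).val ((ρ x).val w) = w := by
  rw [← rho_mul, inv_mul_cancel, map_one]; rfl

/-- The projection is the first component of the map `W → V × V` to the model; the decomposition
of `W` holds because `(v, w) ↦ ι v + s ι w` composed with that map is an equivariant endomorphism
of `W` fixing `ι`, hence the identity. -/
lemma exists_projection (hidx : G.index = 2) {s : G'} (hs : s ∉ G) (π : ↥G →* (V →ₗ[ℂ] V)ˣ)
    (ρ : G' →* (W →ₗ[ℂ] W)ˣ) (ι : V →ₗ[ℂ] W)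
    (hι : ∀ g : ↥G, ι ∘ₗ (π g).val = (ρ (g : G')).val ∘ₗ ι)
    (huniv : ∀ (U : Type u) [AddCommGroup U] [Module ℂ U]
      (σ : G' →* (U →ₗ[ℂ] U)ˣ) (f : V →ₗ[ℂ] U),
      (∀ g : ↥G, f ∘ₗ (π g).val = (σ (g : G')).val ∘ₗ f) →
      ∃! F : W →ₗ[ℂ] U, (∀ γ : G', F ∘ₗ (ρ γ).val = (σ γ).val ∘ₗ F) ∧ F ∘ₗ ι = f) :
    ∃ P : W →ₗ[ℂ] V, IsProjection π ρ ι s P := by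
  have hι' : ∀ (g : ↥G) (v : V), ι ((π g).val v) = (ρ (g : G')).val (ι v) :=
    fun g v => LinearMap.congr_fun (hι g) v
  have hinl : ∀ g : ↥G, LinearMap.inl ℂ V V ∘ₗ (π g).val =
      (model hidx hs π (g : G')).val ∘ₗ LinearMap.inl ℂ V V := by
    intro g
    refine LinearMap.ext fun v => ?_
    have hg : s⁻¹ * (g : G') ∉ G := by
      rw [inv_mul_mem_iff hidx hs]; exact fun h => h g.2
    simp only [LinearMap.comp_apply, model_apply, LinearMap.inl_apply, map_zero, add_zero]
    rw [extendZero_of_mem π g.2, extendZero_of_notMem π hg]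
    rfl
  obtain ⟨F, ⟨hF, hFι⟩, -⟩ := huniv (V × V) (model hidx hs π) (LinearMap.inl ℂ V V) hinl
  have hF' : ∀ γ w, F ((ρ γ).val w) = (model hidx hs π γ).val (F w) :=
    fun γ w => LinearMap.congr_fun (hF γ) w
  have hFι' : ∀ v, F (ι v) = (v, 0) := fun v => LinearMap.congr_fun hFι v
  let H : V × V →ₗ[ℂ] W := ι.coprod ((ρ s).val ∘ₗ ι)
  have hH : ∀ x, H x = ι x.1 + (ρ s).val (ι x.2) := fun x => rfl
  -- The `γ`-translate of `ι v` in terms of the two summands.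
  have key : ∀ γ v, (ρ γ).val (ι v) =
      ι (extendZero π γ v) + (ρ s).val (ι (extendZero π (s⁻¹ * γ) v)) := by
    intro γ v
    by_cases h : γ ∈ G
    · have h2 : s⁻¹ * γ ∉ G := by rw [inv_mul_mem_iff hidx hs]; tauto
      rw [extendZero_of_mem π h, extendZero_of_notMem π h2, hι']
      simp
    · have h2 : s⁻¹ * γ ∈ G := by rwa [inv_mul_mem_iff hidx hs]
      rw [extendZero_of_notMem π h, extendZero_of_mem π h2, hι', ← rho_mul]
      simp
  have hHF : H ∘ₗ F = LinearMap.id := by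
    refine (huniv W ρ ι hι).unique ⟨fun γ => ?_, ?_⟩ ⟨fun γ => rfl, rfl⟩
    · refine LinearMap.ext fun w => ?_
      simp only [LinearMap.comp_apply, hF', hH, model_apply, map_add]
      rw [← rho_mul, key γ, key (γ * s)]
      simp only [mul_assoc]
      abel
    · refine LinearMap.ext fun v => ?_
      simp [LinearMap.comp_apply, hFι', hH]
  refine ⟨LinearMap.fst ℂ V V ∘ₗ F, ⟨?_, hι', ?_, ?_, ?_⟩⟩
  · intro g w
    have hg : (g : G') * s ∉ G := by
      rw [mul_mem_iff hidx hs]; exact fun h => h g.2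
    simp only [LinearMap.comp_apply, hF', model_apply, LinearMap.fst_apply]
    rw [extendZero_of_mem π g.2, extendZero_of_notMem π hg]
    simp
  · intro v
    simp [LinearMap.comp_apply, hFι']
  · intro v
    simp [LinearMap.comp_apply, hF', hFι', model_apply, extendZero_of_notMem π hs]
  · intro w
    exact ⟨(F w).1, (F w).2, (LinearMap.congr_fun hHF w).symm⟩

variable {π : ↥G →* (V →ₗ[ℂ] V)ˣ} {ρ : G' →* (W →ₗ[ℂ] W)ˣ} {ι : V →ₗ[ℂ] W} {s : G'}
  {P : W →ₗ[ℂ] V}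

/-- A nonzero proper invariant submodule meets `ι V` trivially and projects bijectively to `V`. -/
lemma trichotomy (hP : IsProjection π ρ ι s P)
    (hsimple : ∀ U : Submodule ℂ V, IsInvariantSubmodule π U → U = ⊥ ∨ U = ⊤)
    {U : Submodule ℂ W} (hU : IsInvariantSubmodule ρ U) (hbot : U ≠ ⊥) (htop : U ≠ ⊤) :
    (∀ v, ι v ∈ U → v = 0) ∧ (∀ u ∈ U, P u = 0 → u = 0) ∧ (∀ v, ∃ u ∈ U, P u = v) := by
  have h1 : ∀ v, ι v ∈ U → v = 0 := by
    have hinv : IsInvariantSubmodule π (U.comap ι) := by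
      intro g v hv
      rw [Submodule.mem_comap] at hv ⊢
      rw [hP.ι_equivariant]
      exact hU _ _ hv
    rcases hsimple _ hinv with h | h
    · intro v hv
      have : v ∈ U.comap ι := hv
      rwa [h, Submodule.mem_bot] at this
    · have hall : ∀ v, ι v ∈ U := fun v => by
        have : v ∈ U.comap ι := by rw [h]; trivial
        exact this
      refine absurd (eq_top_iff.2 fun w _ => ?_) htop
      obtain ⟨v, v', rfl⟩ := hP.span w
      exact U.add_mem (hall v) (hU s _ (hall v'))
  have h2 : ∀ u ∈ U, P u = 0 → u = 0 := by
    intro u hu hPu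
    obtain ⟨v, v', rfl⟩ := hP.span u
    rw [map_add, hP.apply_ι, hP.apply_s, add_zero] at hPu
    subst hPu
    have := hU s⁻¹ _ hu
    rw [map_zero, zero_add, rho_inv_self] at this
    simp [h1 v' this]
  refine ⟨h1, h2, ?_⟩
  have hinv : IsInvariantSubmodule π (U.map P) := by
    rintro g _ ⟨u, hu, rfl⟩
    exact ⟨_, hU g u hu, hP.equivariant g u⟩
  rcases hsimple _ hinv with h | h
  · refine absurd ((Submodule.eq_bot_iff _).2 fun u hu => h2 u hu ?_) hbot
    have : P u ∈ U.map P := Submodule.mem_map_of_mem hu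
    rwa [h, Submodule.mem_bot] at this
  · intro v
    have : v ∈ U.map P := by rw [h]; trivial
    exact this

lemma eq_of_le (hP : IsProjection π ρ ι s P)
    (hsimple : ∀ U : Submodule ℂ V, IsInvariantSubmodule π U → U = ⊥ ∨ U = ⊤)
    {U₁ U₂ : Submodule ℂ W} (hU₁ : IsInvariantSubmodule ρ U₁) (hU₂ : IsInvariantSubmodule ρ U₂)
    (hbot : U₁ ≠ ⊥) (htop : U₂ ≠ ⊤) (hle : U₁ ≤ U₂) : U₁ = U₂ := by
  refine le_antisymm hle fun u hu => ?_
  have hbot₂ : U₂ ≠ ⊥ := fun h => hbot (le_bot_iff.1 (h ▸ hle))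
  have htop₁ : U₁ ≠ ⊤ := fun h => htop (top_le_iff.1 (h ▸ hle))
  obtain ⟨u', hu', he⟩ := (trichotomy hP hsimple hU₁ hbot htop₁).2.2 (P u)
  have := (trichotomy hP hsimple hU₂ hbot₂ htop).2.1 (u - u') (U₂.sub_mem hu (hle hu'))
    (by rw [map_sub, he, sub_self])
  rwa [sub_eq_zero.1 this]

/-! ### The involution attached to the decomposition -/

/-- The involution of `W` which is `1` on `ι V` and `-1` on `s ι V`. -/
noncomputable def flip (ι : V →ₗ[ℂ] W) (P : W →ₗ[ℂ] V) : W →ₗ[ℂ] W :=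
  (2 : ℂ) • (ι ∘ₗ P) - LinearMap.id

lemma flip_apply (w : W) : flip ι P w = (2 : ℂ) • ι (P w) - w := rfl

lemma P_flip (hP : IsProjection π ρ ι s P) (w : W) : P (flip ι P w) = P w := by
  rw [flip_apply, map_sub, map_smul, hP.apply_ι, two_smul, add_sub_cancel_right]

lemma flip_flip (hP : IsProjection π ρ ι s P) (w : W) : flip ι P (flip ι P w) = w := by
  rw [flip_apply, P_flip hP, flip_apply, sub_sub_cancel]

lemma flip_mem (hP : IsProjection π ρ ι s P) {g : G'} (hg : g ∈ G) (w : W) :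
    flip ι P ((ρ g).val w) = (ρ g).val (flip ι P w) := by
  have h1 := hP.equivariant ⟨g, hg⟩ w
  have h2 := hP.ι_equivariant ⟨g, hg⟩ (P w)
  dsimp only at h1 h2
  rw [flip_apply, flip_apply, h1, h2, map_sub, map_smul]

lemma flip_s (hidx : G.index = 2) (hs : s ∉ G) (hP : IsProjection π ρ ι s P) (w : W) :
    flip ι P ((ρ s).val w) = - (ρ s).val (flip ι P w) := by
  obtain ⟨v, v', rfl⟩ := hP.span w
  have hss : s * s ∈ G := by rwa [mul_mem_iff hidx hs]
  have h2 := hP.ι_equivariant ⟨s * s, hss⟩ v'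
  dsimp only at h2
  rw [rho_mul] at h2
  simp only [flip_apply, map_add, map_sub, hP.apply_ι, hP.apply_s, ← h2, map_zero, add_zero,
    two_smul]
  abel

lemma flip_notMem (hidx : G.index = 2) (hs : s ∉ G) (hP : IsProjection π ρ ι s P) {γ : G'}
    (hγ : γ ∉ G) (w : W) : flip ι P ((ρ γ).val w) = - (ρ γ).val (flip ι P w) := by
  have hg : s⁻¹ * γ ∈ G := by rwa [inv_mul_mem_iff hidx hs]
  have hfac : ∀ x, (ρ γ).val x = (ρ s).val ((ρ (s⁻¹ * γ)).val x) := fun x => by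
    rw [← rho_mul, mul_inv_cancel_left]
  rw [hfac, hfac, flip_s hidx hs hP, flip_mem hP hg]

lemma flip_invariant (hidx : G.index = 2) (hs : s ∉ G) (hP : IsProjection π ρ ι s P)
    {U : Submodule ℂ W} (hU : IsInvariantSubmodule ρ U) :
    IsInvariantSubmodule ρ (U.map (flip ι P)) := by
  rintro γ _ ⟨u, hu, rfl⟩
  by_cases hγ : γ ∈ G
  · rw [← flip_mem hP hγ]
    exact Submodule.mem_map_of_mem (hU _ _ hu)
  · rw [← neg_neg ((ρ γ).val (flip ι P u)), ← flip_notMem hidx hs hP hγ]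
    exact neg_mem (Submodule.mem_map_of_mem (hU _ _ hu))

/-- The Schur hypothesis turns an equivariant isomorphism `U ≃ D U` into a multiple of the
involution `D`, which anticommutes with `s`; so there is none. -/
lemma not_equiv (hidx : G.index = 2) (hs : s ∉ G) (hP : IsProjection π ρ ι s P)
    (hsimple : ∀ U : Submodule ℂ V, IsInvariantSubmodule π U → U = ⊥ ∨ U = ⊤)
    (hschur : ∀ f : V →ₗ[ℂ] V, (∀ g : ↥G, f ∘ₗ (π g).val = (π g).val ∘ₗ f) →
      ∃ a : ℂ, f = a • LinearMap.id)
    {U : Submodule ℂ W} (hU : IsInvariantSubmodule ρ U) (hbot : U ≠ ⊥) (htop : U ≠ ⊤)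
    (hbot' : U.map (flip ι P) ≠ ⊥) (htop' : U.map (flip ι P) ≠ ⊤) :
    ¬ InvariantSubmoduleEquiv ρ U (U.map (flip ι P)) := by
  rintro ⟨e, he⟩
  obtain ⟨-, hinj, hsurj⟩ := trichotomy hP hsimple hU hbot htop
  obtain ⟨-, hinj', -⟩ := trichotomy hP hsimple (flip_invariant hidx hs hP hU) hbot' htop'
  have hpbij : Function.Bijective (P ∘ₗ U.subtype) := by
    refine ⟨(injective_iff_map_eq_zero _).2 fun u hu => ?_, fun v => ?_⟩
    · exact Subtype.ext (hinj u u.2 hu)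
    · obtain ⟨u, hu, h⟩ := hsurj v
      exact ⟨⟨u, hu⟩, h⟩
  let p : U ≃ₗ[ℂ] V := LinearEquiv.ofBijective _ hpbij
  have hp : ∀ u : U, p u = P u := fun u => rfl
  let f : V →ₗ[ℂ] V := P ∘ₗ (U.map (flip ι P)).subtype ∘ₗ e.toLinearMap ∘ₗ p.symm.toLinearMap
  have hf : ∀ u : U, f (P u) = P (e u : W) := by
    intro u
    rw [← hp]
    simp [f]
  obtain ⟨a, ha⟩ := hschur f (by
    intro g
    refine LinearMap.ext fun v => ?_
    obtain ⟨u, rfl⟩ := p.surjective v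
    let y : U := ⟨(ρ (g : G')).val u, hU _ _ u.2⟩
    have h1 := he g u y rfl
    have h2 : (π g).val (P u) = P (y : W) := (hP.equivariant g u).symm
    simp only [LinearMap.comp_apply, hp]
    rw [h2, hf, hf, h1, hP.equivariant])
  have hea : ∀ u : U, (e u : W) = a • flip ι P u := by
    intro u
    refine sub_eq_zero.1 (hinj' _ (sub_mem (e u).2
      (Submodule.smul_mem _ a (Submodule.mem_map_of_mem u.2))) ?_)
    rw [map_sub, map_smul, P_flip hP, ← hf, ha]
    simp
  obtain ⟨x, hx, hx0⟩ := (Submodule.ne_bot_iff U).1 hbot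
  let u : U := ⟨x, hx⟩
  let y : U := ⟨(ρ s).val x, hU _ _ hx⟩
  have h1 := he s u y rfl
  rw [hea, hea] at h1
  change a • flip ι P ((ρ s).val x) = (ρ s).val (a • flip ι P x) at h1
  rw [flip_s hidx hs hP, map_smul, smul_neg, ← map_smul] at h1
  have h3 : (ρ s).val (a • flip ι P x) = 0 := by
    have h6 : (2 : ℂ) • (ρ s).val (a • flip ι P x) = 0 := by
      rw [two_smul]
      nth_rewrite 1 [← h1]
      exact neg_add_cancel _
    exact (smul_eq_zero.1 h6).resolve_left two_ne_zero
  have h4 : a • flip ι P x = 0 := by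
    rw [← rho_inv_self ρ s (a • flip ι P x), h3, map_zero]
  have h5 : e u = 0 := Subtype.ext ((hea u).trans h4)
  exact hx0 (congrArg Subtype.val (e.map_eq_zero_iff.1 h5))

end Core

end IndexTwo

/-- Let `G ≤ G'` be of index 2 and let `π` be a simple `ℂ[G]`-module
all of whose `ℂ[G]`-endomorphisms are scalar.  Then the induced `ℂ[G']`-module
`Ind = ℂ[G'] ⊗_{ℂ[G]} π` — characterized here, as a `G'`-representation `(W, ρ)`
with a `G`-equivariant map `ι : V → W`, by its universal property — has length at
most 2, and if it is not simple it is the internal direct sum of two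
non-isomorphic simple submodules (hence semisimple and multiplicity-free). -/
theorem stmt_11 (G' : Type v) [Group G'] (G : Subgroup G') (hidx : G.index = 2)
    (V : Type u) [AddCommGroup V] [Module ℂ V] [Nontrivial V]
    (π : ↥G →* (V →ₗ[ℂ] V)ˣ)
    (hsimple : ∀ U : Submodule ℂ V, IsInvariantSubmodule π U → U = ⊥ ∨ U = ⊤)
    (hschur : ∀ f : V →ₗ[ℂ] V, (∀ g : ↥G, f ∘ₗ (π g).val = (π g).val ∘ₗ f) →
      ∃ a : ℂ, f = a • LinearMap.id)
    (W : Type u) [AddCommGroup W] [Module ℂ W]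
    (ρ : G' →* (W →ₗ[ℂ] W)ˣ)
    (ι : V →ₗ[ℂ] W)
    (hι : ∀ g : ↥G, ι ∘ₗ (π g).val = (ρ (g : G')).val ∘ₗ ι)
    (huniv : ∀ (U : Type u) [AddCommGroup U] [Module ℂ U]
      (σ : G' →* (U →ₗ[ℂ] U)ˣ) (f : V →ₗ[ℂ] U),
      (∀ g : ↥G, f ∘ₗ (π g).val = (σ (g : G')).val ∘ₗ f) →
      ∃! F : W →ₗ[ℂ] U, (∀ γ : G', F ∘ₗ (ρ γ).val = (σ γ).val ∘ₗ F) ∧ F ∘ₗ ι = f) :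
    (¬ ∃ U₀ U₁ U₂ U₃ : Submodule ℂ W,
      IsInvariantSubmodule ρ U₀ ∧ IsInvariantSubmodule ρ U₁ ∧
      IsInvariantSubmodule ρ U₂ ∧ IsInvariantSubmodule ρ U₃ ∧
      U₀ < U₁ ∧ U₁ < U₂ ∧ U₂ < U₃) ∧
    (¬ (Nontrivial W ∧ ∀ U : Submodule ℂ W, IsInvariantSubmodule ρ U → U = ⊥ ∨ U = ⊤) →
      ∃ W₁ W₂ : Submodule ℂ W,
        IsInvariantSubmodule ρ W₁ ∧ IsInvariantSubmodule ρ W₂ ∧ IsCompl W₁ W₂ ∧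
        IsSimpleInvariantSubmodule ρ W₁ ∧ IsSimpleInvariantSubmodule ρ W₂ ∧
        ¬ InvariantSubmoduleEquiv ρ W₁ W₂) := by
  
  obtain ⟨s, hs⟩ : ∃ s, s ∉ G := by
    by_contra! h
    rw [(Subgroup.eq_top_iff' G).2 h, Subgroup.index_top] at hidx
    omega
  obtain ⟨P, hP⟩ := IndexTwo.exists_projection hidx hs π ρ ι hι huniv
  refine ⟨?_, fun hns => ?_⟩
  · rintro ⟨U₀, U₁, U₂, U₃, -, h1, h2, -, h01, h12, h23⟩
    exact h12.ne (IndexTwo.eq_of_le hP hsimple h1 h2 (ne_bot_of_gt h01) (ne_top_of_lt h23) h12.le)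
  · have hW : Nontrivial W :=
      (Function.LeftInverse.injective hP.apply_ι : Function.Injective ι).nontrivial
    obtain ⟨U, hU, hbot, htop⟩ :
        ∃ U : Submodule ℂ W, IsInvariantSubmodule ρ U ∧ U ≠ ⊥ ∧ U ≠ ⊤ := by
      by_contra! h
      exact hns ⟨hW, fun U hU => or_iff_not_imp_left.2 (h U hU)⟩
    have hsimp : ∀ U : Submodule ℂ W, IsInvariantSubmodule ρ U → U ≠ ⊥ → U ≠ ⊤ →
        IsSimpleInvariantSubmodule ρ U := fun U hU hb ht =>
      ⟨hb, fun U' hle hU' => or_iff_not_imp_left.2 fun hb' =>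
        IndexTwo.eq_of_le hP hsimple hU' hU hb' ht hle⟩
    set U' := U.map (IndexTwo.flip ι P) with hU'def
    have hU' : IsInvariantSubmodule ρ U' := IndexTwo.flip_invariant hidx hs hP hU
    have hback : ∀ w, IndexTwo.flip ι P w ∈ U' → w ∈ U := by
      rintro w ⟨u, hu, h⟩
      rw [← IndexTwo.flip_flip hP w, ← h, IndexTwo.flip_flip hP]
      exact hu
    have hbot' : U' ≠ ⊥ := by
      obtain ⟨x, hx, hx0⟩ := (Submodule.ne_bot_iff U).1 hbot
      refine (Submodule.ne_bot_iff U').2 ⟨_, Submodule.mem_map_of_mem hx, fun h => hx0 ?_⟩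
      rw [← IndexTwo.flip_flip hP x, h, map_zero]
    have htop' : U' ≠ ⊤ := fun h =>
      htop (eq_top_iff.2 fun w _ => hback w (by rw [h]; trivial))
    -- If `U` were stable under the involution, it would contain `ι (P u)` for each `u ∈ U`.
    have hne : U ≠ U' := by
      intro h
      obtain ⟨h1, h2, -⟩ := IndexTwo.trichotomy hP hsimple hU hbot htop
      refine hbot ((Submodule.eq_bot_iff U).2 fun u hu => h2 u hu (h1 _ ?_))
      have hd : IndexTwo.flip ι P u ∈ U := by
        rw [h]; exact Submodule.mem_map_of_mem hu
      rw [IndexTwo.flip_apply] at hd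
      have h3 := U.smul_mem (2⁻¹ : ℂ) (U.add_mem hd hu)
      rwa [sub_add_cancel, inv_smul_smul₀ two_ne_zero] at h3
    refine ⟨U, U', hU, hU', ⟨?_, ?_⟩, hsimp U hU hbot htop, hsimp U' hU' hbot' htop',
      IndexTwo.not_equiv hidx hs hP hsimple hschur hU hbot htop hbot' htop'⟩
    · rw [disjoint_iff]
      by_contra hb
      have hinf : IsInvariantSubmodule ρ (U ⊓ U') :=
        fun γ x hx => ⟨hU γ x hx.1, hU' γ x hx.2⟩
      exact hne ((IndexTwo.eq_of_le hP hsimple hinf hU hb htop inf_le_left).symm.trans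
        (IndexTwo.eq_of_le hP hsimple hinf hU' hb htop' inf_le_right))
    · rw [codisjoint_iff]
      by_contra ht
      have hsup : IsInvariantSubmodule ρ (U ⊔ U') := by
        intro γ x hx
        obtain ⟨y, hy, z, hz, rfl⟩ := Submodule.mem_sup.1 hx
        rw [map_add]
        exact Submodule.add_mem_sup (hU γ y hy) (hU' γ z hz)
      exact hne ((IndexTwo.eq_of_le hP hsimple hU hsup hbot ht le_sup_left).trans
        (IndexTwo.eq_of_le hP hsimple hU' hsup hbot' ht le_sup_right).symm)
end

section
/- Let G be a group, V₀ a simple module over the group algebra ℝ[G], and M = ℂ ⊗_ℝ V₀ the complexification, regarded as a module over ℂ[G]. Let σ : M → M be the conjugation map determined by σ(c ⊗ v) = c̄ ⊗ v for c ∈ ℂ, v ∈ V₀. If W is a ℂ[G]-submodule of M with W ≠ 0 and W ≠ M, then σ(W) is also a ℂ[G]-submodule of M, and M is the internal direct sum M = W ⊕ σ(W). In particular, M is then a semisimple ℂ[G]-module of length 2. -/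
open scoped TensorProduct

/-!
A `ℂ`-subspace `N` of `ℂ ⊗ V₀` stable under both `G` and the conjugation `σ` is trivial:
`{v | 1 ⊗ v ∈ N}` is `G`-stable, hence `⊥` or `⊤`, and since `x = 1 ⊗ a + I ⊗ b` in `N` gives
`x + σ x = 2 ⊗ a` and `x - σ x = 2I ⊗ b` in `N`, the two cases force `N = ⊥` or `N = ⊤`
(`eq_bot_or_eq_top_of_conj_stable`).

For a proper nonzero `G`-stable `W`, both `W ⊓ σ(W)` and `W ⊔ σ(W)` are stable under `G` and `σ`,
so `W` and `σ(W)` are complementary (`isCompl_conjSubmodule`). Applying this also to a nonzero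
`G`-stable `U ≤ W` gives a complement `σ(U) ≤ σ(W)` of `U`, and modularity yields `U = W`.
-/

namespace ComplexConj

variable {V₀ : Type*} [AddCommGroup V₀] [Module ℝ V₀]
  {σ : (ℂ ⊗[ℝ] V₀) →ₗ[ℝ] (ℂ ⊗[ℝ] V₀)}

lemma conj_smul (hσ : ∀ (c : ℂ) (v : V₀), σ (c ⊗ₜ v) = (starRingEnd ℂ) c ⊗ₜ v)
    (c : ℂ) (x : ℂ ⊗[ℝ] V₀) : σ (c • x) = (starRingEnd ℂ) c • σ x := by
  induction x using TensorProduct.induction_on with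
  | zero => simp
  | tmul d v => simp [TensorProduct.smul_tmul', hσ]
  | add x y hx hy => simp only [smul_add, map_add, hx, hy]

lemma conj_conj (hσ : ∀ (c : ℂ) (v : V₀), σ (c ⊗ₜ v) = (starRingEnd ℂ) c ⊗ₜ v)
    (x : ℂ ⊗[ℝ] V₀) : σ (σ x) = x := by
  induction x using TensorProduct.induction_on with
  | zero => simp
  | tmul d v => simp [hσ]
  | add x y hx hy => simp only [map_add, hx, hy]

lemma conj_baseChange (hσ : ∀ (c : ℂ) (v : V₀), σ (c ⊗ₜ v) = (starRingEnd ℂ) c ⊗ₜ v)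
    (f : V₀ →ₗ[ℝ] V₀) (x : ℂ ⊗[ℝ] V₀) :
    σ (f.baseChange ℂ x) = f.baseChange ℂ (σ x) := by
  induction x using TensorProduct.induction_on with
  | zero => simp
  | tmul d v => simp [hσ]
  | add x y hx hy => simp only [map_add, hx, hy]

/-- The decomposition of a vector of the complexification into real and imaginary parts. -/
lemma exists_re_im (x : ℂ ⊗[ℝ] V₀) :
    ∃ a b : V₀, x = (1 : ℂ) ⊗ₜ[ℝ] a + Complex.I • ((1 : ℂ) ⊗ₜ[ℝ] b) := by
  induction x using TensorProduct.induction_on with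
  | zero => exact ⟨0, 0, by simp⟩
  | tmul c v =>
    refine ⟨c.re • v, c.im • v, ?_⟩
    rw [← TensorProduct.smul_tmul, ← TensorProduct.smul_tmul, TensorProduct.smul_tmul',
      ← TensorProduct.add_tmul]
    congr 1
    apply Complex.ext <;> simp
  | add x y hx hy =>
    obtain ⟨a, b, rfl⟩ := hx
    obtain ⟨c, d, rfl⟩ := hy
    refine ⟨a + c, b + d, ?_⟩
    simp only [TensorProduct.tmul_add, smul_add]
    abel

/-- The conjugate `σ(W)` of a complex subspace, encoded as the preimage of `W` under `σ`; the two
agree because `σ` is an involution. -/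
def conjSubmodule (hσ : ∀ (c : ℂ) (v : V₀), σ (c ⊗ₜ v) = (starRingEnd ℂ) c ⊗ₜ v)
    (W : Submodule ℂ (ℂ ⊗[ℝ] V₀)) : Submodule ℂ (ℂ ⊗[ℝ] V₀) where
  carrier := {x | σ x ∈ W}
  add_mem' {x y} hx hy := by
    simp only [Set.mem_ofPred_eq, map_add] at *
    exact W.add_mem hx hy
  zero_mem' := by simp
  smul_mem' c x hx := by
    simp only [Set.mem_ofPred_eq, conj_smul hσ] at *
    exact W.smul_mem _ hx

variable (hσ : ∀ (c : ℂ) (v : V₀), σ (c ⊗ₜ v) = (starRingEnd ℂ) c ⊗ₜ v)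

lemma mem_conjSubmodule {W : Submodule ℂ (ℂ ⊗[ℝ] V₀)} {x : ℂ ⊗[ℝ] V₀} :
    x ∈ conjSubmodule hσ W ↔ σ x ∈ W := Iff.rfl

lemma conjSubmodule_mono {U W : Submodule ℂ (ℂ ⊗[ℝ] V₀)} (h : U ≤ W) :
    conjSubmodule hσ U ≤ conjSubmodule hσ W := fun _ hx => h hx

lemma conjSubmodule_conjSubmodule (W : Submodule ℂ (ℂ ⊗[ℝ] V₀)) :
    conjSubmodule hσ (conjSubmodule hσ W) = W := by
  ext x
  simp only [mem_conjSubmodule, conj_conj hσ]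

lemma coe_conjSubmodule (W : Submodule ℂ (ℂ ⊗[ℝ] V₀)) :
    (conjSubmodule hσ W : Set (ℂ ⊗[ℝ] V₀)) = σ '' (W : Set (ℂ ⊗[ℝ] V₀)) := by
  ext x
  constructor
  · intro hx
    exact ⟨σ x, hx, conj_conj hσ x⟩
  · rintro ⟨y, hy, rfl⟩
    change σ (σ y) ∈ W
    rwa [conj_conj hσ]

variable {G : Type*} [Group G] (π₀ : G →* (V₀ →ₗ[ℝ] V₀)ˣ)

/-- Stability of a complex subspace of the complexification under the base-changed action. -/
def Stable (W : Submodule ℂ (ℂ ⊗[ℝ] V₀)) : Prop :=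
  ∀ (g : G) (x : ℂ ⊗[ℝ] V₀), x ∈ W → (π₀ g).val.baseChange ℂ x ∈ W

variable {π₀}

lemma Stable.conj {W : Submodule ℂ (ℂ ⊗[ℝ] V₀)} (hW : Stable π₀ W) :
    Stable π₀ (conjSubmodule hσ W) := by
  intro g x hx
  rw [mem_conjSubmodule, conj_baseChange hσ]
  exact hW g _ hx

lemma Stable.inf {U W : Submodule ℂ (ℂ ⊗[ℝ] V₀)} (hU : Stable π₀ U) (hW : Stable π₀ W) :
    Stable π₀ (U ⊓ W) :=
  fun g x hx => ⟨hU g x hx.1, hW g x hx.2⟩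

lemma Stable.sup {U W : Submodule ℂ (ℂ ⊗[ℝ] V₀)} (hU : Stable π₀ U) (hW : Stable π₀ W) :
    Stable π₀ (U ⊔ W) := by
  intro g x hx
  obtain ⟨y, hy, z, hz, rfl⟩ := Submodule.mem_sup.1 hx
  rw [map_add]
  exact Submodule.add_mem_sup (hU g y hy) (hW g z hz)

/-- Subspaces stable under `G` and conjugation are defined over `ℝ`, so simplicity of `V₀` leaves
only the trivial ones. -/
lemma eq_bot_or_eq_top_of_conj_stable
    (hσ : ∀ (c : ℂ) (v : V₀), σ (c ⊗ₜ v) = (starRingEnd ℂ) c ⊗ₜ v)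
    (hsimple : ∀ U : Submodule ℝ V₀, (∀ (g : G) (x : V₀), x ∈ U → (π₀ g).val x ∈ U) →
      U = ⊥ ∨ U = ⊤)
    {N : Submodule ℂ (ℂ ⊗[ℝ] V₀)} (hN : Stable π₀ N) (hNσ : ∀ x ∈ N, σ x ∈ N) :
    N = ⊥ ∨ N = ⊤ := by
  let U : Submodule ℝ V₀ :=
    (N.restrictScalars ℝ).comap (TensorProduct.mk ℝ ℂ V₀ 1)
  have hmem : ∀ v, v ∈ U ↔ (1 : ℂ) ⊗ₜ[ℝ] v ∈ N := fun v => Iff.rfl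
  have hU : ∀ (g : G) (x : V₀), x ∈ U → (π₀ g).val x ∈ U := by
    intro g x hx
    rw [hmem] at hx ⊢
    simpa using hN g _ hx
  rcases hsimple U hU with h | h
  · left
    rw [Submodule.eq_bot_iff]
    intro x hx
    obtain ⟨a, b, rfl⟩ := exists_re_im x
    have hs := hNσ _ hx
    rw [map_add, conj_smul hσ, hσ, hσ, map_one, Complex.conj_I] at hs
    have ha : a ∈ U := by
      rw [hmem]
      convert N.smul_mem (2⁻¹ : ℂ) (N.add_mem hx hs) using 1
      module
    have hb : b ∈ U := by
      rw [hmem]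
      -- `(2I)⁻¹ = -I/2` recovers `1 ⊗ b` from `x - σ x = 2I ⊗ b`.
      convert N.smul_mem (-(Complex.I * 2⁻¹)) (N.sub_mem hx hs) using 1
      match_scalars
      · linear_combination Complex.I_sq
      · ring
    rw [h, Submodule.mem_bot] at ha hb
    simp [ha, hb]
  · right
    rw [eq_top_iff]
    intro x _
    obtain ⟨a, b, rfl⟩ := exists_re_im x
    have hall : ∀ v, (1 : ℂ) ⊗ₜ[ℝ] v ∈ N := fun v => (hmem v).1 (h ▸ Submodule.mem_top)
    exact N.add_mem (hall a) (N.smul_mem _ (hall b))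

lemma isCompl_conjSubmodule
    (hsimple : ∀ U : Submodule ℝ V₀, (∀ (g : G) (x : V₀), x ∈ U → (π₀ g).val x ∈ U) →
      U = ⊥ ∨ U = ⊤)
    {W : Submodule ℂ (ℂ ⊗[ℝ] V₀)} (hW : Stable π₀ W) (hW₀ : W ≠ ⊥) (hWtop : W ≠ ⊤) :
    IsCompl W (conjSubmodule hσ W) := by
  have hswap : ∀ x ∈ W, σ x ∈ conjSubmodule hσ W := by
    intro x hx
    rwa [mem_conjSubmodule, conj_conj hσ]
  constructor
  · rw [disjoint_iff]
    refine (eq_bot_or_eq_top_of_conj_stable hσ hsimple (hW.inf (hW.conj hσ))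
      fun x hx => ⟨hx.2, hswap x hx.1⟩).resolve_right fun h => hWtop ?_
    exact eq_top_iff.2 (h ▸ inf_le_left)
  · rw [codisjoint_iff]
    refine (eq_bot_or_eq_top_of_conj_stable hσ hsimple (hW.sup (hW.conj hσ))
      fun x hx => ?_).resolve_left fun h => hW₀ ?_
    · obtain ⟨y, hy, z, hz, rfl⟩ := Submodule.mem_sup.1 hx
      rw [map_add, add_comm]
      exact Submodule.add_mem_sup hz (hswap y hy)
    · exact eq_bot_iff.2 (h ▸ le_sup_left)

/-- A proper nonzero stable subspace `W` is simple: a nonzero stable `U ≤ W` satisfies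
`U ⊔ σ(U) = ⊤` while `σ(U) ≤ σ(W)` is disjoint from `W`. -/
lemma eq_bot_or_eq_of_le
    (hσ : ∀ (c : ℂ) (v : V₀), σ (c ⊗ₜ v) = (starRingEnd ℂ) c ⊗ₜ v)
    (hsimple : ∀ U : Submodule ℝ V₀, (∀ (g : G) (x : V₀), x ∈ U → (π₀ g).val x ∈ U) →
      U = ⊥ ∨ U = ⊤)
    {W : Submodule ℂ (ℂ ⊗[ℝ] V₀)} (hW : Stable π₀ W) (hW₀ : W ≠ ⊥) (hWtop : W ≠ ⊤)
    {U : Submodule ℂ (ℂ ⊗[ℝ] V₀)} (hUW : U ≤ W) (hU : Stable π₀ U) : U = ⊥ ∨ U = W := by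
  refine or_iff_not_imp_left.2 fun hU₀ => ?_
  have hUtop : U ≠ ⊤ := fun h => hWtop (eq_top_iff.2 (h ▸ hUW))
  have hcU := isCompl_conjSubmodule hσ hsimple hU hU₀ hUtop
  have hcW := isCompl_conjSubmodule hσ hsimple hW hW₀ hWtop
  refine eq_of_le_of_inf_le_of_sup_le (z := conjSubmodule hσ U) hUW ?_ ?_
  · rw [(hcW.disjoint.mono_right (conjSubmodule_mono hσ hUW)).eq_bot]
    exact bot_le
  · rw [hcU.sup_eq_top]
    exact le_top

end ComplexConj


/-- Let `G` be a group, `V₀` a simple `ℝ[G]`-module (a nonzero real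
representation with no proper nonzero invariant subspace), and `M = ℂ ⊗_ℝ V₀`
its complexification, a `ℂ[G]`-module via the base-changed action.  Let
`σ : M → M` be the conjugation determined by `σ(c ⊗ v) = c̄ ⊗ v`.  If `W` is a
`ℂ[G]`-submodule of `M` with `W ≠ 0` and `W ≠ M`, then `σ(W)` is also a
`ℂ[G]`-submodule and `M = W ⊕ σ(W)`; in particular `M` is then a semisimple
`ℂ[G]`-module of length 2 (the direct sum of the two simple submodules `W` and
`σ(W)`). -/
theorem stmt_12 (G : Type*) [Group G]
    (V₀ : Type*) [AddCommGroup V₀] [Module ℝ V₀] [Nontrivial V₀]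
    (π₀ : G →* (V₀ →ₗ[ℝ] V₀)ˣ)
    (hsimple : ∀ U : Submodule ℝ V₀, (∀ (g : G) (x : V₀), x ∈ U → (π₀ g).val x ∈ U) →
      U = ⊥ ∨ U = ⊤)
    (σ : (ℂ ⊗[ℝ] V₀) →ₗ[ℝ] (ℂ ⊗[ℝ] V₀))
    (hσ : ∀ (c : ℂ) (v : V₀), σ (c ⊗ₜ v) = (starRingEnd ℂ) c ⊗ₜ v)
    (W : Submodule ℂ (ℂ ⊗[ℝ] V₀))
    (hWinv : ∀ (g : G) (x : ℂ ⊗[ℝ] V₀), x ∈ W → (π₀ g).val.baseChange ℂ x ∈ W)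
    (hW₀ : W ≠ ⊥) (hWtop : W ≠ ⊤) :
    ∃ W' : Submodule ℂ (ℂ ⊗[ℝ] V₀),
      (W' : Set (ℂ ⊗[ℝ] V₀)) = σ '' (W : Set (ℂ ⊗[ℝ] V₀)) ∧
      (∀ (g : G) (x : ℂ ⊗[ℝ] V₀), x ∈ W' → (π₀ g).val.baseChange ℂ x ∈ W') ∧
      IsCompl W W' ∧
      (∀ U : Submodule ℂ (ℂ ⊗[ℝ] V₀), U ≤ W →
        (∀ (g : G) (x : ℂ ⊗[ℝ] V₀), x ∈ U → (π₀ g).val.baseChange ℂ x ∈ U) →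
        U = ⊥ ∨ U = W) ∧
      (∀ U : Submodule ℂ (ℂ ⊗[ℝ] V₀), U ≤ W' →
        (∀ (g : G) (x : ℂ ⊗[ℝ] V₀), x ∈ U → (π₀ g).val.baseChange ℂ x ∈ U) →
        U = ⊥ ∨ U = W') := by
  have hcompl := ComplexConj.isCompl_conjSubmodule hσ hsimple hWinv hW₀ hWtop
  have hW'inv := ComplexConj.Stable.conj (π₀ := π₀) hσ hWinv
  refine ⟨ComplexConj.conjSubmodule hσ W, ComplexConj.coe_conjSubmodule hσ W, hW'inv, hcompl,
    fun U hUW hU => ComplexConj.eq_bot_or_eq_of_le hσ hsimple hWinv hW₀ hWtop hUW hU,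
    fun U hUW hU => ComplexConj.eq_bot_or_eq_of_le hσ hsimple hW'inv ?_ ?_ hUW hU⟩
  · intro h
    exact hWtop (by simpa [h] using hcompl.sup_eq_top)
  · intro h
    exact hW₀ (by simpa [h] using hcompl.inf_eq_bot)
end

section
/- Let p be a prime, F a field that is a finite extension of ℚ_p, and E a quadratic field extension of F. Then there exist number fields K ⊆ L with [L : K] = 2 such that K is totally real (every complex embedding of K has real image), L is totally imaginary (no embedding of L into ℂ has real image), together with a finite place v of K (a nonzero prime ideal of its ring of integers), a field isomorphism ψ from the v-adic completion K_v onto F, and an F-algebra isomorphism L ⊗_K K_v ≅ E, where L ⊗_K K_v is viewed as an F-algebra via ψ and the isomorphism restricts to ψ on K_v. In particular, since L ⊗_K K_v is a field, the place v does not split in L. -/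
/-!
The proof globalizes first the base field and then the quadratic extension.

*The field `K`.* Let `α` generate `F` over `ℚ_[p]`, with minimal polynomial `f` of degree `n`.
Approximate `f` `p`-adically by a monic `f' : ℚ[X]` and put `g = f' + t * (h - f')` with
`h = ∏_{i < n} (X - i)` and `t = p ^ N / (1 + p ^ N)`. As `N → ∞`, `t` tends to `0` in `ℚ_[p]` and
to `1` in `ℝ`. So for large `N` the polynomial `g` is `p`-adically close to `f`, and it inherits
from `h` the sign changes around `0, …, n - 1`, hence has `n` real roots
(`exists_real_rooted_approx`). Continuity of roots and Krasner's lemma give a root `b ∈ F` of `g`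
that generates `F` over `ℚ_[p]` (`exists_real_rooted_generator`). The field `K = ℚ(b)` is then
totally real and dense in `F` (`exists_totallyReal_dense`).

*The place `v`.* The norm of `F` restricted to `K` is nonarchimedean with `‖p‖ < 1`. The integers of
norm `< 1` form a nonzero prime ideal whose adic valuation is equivalent to that norm
(`exists_place_isEquiv`), and uniqueness of completions identifies `K_v` with `F`
(`exists_completion_equiv`).

*The field `L`.* Write `E = F(√d₀)`. The nonzero square multiples of `d₀` form a neighbourhood of
`d₀`, so it contains some `c ∈ K` and then also `d = c - p ^ N` for `N` large, where `d` is
moreover negative in every embedding (`exists_totally_negative_sqrt`). Then `L = K(√d)` is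
totally imaginary, `E = F(√d)`, and `L ⊗ K_v → E` is bijective because `1, √d` is a basis on
both sides (`exists_tensor_equiv`).
-/

open scoped TensorProduct

section LocalInstances

variable (K : Type) [Field K] [NumberField K]
    (L : Type) [Field L] [Algebra K L]
    (v : IsDedekindDomain.HeightOneSpectrum (NumberField.RingOfIntegers K))

/-- The canonical multiplication on `L ⊗[K] K_v` (the one coming from the usual
tensor-product algebra structure), made explicit to help instance resolution. -/
noncomputable def adicTensorMul : Mul (L ⊗[K] v.adicCompletion K) :=
  letI Kv := v.adicCompletion K
  letI : Module K Kv := Algebra.toModule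
  letI : SMulCommClass K Kv Kv := Algebra.to_smulCommClass
  letI : IsScalarTower K Kv Kv := IsScalarTower.right
  Algebra.TensorProduct.instMul

/-- The canonical semiring structure on `L ⊗[K] K_v` (the one coming from the
usual tensor-product algebra structure), made explicit to help instance
resolution. -/
noncomputable def adicTensorSemiring : Semiring (L ⊗[K] v.adicCompletion K) :=
  letI Kv := v.adicCompletion K
  letI : Module K Kv := Algebra.toModule
  letI : SMulCommClass K Kv Kv := Algebra.to_smulCommClass
  letI : IsScalarTower K Kv Kv := IsScalarTower.right
  Algebra.TensorProduct.instSemiring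

end LocalInstances

attribute [local instance 10000] adicTensorMul adicTensorSemiring

/-- The data globalizing a quadratic extension `E/F` of `p`-adic fields: number
fields `K ⊆ L` with `[L : K] = 2`, `K` totally real (every complex embedding of
`K` has real image), `L` totally imaginary (no embedding of `L` into `ℂ` has
real image), a finite place `v` of `K` (a nonzero prime ideal of its ring of
integers), a field isomorphism `ψ` from the `v`-adic completion `K_v` onto `F`,
and a ring isomorphism `L ⊗_K K_v ≅ E` restricting to `ψ` on `K_v` (hence an
`F`-algebra isomorphism when `L ⊗_K K_v` is viewed as an `F`-algebra via `ψ`).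
In particular `L ⊗_K K_v` is a field, i.e. the place `v` does not split in
`L`. -/
structure PadicGlobalizationData (F E : Type*) [Field F] [Field E] [Algebra F E] where
  K : Type
  L : Type
  [fieldK : Field K]
  [fieldL : Field L]
  [numberFieldK : NumberField K]
  [numberFieldL : NumberField L]
  [algKL : Algebra K L]
  rank2 : Module.finrank K L = 2
  totallyReal : ∀ (φ : K →+* ℂ) (x : K), (φ x).im = 0
  totallyImaginary : ∀ φ : L →+* ℂ, ∃ x : L, (φ x).im ≠ 0
  v : IsDedekindDomain.HeightOneSpectrum (NumberField.RingOfIntegers K)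
  ψ : v.adicCompletion K ≃+* F
  Φ : (L ⊗[K] v.adicCompletion K) ≃+* E
  compat : ∀ x : v.adicCompletion K, Φ ((1 : L) ⊗ₜ x) = algebraMap F E (ψ x)
  isField : IsField (L ⊗[K] v.adicCompletion K)

open Polynomial Filter Topology IsDedekindDomain NumberField
open scoped NNReal

/-! ### Real-rooted rational polynomials close to a given `p`-adic polynomial -/

/-- The polynomial `X (X - 1) ⋯ (X - (n - 1))`, whose roots are real and simple. -/
noncomputable def gridPoly (n : ℕ) : ℚ[X] := ∏ i ∈ Finset.range n, (X - C (i : ℚ))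

theorem gridPoly_monic (n : ℕ) : (gridPoly n).Monic :=
  monic_prod_of_monic _ _ fun _ _ => monic_X_sub_C _

theorem gridPoly_natDegree (n : ℕ) : (gridPoly n).natDegree = n := by
  rw [gridPoly, natDegree_prod_of_monic _ _ fun _ _ => monic_X_sub_C _]
  simp only [natDegree_X_sub_C, Finset.sum_const, Finset.card_range, smul_eq_mul, mul_one]

theorem gridPoly_sign_change {n k : ℕ} (hk : k < n) :
    aeval ((k : ℝ) - 1 / 2) (gridPoly n) * aeval ((k : ℝ) + 1 / 2) (gridPoly n) < 0 := by
  simp only [gridPoly, map_prod, map_sub, aeval_X, map_natCast]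
  rw [← Finset.prod_mul_distrib, ← Finset.mul_prod_erase _ _ (Finset.mem_range.mpr hk)]
  refine mul_neg_of_neg_of_pos (by norm_num) (Finset.prod_pos fun i hi => ?_)
  have hne : (i : ℤ) ≠ k := by exact_mod_cast (Finset.mem_erase.mp hi).1
  have h1 : (1 : ℝ) ≤ ((k : ℝ) - i) ^ 2 := by
    have : (1 : ℤ) ≤ ((k : ℤ) - i) ^ 2 := by
      have : ((k : ℤ) - i) ≠ 0 := by omega
      have := sq_pos_of_ne_zero this
      omega
    exact_mod_cast this
  nlinarith

theorem monic_segment {R : Type*} [CommRing R] {f h : R[X]} (hf : f.Monic) (hh : h.Monic)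
    (hd : f.natDegree = h.natDegree) (t : R) :
    (f + C t * (h - f)).Monic ∧ (f + C t * (h - f)).natDegree = f.natDegree := by
  nontriviality R
  have hlt : (C t * (h - f)).degree < f.degree := by
    rw [← smul_eq_C_mul]
    refine (degree_smul_le t _).trans_lt ?_
    rw [← degree_neg, neg_sub]
    exact degree_sub_lt_left (by
      rw [degree_eq_natDegree hf.ne_zero, degree_eq_natDegree hh.ne_zero, hd]) hf.ne_zero
      (by rw [hf.leadingCoeff, hh.leadingCoeff])
  exact ⟨hf.add_of_left hlt, natDegree_add_eq_left_of_degree_lt hlt⟩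

/-- If `t N → 1`, then `f + t N * (gridPoly n - f)` tends to `gridPoly n`, so it eventually changes
sign on each interval `(k - 1/2, k + 1/2)` with `k < n`; this accounts for all of its `n` roots. -/
theorem eventually_real_rooted {f : ℚ[X]} (hf : f.Monic) {t : ℕ → ℚ}
    (ht : Tendsto (fun N => (t N : ℝ)) atTop (𝓝 1)) :
    ∀ᶠ N in atTop, ∀ z : ℂ,
      aeval z (f + C (t N) * (gridPoly f.natDegree - f)) = 0 → z.im = 0 := by
  set n := f.natDegree with hn
  have hval (x : ℝ) : Tendsto (fun N => aeval x (f + C (t N) * (gridPoly n - f))) atTop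
      (𝓝 (aeval x (gridPoly n))) := by
    have : Tendsto (fun N => aeval x f + (t N : ℝ) * (aeval x (gridPoly n) - aeval x f)) atTop
        (𝓝 (aeval x f + 1 * (aeval x (gridPoly n) - aeval x f))) :=
      tendsto_const_nhds.add (ht.mul_const _)
    simpa using this
  have hev : ∀ᶠ N in atTop, ∀ k ∈ Finset.range n,
      aeval ((k : ℝ) - 1 / 2) (f + C (t N) * (gridPoly n - f)) *
        aeval ((k : ℝ) + 1 / 2) (f + C (t N) * (gridPoly n - f)) < 0 := by
    rw [eventually_all_finset]
    intro k hk
    exact ((hval _).mul (hval _)).eventually_lt_const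
      (gridPoly_sign_change (Finset.mem_range.mp hk))
  filter_upwards [hev] with N hN z hz
  set g := f + C (t N) * (gridPoly n - f) with hg
  obtain ⟨hgm, hgd⟩ := monic_segment hf (gridPoly_monic n)
    (by rw [gridPoly_natDegree]) (t N)
  have hroot : ∀ k : Fin n, ∃ x : ℝ, x ∈ Set.Ioo ((k : ℝ) - 1 / 2) (k + 1 / 2) ∧ aeval x g = 0 := by
    intro k
    have hk := hN k (Finset.mem_range.mpr k.2)
    have hc : ContinuousOn (fun x : ℝ => aeval x g)
        (Set.Icc ((k : ℝ) - 1 / 2) (k + 1 / 2)) := g.continuous_aeval.continuousOn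
    rcases mul_neg_iff.mp hk with ⟨h1, h2⟩ | ⟨h1, h2⟩
    · exact intermediate_value_Ioo' (by linarith) hc ⟨h2, h1⟩
    · exact intermediate_value_Ioo (by linarith) hc ⟨h1, h2⟩
  choose r hr hr0 using hroot
  have hinj : Function.Injective fun k => (r k : ℂ) := by
    intro a b hab
    have hab' : r a = r b := Complex.ofReal_injective hab
    have ha := hr a
    have hb := hr b
    rw [hab'] at ha
    have h1 : ((a : ℕ) : ℝ) < (b : ℕ) + 1 := by linarith [ha.1, hb.2]
    have h2 : ((b : ℕ) : ℝ) < (a : ℕ) + 1 := by linarith [hb.1, ha.2]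
    norm_cast at h1 h2
    ext
    omega
  have hsub : Finset.univ.image (fun k => (r k : ℂ)) ⊆ (g.aroots ℂ).toFinset := by
    intro x hx
    obtain ⟨k, -, rfl⟩ := Finset.mem_image.mp hx
    rw [Multiset.mem_toFinset, mem_aroots]
    refine ⟨hgm.ne_zero, ?_⟩
    have := aeval_algebraMap_apply ℂ (r k) g
    simpa [hr0 k] using this
  have hcard : (g.aroots ℂ).toFinset.card ≤ (Finset.univ.image (fun k => (r k : ℂ))).card := by
    rw [Finset.card_image_of_injective _ hinj, Finset.card_univ, Fintype.card_fin]
    refine (Multiset.toFinset_card_le _).trans ((card_roots' _).trans ?_)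
    rw [natDegree_map, hgd]
  have hmem : z ∈ Finset.univ.image (fun k => (r k : ℂ)) := by
    rw [Finset.eq_of_subset_of_card_le hsub hcard, Multiset.mem_toFinset, mem_aroots]
    exact ⟨hgm.ne_zero, hz⟩
  obtain ⟨k, -, rfl⟩ := Finset.mem_image.mp hmem
  exact Complex.ofReal_im _

theorem tendsto_pow_div_real {p : ℕ} (hp : 1 < p) :
    Tendsto (fun N : ℕ => (((p : ℚ) ^ N / (1 + (p : ℚ) ^ N) : ℚ) : ℝ)) atTop (𝓝 1) := by
  have h1 : Tendsto (fun N : ℕ => (p : ℝ) ^ N) atTop atTop :=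
    tendsto_pow_atTop_atTop_of_one_lt (by exact_mod_cast hp)
  have h2 : Tendsto (fun N : ℕ => 1 - (1 + (p : ℝ) ^ N)⁻¹) atTop (𝓝 (1 - 0)) :=
    tendsto_const_nhds.sub (tendsto_inv_atTop_zero.comp (tendsto_atTop_add_const_left _ _ h1))
  rw [sub_zero] at h2
  refine h2.congr fun N => ?_
  have : (1 + (p : ℝ) ^ N) ≠ 0 := by positivity
  push_cast
  field_simp
  ring

theorem tendsto_pow_div_padic (p : ℕ) [Fact p.Prime] :
    Tendsto (fun N : ℕ => (((p : ℚ) ^ N / (1 + (p : ℚ) ^ N) : ℚ) : ℚ_[p])) atTop (𝓝 0) := by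
  have h1 : Tendsto (fun N : ℕ => (p : ℚ_[p]) ^ N) atTop (𝓝 0) :=
    tendsto_pow_atTop_nhds_zero_of_norm_lt_one Padic.norm_p_lt_one
  have h2 := h1.div (tendsto_const_nhds.add h1 : Tendsto (fun N : ℕ => 1 + (p : ℚ_[p]) ^ N)
    atTop (𝓝 (1 + 0))) (by simp)
  simpa [Pi.div_def] using h2

theorem padic_denseRange_rat (p : ℕ) [Fact p.Prime] : DenseRange (algebraMap ℚ ℚ_[p]) := by
  rw [Metric.denseRange_iff]
  intro x r hr
  obtain ⟨q, hq⟩ := Padic.rat_dense p x hr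
  exact ⟨q, by simpa [dist_eq_norm] using hq⟩

/-- Weak approximation for monic polynomials: the conditions of being `p`-adically close to `f` and
of having only real roots can be met simultaneously. -/
theorem exists_real_rooted_approx (p : ℕ) [Fact p.Prime] {f : ℚ_[p][X]} (hf : f.Monic)
    {ε : ℝ} (hε : 0 < ε) :
    ∃ g : ℚ[X], g.Monic ∧ g.natDegree = f.natDegree ∧
      (∀ i, ‖(g.map (algebraMap ℚ ℚ_[p])).coeff i - f.coeff i‖ < ε) ∧
      ∀ z : ℂ, aeval z g = 0 → z.im = 0 := by
  obtain ⟨f', hf'm, hf'd, hf'⟩ :=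
    exists_monic_and_natDegree_eq_and_norm_map_algebraMap_coeff_sub_lt
      (padic_denseRange_rat p) hf (half_pos hε)
  set h := gridPoly f'.natDegree with hh
  set t : ℕ → ℚ := fun N => (p : ℚ) ^ N / (1 + (p : ℚ) ^ N) with ht
  have hsmall : ∀ᶠ N in atTop, ∀ i ∈ Finset.range (f'.natDegree + 1),
      ‖(t N : ℚ_[p]) * (((h - f').coeff i : ℚ) : ℚ_[p])‖ < ε / 2 := by
    rw [eventually_all_finset]
    intro i _
    have := ((tendsto_pow_div_padic p).mul_const (((h - f').coeff i : ℚ) : ℚ_[p])).norm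
    rw [zero_mul, norm_zero] at this
    exact this.eventually_lt_const (half_pos hε)
  obtain ⟨N, hN1, hN2⟩ := (hsmall.and (eventually_real_rooted hf'm
    (tendsto_pow_div_real (Fact.out : p.Prime).one_lt))).exists
  obtain ⟨hgm, hgd⟩ := monic_segment hf'm (gridPoly_monic f'.natDegree)
    (by rw [gridPoly_natDegree]) (t N)
  refine ⟨_, hgm, hgd.trans hf'd.symm, fun i => ?_, hN2⟩
  have hsm : ‖(t N : ℚ_[p]) * (((h - f').coeff i : ℚ) : ℚ_[p])‖ < ε / 2 := by
    by_cases hi : i < f'.natDegree + 1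
    · exact hN1 i (Finset.mem_range.mpr hi)
    · have h0 : (h - f').coeff i = 0 := by
        rw [coeff_sub, coeff_eq_zero_of_natDegree_lt (by rw [hh, gridPoly_natDegree]; omega),
          coeff_eq_zero_of_natDegree_lt (by omega), sub_zero]
      simpa [h0] using hε
  have heq : ((f' + C (t N) * (h - f')).map (algebraMap ℚ ℚ_[p])).coeff i - f.coeff i =
      ((f'.map (algebraMap ℚ ℚ_[p])).coeff i - f.coeff i) +
        (t N : ℚ_[p]) * (((h - f').coeff i : ℚ) : ℚ_[p]) := by
    simp only [coeff_map, coeff_add, coeff_C_mul, map_add, map_mul, eq_ratCast]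
    ring
  rw [heq]
  calc _ ≤ _ := norm_add_le _ _
    _ < ε / 2 + ε / 2 := add_lt_add (hf' i) hsm
    _ = ε := add_halves ε

/-! ### A totally real dense subfield -/

/-- A real-rooted rational polynomial sufficiently close to the minimal polynomial of a primitive
element `α` has a root `β` in an algebraic closure that is closer to `α` than the other conjugates
of `α`. By Krasner's lemma `ℚ_[p](α) ⊆ ℚ_[p](β)`, with equality for reasons of degree. -/
theorem exists_real_rooted_generator (p : ℕ) [Fact p.Prime]
    (F : Type*) [Field F] [Algebra ℚ_[p] F] [FiniteDimensional ℚ_[p] F] [Algebra ℚ F] :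
    ∃ (b : F) (g : ℚ[X]), g.Monic ∧ aeval b g = 0 ∧ (∀ z : ℂ, aeval z g = 0 → z.im = 0) ∧
      IntermediateField.adjoin ℚ_[p] {b} = ⊤ := by
  obtain ⟨α, hα⟩ := Field.exists_primitive_element ℚ_[p] F
  have hαint : IsIntegral ℚ_[p] α := .of_finite _ _
  let A := AlgebraicClosure ℚ_[p]
  let : NontriviallyNormedField A := spectralNorm.nontriviallyNormedField ℚ_[p] A
  let : NormedAlgebra ℚ_[p] A := spectralNorm.normedAlgebra ℚ_[p] A
  let σ : F →ₐ[ℚ_[p]] A := IsAlgClosed.lift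
  set a := σ α with ha
  set f := minpoly ℚ_[p] α with hf
  have hfa : f = minpoly ℚ_[p] a := (minpoly.algHom_eq σ σ.injective α).symm
  have haint : IsIntegral ℚ_[p] a := hαint.map σ
  have hfm : f.Monic := minpoly.monic hαint
  have hfd : f.natDegree ≠ 0 := (minpoly.natDegree_pos hαint).ne'
  have hfa0 : aeval a f = 0 := by rw [hfa, minpoly.aeval]
  -- The radius `δ` separates `a` from its other conjugates.
  obtain ⟨δ, hδ, hsep⟩ : ∃ δ > 0, ∀ a' : A, IsConjRoot ℚ_[p] a a' → a ≠ a' → δ ≤ ‖a - a'‖ := by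
    have hfin : {x : A | x ∈ f.rootSet A ∧ x ≠ a}.Finite :=
      (f.rootSet_finite A).subset fun _ h => h.1
    have hnear := hfin.isClosed.isOpen_compl.mem_nhds
      (show a ∈ {x : A | x ∈ f.rootSet A ∧ x ≠ a}ᶜ by simp)
    obtain ⟨δ, hδ, hball⟩ := Metric.mem_nhds_iff.mp hnear
    refine ⟨δ, hδ, fun a' hconj hne => ?_⟩
    by_contra! hlt
    have hin : a' ∈ Metric.ball a δ := by rwa [Metric.mem_ball', dist_eq_norm]
    refine hball hin ⟨?_, hne.symm⟩
    rw [hfa]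
    exact (isConjRoot_iff_mem_minpoly_rootSet haint).mp hconj
  -- For this `ε`, the bound in the quantitative continuity of roots becomes exactly `δ`.
  have hε : 0 < (δ / (max ‖a‖ 1)) ^ f.natDegree / (f.natDegree + 1) := by positivity
  obtain ⟨g, hgm, hgd, hgc, hgr⟩ := exists_real_rooted_approx p hfm hε
  obtain ⟨β, hβ, hab⟩ := exists_aroots_norm_sub_lt_of_norm_coeff_sub_lt hε hfa0 hfm
    (hgm.map (algebraMap ℚ ℚ_[p])) (by rw [natDegree_map, hgd]) hgc (IsAlgClosed.splits _)
  have hab : ‖a - β‖ < δ := by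
    rw [← Real.rpow_natCast, ← mul_comm_div, div_self, one_mul,
        ← Real.rpow_mul (div_pos hδ (by positivity)).le, mul_inv_cancel₀] at hab
    · simpa [mul_assoc, div_mul_cancel₀ _ (by positivity : (max ‖a‖ 1) > 0).ne'] using hab
    · simp [hfd]
    · positivity
  rw [mem_aroots] at hβ
  have hβint : IsIntegral ℚ_[p] β := ⟨g.map _, hgm.map _, hβ.2⟩
  have hmem : a ∈ IntermediateField.adjoin ℚ_[p] {β} :=
    IsKrasner.krasner (minpoly.irreducible haint).separable (IsAlgClosed.splits _) hβint
      fun a' h1 h2 => hab.trans_le (hsep a' h1 h2)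
  have hle : IntermediateField.adjoin ℚ_[p] {a} ≤ IntermediateField.adjoin ℚ_[p] {β} :=
    IntermediateField.adjoin_simple_le_iff.mpr hmem
  have : FiniteDimensional ℚ_[p] (IntermediateField.adjoin ℚ_[p] {β}) :=
    IntermediateField.adjoin.finiteDimensional hβint
  have heq : IntermediateField.adjoin ℚ_[p] {a} = IntermediateField.adjoin ℚ_[p] {β} := by
    refine IntermediateField.eq_of_le_of_finrank_le hle ?_
    rw [IntermediateField.adjoin.finrank hβint, IntermediateField.adjoin.finrank haint, ← hfa,
      ← hgd, ← natDegree_map (algebraMap ℚ ℚ_[p])]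
    exact natDegree_le_of_dvd (minpoly.dvd _ _ hβ.2) (hgm.map _).ne_zero
  have hrange : IntermediateField.adjoin ℚ_[p] {a} = σ.fieldRange := by
    rw [ha, ← Set.image_singleton, ← IntermediateField.adjoin_map, hα, AlgHom.fieldRange_eq_map]
  have hβ' : β ∈ σ.fieldRange := by
    rw [← hrange, heq]
    exact IntermediateField.mem_adjoin_simple_self _ _
  obtain ⟨b, rfl⟩ := hβ'
  refine ⟨b, g, hgm, ?_, hgr, ?_⟩
  · apply σ.injective
    rw [map_zero, ← hβ.2, aeval_map_algebraMap]
    exact (aeval_algHom_apply (σ.toRingHom.toRatAlgHom) b g).symm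
  · apply IntermediateField.map_injective σ
    rw [IntermediateField.adjoin_map, Set.image_singleton]
    exact heq.symm.trans (hrange.trans (AlgHom.fieldRange_eq_map σ))

theorem denseRange_of_adjoin_eq_top (p : ℕ) [Fact p.Prime]
    {F : Type*} [NormedField F] [NormedAlgebra ℚ_[p] F] [FiniteDimensional ℚ_[p] F]
    {K : Type*} [Field K] [CharZero K] (ι : K →+* F) (b : K)
    (hb : IntermediateField.adjoin ℚ_[p] {ι b} = ⊤) : DenseRange ι := by
  let S : Subring F := ι.range.topologicalClosure
  have hS : (S : Set F) = closure (Set.range ι) :=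
    congrArg closure (RingHom.coe_range ι)
  have hbase (x : ℚ_[p]) : algebraMap ℚ_[p] F x ∈ S := by
    change _ ∈ (S : Set F)
    rw [hS]
    refine map_mem_closure (f := algebraMap ℚ_[p] F) (continuous_algebraMap ℚ_[p] F)
      (padic_denseRange_rat p x) ?_
    rintro _ ⟨q, rfl⟩
    exact ⟨(q : K), by simp⟩
  have htop : Algebra.adjoin ℚ_[p] {ι b} = ⊤ := by
    rw [← IntermediateField.adjoin_simple_toSubalgebra_of_isAlgebraic
      (Algebra.IsAlgebraic.isAlgebraic _), hb, IntermediateField.top_toSubalgebra]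
  intro x
  rw [← hS]
  have hx : x ∈ Algebra.adjoin ℚ_[p] {ι b} := htop ▸ Algebra.mem_top
  change x ∈ S
  induction hx using Algebra.adjoin_induction with
  | mem y hy =>
    rw [Set.mem_singleton_iff.mp hy]
    exact Subring.le_topologicalClosure _ ⟨b, rfl⟩
  | algebraMap r => exact hbase r
  | add y z _ _ hy hz => exact add_mem hy hz
  | mul y z _ _ hy hz => exact mul_mem hy hz

/-- The field `K = ℚ(b)` is realized as `AdjoinRoot (minpoly ℚ b)` so that it lives in `Type`,
whatever the universe of `F`. -/
theorem exists_totallyReal_dense (p : ℕ) [Fact p.Prime]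
    (F : Type*) [NormedField F] [NormedAlgebra ℚ_[p] F] [FiniteDimensional ℚ_[p] F] :
    ∃ (K : Type) (_ : Field K) (_ : NumberField K) (ι : K →+* F), DenseRange ι ∧
      ∀ (φ : K →+* ℂ) (x : K), (φ x).im = 0 := by
  have : CharZero F := charZero_of_injective_algebraMap (algebraMap ℚ_[p] F).injective
  obtain ⟨b, g, hgm, hgb, hgr, hb⟩ := exists_real_rooted_generator p F
  have hintegral : IsIntegral ℚ b := ⟨g, hgm, hgb⟩
  have : Fact (Irreducible (minpoly ℚ b)) := ⟨minpoly.irreducible hintegral⟩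
  let ι : AdjoinRoot (minpoly ℚ b) →+* F :=
    AdjoinRoot.lift (algebraMap ℚ F) b (minpoly.aeval ℚ b)
  have hιroot : ι (AdjoinRoot.root _) = b := AdjoinRoot.lift_root _
  refine ⟨AdjoinRoot (minpoly ℚ b), inferInstance, inferInstance, ι,
    denseRange_of_adjoin_eq_top p ι (AdjoinRoot.root _) (by rw [hιroot, hb]), fun φ x => ?_⟩
  have hcomp : φ.comp (AdjoinRoot.mk (minpoly ℚ b)) =
      (aeval (φ (AdjoinRoot.root _)) : ℚ[X] →ₐ[ℚ] ℂ).toRingHom :=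
    Polynomial.ringHom_ext' (Subsingleton.elim _ _) (by simp)
  have hφ (q : ℚ[X]) : φ (AdjoinRoot.mk _ q) = aeval (φ (AdjoinRoot.root _)) q :=
    RingHom.congr_fun hcomp q
  have hreal : (φ (AdjoinRoot.root _)).im = 0 := by
    refine hgr _ ?_
    rw [← hφ, AdjoinRoot.mk_eq_zero.mpr (minpoly.dvd _ _ hgb), map_zero]
  obtain ⟨q, rfl⟩ := AdjoinRoot.mk_surjective x
  have hy : φ (AdjoinRoot.root _) = algebraMap ℝ ℂ (φ (AdjoinRoot.root _)).re :=
    Complex.ext rfl hreal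
  rw [hφ, hy, aeval_algebraMap_apply]
  exact Complex.ofReal_im _

/-! ### The place and its completion -/

/-- A nonarchimedean norm with `‖p‖ < 1` restricts along `ι` to a valuation on `K` equivalent to
the `v`-adic one, `v` being the prime of integers of norm `< 1`: the valuation ring of `v` is
contained in that of the norm, and it is a maximal proper subring of `K`. -/
theorem exists_place_isEquiv {F : Type*} [NormedField F] [IsUltrametricDist F]
    {p : ℕ} (hp : p ≠ 0) (hpF : ‖(p : F)‖ < 1)
    {K : Type*} [Field K] [NumberField K] (ι : K →+* F) :
    ∃ v : HeightOneSpectrum (𝓞 K),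
      (v.valuation K).IsEquiv ((NormedField.valuation (K := F)).comap ι) := by
  set w : Valuation K ℝ≥0 := (NormedField.valuation (K := F)).comap ι with hw
  have hintegral (x : 𝓞 K) : w (x : K) ≤ 1 := by
    have h1 : IsIntegral w.valuationSubring (x : K) := x.2.tower_top
    obtain ⟨y, hy⟩ := IsIntegrallyClosed.isIntegral_iff.mp h1
    rw [← hy]
    exact y.2
  let P : Ideal (𝓞 K) :=
    { carrier := {x | w (x : K) < 1}
      zero_mem' := by simp
      add_mem' := fun {a b} ha hb => by
        simpa using lt_of_le_of_lt (w.map_add _ _) (max_lt ha hb)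
      smul_mem' := fun c x hx => by
        simpa using mul_lt_one_of_nonneg_of_lt_one_right (hintegral c) zero_le hx }
  have hPmem (x : 𝓞 K) : x ∈ P ↔ w (x : K) < 1 := Iff.rfl
  have hpw : w (p : K) < 1 := by
    rw [← NNReal.coe_lt_coe]
    simpa [hw] using hpF
  have hPprime : P.IsPrime := by
    refine ⟨fun h => ?_, fun {x y} hxy => ?_⟩
    · have : (1 : 𝓞 K) ∈ P := h ▸ Submodule.mem_top
      simp [hPmem] at this
    · by_contra! hcon
      simp only [hPmem, not_lt] at hcon hxy
      have := one_le_mul hcon.1 hcon.2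
      rw [show ((x * y : 𝓞 K) : K) = x * y from map_mul (algebraMap _ K) x y, map_mul] at hxy
      exact absurd hxy (not_lt.mpr this)
  have hPbot : P ≠ ⊥ := by
    intro h
    have : (p : 𝓞 K) ∈ P := by simpa [hPmem] using hpw
    rw [h, Ideal.mem_bot] at this
    exact hp (by exact_mod_cast this)
  refine ⟨⟨P, hPprime, hPbot⟩, ?_⟩
  rw [Valuation.isEquiv_iff_valuationSubring,
    ← HeightOneSpectrum.valuationSubringAtPrime_eq_valuationSubring]
  refine ValuationSubring.eq_of_le_of_ne_top _ ?_ ?_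
  · rintro x ⟨a, s, hs, rfl⟩
    have hs' : w (s : K) = 1 := le_antisymm (hintegral s) (not_lt.mp hs)
    rw [Valuation.mem_valuationSubring_iff, map_mul, map_inv₀]
    erw [hs']
    simpa using hintegral a
  · intro h
    have : (p : K)⁻¹ ∈ w.valuationSubring := h ▸ trivial
    rw [Valuation.mem_valuationSubring_iff, map_inv₀] at this
    have h0 : w (p : K) ≠ 0 := by simpa using hp
    exact absurd this (not_le.mpr ((one_lt_inv₀ (pos_iff_ne_zero.mpr h0)).mpr hpw))

open MonoidWithZeroHom.ValueGroup₀ in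
/-- The `v`-adic uniformity on `K`, carried by the type synonym `WithVal`, is the one induced
from `F`. -/
theorem isUniformInducing_withVal {F : Type*} [NontriviallyNormedField F] [IsUltrametricDist F]
    {p : ℕ} (hp : p ≠ 0) (hpF : ‖(p : F)‖ < 1)
    {K : Type*} [Field K] [NumberField K] (ι : K →+* F) (v : HeightOneSpectrum (𝓞 K))
    (hv : (v.valuation K).IsEquiv ((NormedField.valuation (K := F)).comap ι)) :
    IsUniformInducing (ι.comp (WithVal.equiv (v.valuation K)).toRingHom) := by
  have hlt (x y : K) : v.valuation K x < v.valuation K y ↔ ‖ι x‖ < ‖ι y‖ := by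
    rw [hv.lt_iff_lt, ← NNReal.coe_lt_coe]
    rfl
  rw [Filter.HasBasis.isUniformInducing_iff (Valued.hasBasis_uniformity _ _)
    Metric.uniformity_basis_dist]
  simp only [Set.mem_ofPred_eq, dist_eq_norm_sub, RingEquiv.toRingHom_eq_coe,
    RingHom.coe_comp, RingHom.coe_coe, Function.comp_apply,
    ← map_sub, true_and, forall_const]
  constructor
  · intro ε hε
    obtain ⟨n, hn⟩ := exists_pow_lt_of_lt_one hε hpF
    use Units.mk0 (Valued.v.restrict ((p : WithVal (v.valuation K)) ^ n)) (by
      simp [Valuation.restrict_def, hp])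
    intro x y h
    rw [Valuation.map_sub_swap, Units.val_mk0, Valuation.restrict_lt_iff] at h
    have := (hlt (WithVal.equiv _ (x - y)) (p ^ n)).mp (by simpa [← WithVal.val_apply_equiv] using h)
    refine this.trans ?_
    simpa using hn
  · intro γ
    obtain ⟨y, hy⟩ := v.valuation_surjective K (embedding γ.val)
    have hy0 : y ≠ 0 := by
      rintro rfl
      simp at hy
      exact (embedding_unit_ne_zero γ) hy.symm
    refine ⟨‖ι y‖, by simpa using hy0, fun a b h => ?_⟩
    rw [Valuation.map_sub_swap, Valuation.restrict_lt_iff_lt_embedding, ← hy]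
    exact (hlt (WithVal.equiv _ (a - b)) y).mpr h

theorem exists_completion_equiv {F : Type*} [NontriviallyNormedField F] [IsUltrametricDist F]
    [CompleteSpace F] {p : ℕ} (hp : p ≠ 0) (hpF : ‖(p : F)‖ < 1)
    {K : Type*} [Field K] [NumberField K] (ι : K →+* F) (hι : DenseRange ι) :
    ∃ (v : HeightOneSpectrum (𝓞 K)) (ψ : v.adicCompletion K ≃+* F),
      ∀ x : K, ψ (algebraMap K (v.adicCompletion K) x) = ι x := by
  obtain ⟨v, hv⟩ := exists_place_isEquiv hp hpF ι
  have hui := isUniformInducing_withVal hp hpF ι v hv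
  set f : WithVal (v.valuation K) →+* F := ι.comp (WithVal.equiv (v.valuation K)).toRingHom with hf
  have hfd : DenseRange f := by
    simpa [hf, DenseRange, Set.range_comp] using hι
  let pkg : AbstractCompletion (WithVal (v.valuation K)) :=
    ⟨F, f, inferInstance, inferInstance, inferInstance, hui, hfd⟩
  let g := UniformSpace.Completion.extensionHom f hui.uniformContinuous.continuous
  have hg : Function.Bijective g :=
    let cpl := UniformSpace.Completion.cPkg (α := WithVal (v.valuation K))
    Function.bijective_iff_has_inverse.mpr ⟨pkg.compare cpl,
      congr_fun (pkg.inverse_compare cpl), congr_fun (cpl.inverse_compare pkg)⟩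
  refine ⟨v, (HeightOneSpectrum.adicCompletion.equiv K v).trans (RingEquiv.ofBijective g hg), ?_⟩
  intro x
  exact UniformSpace.Completion.extensionHom_coe f hui.uniformContinuous.continuous _

/-! ### The quadratic extension -/

theorem exists_eq_add_mul_of_notMem {F E : Type*} [Field F] [Field E] [Algebra F E]
    (hquad : Module.finrank F E = 2) {e : E} (he : e ∉ Set.range (algebraMap F E)) (z : E) :
    ∃ a b : F, z = algebraMap F E a + e * algebraMap F E b := by
  have hli : LinearIndependent F ![(1 : E), e] := by
    rw [LinearIndependent.pair_iff' one_ne_zero]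
    intro a ha
    exact he ⟨a, by rw [← ha, Algebra.smul_def, mul_one]⟩
  have hspan := hli.span_eq_top_of_card_eq_finrank (by simp [hquad])
  have hz : z ∈ Submodule.span F (Set.range ![(1 : E), e]) := hspan ▸ Submodule.mem_top
  rw [Matrix.range_cons, Matrix.range_cons, Matrix.range_empty, Set.union_empty,
    Set.singleton_union, Submodule.mem_span_pair] at hz
  obtain ⟨a, b, h⟩ := hz
  exact ⟨a, b, by rw [← h, Algebra.smul_def, Algebra.smul_def, mul_one, mul_comm e]⟩

theorem exists_sqrt_generator {F E : Type*} [Field F] [CharZero F] [Field E] [Algebra F E]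
    (hquad : Module.finrank F E = 2) :
    ∃ (d : F) (e : E), e ^ 2 = algebraMap F E d ∧ e ∉ Set.range (algebraMap F E) := by
  obtain ⟨z, hz⟩ : ∃ z : E, z ∉ Set.range (algebraMap F E) := by
    by_contra! h
    have h1 : (⊥ : Subalgebra F E) = ⊤ := by
      rw [eq_top_iff]
      intro x _
      exact Algebra.mem_bot.mpr (h x)
    have h2 := Subalgebra.bot_eq_top_iff_finrank_eq_one.mp h1
    omega
  obtain ⟨s, t, hst⟩ := exists_eq_add_mul_of_notMem hquad hz (z ^ 2)
  -- Complete the square in `z ^ 2 = s + t * z`.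
  refine ⟨s + t ^ 2 / 4, z - algebraMap F E (t / 2), ?_, ?_⟩
  · have h2 : algebraMap F E t = 2 * algebraMap F E (t / 2) := by
      rw [← map_ofNat (algebraMap F E) 2, ← map_mul]
      congr 1
      field_simp
    have h4 : algebraMap F E (s + t ^ 2 / 4) =
        algebraMap F E s + algebraMap F E (t / 2) ^ 2 := by
      rw [← map_pow, ← map_add]
      congr 1
      ring
    rw [h4, sub_sq, hst, h2]
    ring
  · rintro ⟨a, ha⟩
    exact hz ⟨a + t / 2, by rw [map_add, ha, sub_add_cancel]⟩

/-- The map `y ↦ d * y ^ 2` is open at `y = 1`, its derivative `2 * d` there being nonzero. -/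
theorem mul_sq_mem_nhds {F : Type*} [NontriviallyNormedField F] [CompleteSpace F] [CharZero F]
    {d : F} (hd : d ≠ 0) : {x : F | ∃ y, y ≠ 0 ∧ x = d * y ^ 2} ∈ 𝓝 d := by
  have h1 : HasStrictDerivAt (fun y : F => d * y ^ 2) (d * (2 * 1)) 1 := by
    simpa using (hasStrictDerivAt_pow 2 (1 : F)).const_mul d
  have h2 := h1.map_nhds_eq (by simp [hd])
  simp only [one_pow, mul_one] at h2
  rw [← h2, mem_map]
  filter_upwards [isOpen_ne.mem_nhds (one_ne_zero (α := F))] with y hy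
  exact ⟨y, hy, rfl⟩

/-- Subtracting a high power of `p` from `c ∈ K` moves `ι c` little in `F` but makes the real part
of every complex embedding negative. -/
theorem exists_totally_negative_sqrt {F : Type*} [NontriviallyNormedField F] [CompleteSpace F]
    [CharZero F] {E : Type*} [Field E] [Algebra F E] (hquad : Module.finrank F E = 2)
    {p : ℕ} (hp : 1 < p) (hpF : ‖(p : F)‖ < 1)
    {K : Type*} [Field K] [NumberField K] (ι : K →+* F) (hι : DenseRange ι) :
    ∃ (d : K) (e : E), (∀ φ : K →+* ℂ, (φ d).re < 0) ∧ e ^ 2 = algebraMap F E (ι d) ∧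
      e ∉ Set.range (algebraMap F E) := by
  obtain ⟨d₀, e₀, he₀, hne₀⟩ := exists_sqrt_generator (F := F) (E := E) hquad
  have hd₀ : d₀ ≠ 0 := by
    rintro rfl
    rw [map_zero] at he₀
    exact hne₀ ⟨0, by rw [map_zero, pow_eq_zero_iff two_ne_zero |>.mp he₀]⟩
  obtain ⟨U, hUS, hUo, hUd⟩ := mem_nhds_iff.mp (mul_sq_mem_nhds hd₀)
  obtain ⟨c, hc⟩ := hι.exists_mem_open hUo ⟨d₀, hUd⟩
  have hF : ∀ᶠ N : ℕ in atTop, ι (c - (p : K) ^ N) ∈ U := by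
    have h1 : Tendsto (fun N : ℕ => ι c - (p : F) ^ N) atTop (𝓝 (ι c - 0)) :=
      tendsto_const_nhds.sub (tendsto_pow_atTop_nhds_zero_of_norm_lt_one hpF)
    rw [sub_zero] at h1
    filter_upwards [h1.eventually_mem (hUo.mem_nhds hc)] with N hN
    simpa using hN
  have hR : ∀ᶠ N : ℕ in atTop, ∀ φ : K →+* ℂ, (φ (c - (p : K) ^ N)).re < 0 := by
    rw [eventually_all]
    intro φ
    have h1 : Tendsto (fun N : ℕ => (p : ℝ) ^ N) atTop atTop :=
      tendsto_pow_atTop_atTop_of_one_lt (by exact_mod_cast hp)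
    filter_upwards [h1.eventually_gt_atTop (φ c).re] with N hN
    have : (φ (c - (p : K) ^ N)) = φ c - (((p : ℝ) ^ N : ℝ) : ℂ) := by simp
    rw [this, Complex.sub_re, Complex.ofReal_re]
    linarith
  obtain ⟨N, hN1, hN2⟩ := (hF.and hR).exists
  obtain ⟨y, hy0, hy⟩ := hUS hN1
  refine ⟨c - (p : K) ^ N, e₀ * algebraMap F E y, hN2, ?_, ?_⟩
  · rw [mul_pow, he₀, hy, map_mul, map_pow]
  · rintro ⟨a, ha⟩
    refine hne₀ ⟨a / y, ?_⟩
    have : algebraMap F E y ≠ 0 := by simpa using hy0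
    rw [map_div₀, ha]
    field_simp

/-! ### Base change of the quadratic extension -/

theorem exists_tmul_decomp {K L A : Type*} [Field K] [Field L] [Algebra K L] [CommRing A]
    [Algebra K A] {r : L} (hr : ∀ l : L, ∃ a b : K, l = algebraMap K L a + r * algebraMap K L b)
    (z : L ⊗[K] A) : ∃ a b : A, z = (1 : L) ⊗ₜ[K] a + r ⊗ₜ[K] b := by
  induction z using TensorProduct.induction_on with
  | zero => exact ⟨0, 0, by simp⟩
  | tmul l y =>
    obtain ⟨a, b, rfl⟩ := hr l
    refine ⟨a • y, b • y, ?_⟩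
    rw [← TensorProduct.smul_tmul, ← TensorProduct.smul_tmul, ← TensorProduct.add_tmul,
      Algebra.smul_def, Algebra.smul_def, mul_one, mul_comm r]
  | add z₁ z₂ h₁ h₂ =>
    obtain ⟨a₁, b₁, rfl⟩ := h₁
    obtain ⟨a₂, b₂, rfl⟩ := h₂
    refine ⟨a₁ + a₂, b₁ + b₂, ?_⟩
    rw [TensorProduct.tmul_add, TensorProduct.tmul_add]
    abel

/-- If a compatible embedding `j` sends some `r : L` outside `F`, then `1, r` is a `K`-basis of `L`
and `1, j r` an `F`-basis of `E`, so `l ⊗ y ↦ j l * ψ y` is bijective. -/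
theorem exists_tensor_equiv {K L A F E : Type*} [Field K] [Field L] [Algebra K L] [Field A]
    [Algebra K A] [Field F] [Field E] [Algebra F E] (hKL : Module.finrank K L = 2)
    (hFE : Module.finrank F E = 2) (ψ : A ≃+* F) (j : L →+* E)
    (hcomm : ∀ x : K, j (algebraMap K L x) = algebraMap F E (ψ (algebraMap K A x)))
    {r : L} (hr : j r ∉ Set.range (algebraMap F E)) :
    ∃ Φ : (L ⊗[K] A) ≃+* E, ∀ y : A, Φ ((1 : L) ⊗ₜ y) = algebraMap F E (ψ y) := by
  let m : A →+* E := (algebraMap F E).comp ψ.toRingHom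
  let : Algebra K E := (j.comp (algebraMap K L)).toAlgebra
  let jA : L →ₐ[K] E := { j with commutes' := fun x => rfl }
  let mA : A →ₐ[K] E := { m with commutes' := fun x => (hcomm x).symm }
  let Φ : L ⊗[K] A →ₐ[K] E := Algebra.TensorProduct.lift jA mA fun _ _ => .all _ _
  have hΦ (l : L) (y : A) : Φ (l ⊗ₜ y) = j l * algebraMap F E (ψ y) :=
    Algebra.TensorProduct.lift_tmul _ _ _ l y
  have hrK : r ∉ Set.range (algebraMap K L) := by
    rintro ⟨x, rfl⟩
    exact hr ⟨_, (hcomm x).symm⟩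
  have hdec := exists_tmul_decomp (A := A) (exists_eq_add_mul_of_notMem hKL hrK)
  have hbij : Function.Bijective Φ := by
    constructor
    · rw [injective_iff_map_eq_zero]
      intro z hz
      obtain ⟨a, b, rfl⟩ := hdec z
      rw [map_add, hΦ, hΦ, map_one, one_mul] at hz
      have hb : b = 0 := by
        by_contra hb
        have hb' : algebraMap F E (ψ b) ≠ 0 := by simpa using hb
        refine hr ⟨-(ψ a) / ψ b, ?_⟩
        rw [map_div₀, map_neg, div_eq_iff hb']
        linear_combination -hz
      subst hb
      have ha : a = 0 := by simpa using hz
      subst ha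
      simp
    · intro w
      obtain ⟨a, b, rfl⟩ := exists_eq_add_mul_of_notMem hFE hr w
      exact ⟨(1 : L) ⊗ₜ ψ.symm a + r ⊗ₜ ψ.symm b, by rw [map_add, hΦ, hΦ]; simp⟩
  exact ⟨RingEquiv.ofBijective Φ hbij, fun y => by
    rw [RingEquiv.ofBijective_apply, hΦ, map_one, one_mul]⟩

/-- Let `p` be a prime, `F` a field that is a finite extension of
`ℚ_p`, and `E` a quadratic field extension of `F`.  Then there exist number
fields `K ⊆ L` with `[L : K] = 2` such that `K` is totally real and `L` is
totally imaginary, together with a finite place `v` of `K`, a field isomorphism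
`ψ : K_v ≃ F`, and an `F`-algebra isomorphism `L ⊗_K K_v ≅ E` restricting to
`ψ` on `K_v`; in particular `L ⊗_K K_v` is a field, so `v` does not split in
`L`. -/
theorem stmt_13 (p : ℕ) [Fact p.Prime]
    (F : Type*) [Field F] [Algebra ℚ_[p] F] [FiniteDimensional ℚ_[p] F]
    (E : Type*) [Field E] [Algebra F E] (hquad : Module.finrank F E = 2) :
    Nonempty (PadicGlobalizationData F E) := by
  let : NontriviallyNormedField F := spectralNorm.nontriviallyNormedField ℚ_[p] F
  let : NormedAlgebra ℚ_[p] F := spectralNorm.normedAlgebra ℚ_[p] F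
  have : IsUltrametricDist F := IsUltrametricDist.of_normedAlgebra ℚ_[p]
  have : CompleteSpace F := FiniteDimensional.complete ℚ_[p] F
  have : CharZero F := charZero_of_injective_algebraMap (algebraMap ℚ_[p] F).injective
  have hp : p.Prime := Fact.out
  have hpF : ‖(p : F)‖ < 1 := by
    rw [← map_natCast (algebraMap ℚ_[p] F), norm_algebraMap']
    exact Padic.norm_p_lt_one
  obtain ⟨K, _, _, ι, hι, hreal⟩ := exists_totallyReal_dense p F
  obtain ⟨v, ψ, hψ⟩ := exists_completion_equiv hp.ne_zero hpF ι hι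
  obtain ⟨d, e, hneg, he, hne⟩ :=
    exists_totally_negative_sqrt (E := E) hquad hp.one_lt hpF ι hι
  have hirr : Irreducible (X ^ 2 - C d : K[X]) := by
    refine X_pow_sub_C_irreducible_of_prime Nat.prime_two fun y hy => ?_
    have : e ^ 2 = (algebraMap F E (ι y)) ^ 2 := by rw [he, ← hy, map_pow, map_pow]
    rcases sq_eq_sq_iff_eq_or_eq_neg.mp this with h | h
    · exact hne ⟨_, h.symm⟩
    · exact hne ⟨-ι y, by rw [map_neg, h]⟩
  have : Fact (Irreducible (X ^ 2 - C d : K[X])) := ⟨hirr⟩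
  have hdeg : (X ^ 2 - C d : K[X]).natDegree = 2 := natDegree_X_pow_sub_C
  let pb := AdjoinRoot.powerBasis hirr.ne_zero
  have hfin : FiniteDimensional K (AdjoinRoot (X ^ 2 - C d)) := pb.finite
  have hrank : Module.finrank K (AdjoinRoot (X ^ 2 - C d)) = 2 := by
    rw [pb.finrank, AdjoinRoot.powerBasis_dim, hdeg]
  have : CharZero (AdjoinRoot (X ^ 2 - C d)) :=
    charZero_of_injective_algebraMap (algebraMap K (AdjoinRoot (X ^ 2 - C d))).injective
  have : FiniteDimensional ℚ (AdjoinRoot (X ^ 2 - C d)) :=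
    Module.Finite.trans K _
  have : NumberField (AdjoinRoot (X ^ 2 - C d)) := NumberField.mk
  have hroot : AdjoinRoot.root (X ^ 2 - C d) ^ 2 = algebraMap K _ d := by
    have := AdjoinRoot.eval₂_root (X ^ 2 - C d)
    rw [eval₂_sub, eval₂_pow, eval₂_X, eval₂_C, sub_eq_zero] at this
    exact this
  let j : AdjoinRoot (X ^ 2 - C d) →+* E :=
    AdjoinRoot.lift ((algebraMap F E).comp ι) e (by simp [he])
  obtain ⟨Φ, hΦ⟩ := exists_tensor_equiv (A := v.adicCompletion K) hrank hquad ψ j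
    (fun x => by
      rw [hψ]
      exact AdjoinRoot.lift_of _)
    (r := AdjoinRoot.root (X ^ 2 - C d)) (by
      rw [AdjoinRoot.lift_root]
      exact hne)
  exact ⟨{
    K := K
    L := AdjoinRoot (X ^ 2 - C d)
    rank2 := hrank
    totallyReal := hreal
    totallyImaginary := fun φ => by
      refine ⟨AdjoinRoot.root (X ^ 2 - C d), fun him => ?_⟩
      have h1 := hneg (φ.comp (algebraMap K _))
      rw [RingHom.comp_apply, ← hroot, map_pow, sq, Complex.mul_re, him] at h1
      nlinarith [mul_self_nonneg (φ (AdjoinRoot.root (X ^ 2 - C d))).re]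
    v := v
    ψ := ψ
    Φ := Φ
    compat := hΦ
    isField := Φ.toMulEquiv.isField (Field.toIsField E) }⟩
end
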